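/- arXiv:2506.02988 — 8 statements merged into one kernel-verified Lean document; each statement's English description precedes it below -/
import Mathlib

section
/- Let w > 0 and δ = w/(w+1), let p and q be coprime integers with q ≥ 1, and let j be an integer with 1 ≤ j ≤ ⌈δq⌉ − 1. Then there is a unique b ∈ (0,1) satisfying (1−b)^j (1+wb)^{q−j} = 1, and for this b there exists ω ∈ ℝ such that the q-th iterate of the lift f_{b,ω,φ_w}(x) = x + ω + b·φ_w(x) equals the translation R_p : x ↦ x + p. In particular, for each such j the p/q-Arnol'd tongue of the family pinches to a single point at coupling value b. -/
/-- The 1-periodic piecewise linear forcing with `φ_w(0) = 0`, slope `-1` on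
`[0, δ]` and slope `w` on `[δ, 1]`, where `δ = w/(w+1)`. -/
noncomputable def phiW (w : ℝ) (x : ℝ) : ℝ :=
  if Int.fract x ≤ w / (w + 1) then -(Int.fract x)
  else -(w / (w + 1)) + w * (Int.fract x - w / (w + 1))

/-!
For a rotation number `θ` and `m : ℕ`, put `c = fract (m θ)`. The sawtooth sum
`S t = ∑_{k = 1}^m fract (t - k θ)` satisfies `S (t + θ) - S t = fract t - fract (t - c)`, which
takes just two values on `[0, 1)`, with a jump at `c`. Hence translation by `θ` multiplies a
density `exp (K * S)` by one constant on `[0, c)` and by another on `[c, 1)`, so its normalized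
primitive `h` conjugates the rotation by `θ` to a circle map with two slopes. When
`c log (1 - b) + (1 - c) log (1 + w b) = 0`, a suitable `K` makes these slopes `1 - b` and
`1 + w b`; the break `h c` is then forced to be `w / (w + 1)`, because the images of the two
intervals have total length `1`. So the conjugate is a lift of the family, with `ω = h θ`. For
`θ = p / q` and `m p ≡ j` modulo `q` one gets `c = j / q`, and the `q`-th iterate is the conjugate
by `h` of the translation by `p`, with which `h` commutes.
-/

open Function Set Filter Topology MeasureTheory

theorem mul_log_one_add_lt_log_one_add_mul {s t : ℝ} (hs : -1 < s) (hs0 : s ≠ 0) (ht0 : 0 < t)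
    (ht1 : t < 1) : t * Real.log (1 + s) < Real.log (1 + t * s) := by
  have hpos : 0 < 1 + s := by linarith
  rw [← Real.log_rpow hpos]
  exact Real.log_lt_log (Real.rpow_pos_of_pos hpos t)
    (rpow_one_add_lt_one_add_mul_self hs.le hs0 ht0 ht1)

theorem pow_mul_pow_eq_one_iff_log {x y : ℝ} (hx : 0 < x) (hy : 0 < y) (j m : ℕ) :
    x ^ j * y ^ m = 1 ↔ j * Real.log x + m * Real.log y = 0 := by
  rw [← Real.log_pow, ← Real.log_pow, ← Real.log_mul (by positivity) (by positivity)]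
  exact ⟨fun h => by rw [h, Real.log_one], Real.eq_one_of_pos_of_log_eq_zero (by positivity)⟩

theorem mul_log_add_mul_log_pos_of_lt {u v w b c : ℝ} (hu : 0 < u) (hv : 0 ≤ v) (hw : 0 < w)
    (hb : 0 < b) (hbc : b < c) (hc : c < 1)
    (hnonneg : 0 ≤ u * Real.log (1 - c) + v * Real.log (1 + w * c)) :
    0 < u * Real.log (1 - b) + v * Real.log (1 + w * b) := by
  have hc0 : 0 < c := hb.trans hbc
  have ht0 : 0 < b / c := div_pos hb hc0
  have ht1 : b / c < 1 := (div_lt_one hc0).2 hbc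
  have hleft : b / c * Real.log (1 - c) < Real.log (1 - b) := by
    have := mul_log_one_add_lt_log_one_add_mul (s := -c) (by linarith) (by linarith) ht0 ht1
    rwa [mul_neg, div_mul_cancel₀ b hc0.ne', ← sub_eq_add_neg, ← sub_eq_add_neg] at this
  have hright : b / c * Real.log (1 + w * c) < Real.log (1 + w * b) := by
    have hwc : 0 < w * c := mul_pos hw hc0
    have := mul_log_one_add_lt_log_one_add_mul (by linarith) hwc.ne' ht0 ht1
    rwa [mul_left_comm, div_mul_cancel₀ b hc0.ne'] at this
  calc
    0 ≤ b / c * (u * Real.log (1 - c) + v * Real.log (1 + w * c)) := mul_nonneg ht0.le hnonneg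
    _ = u * (b / c * Real.log (1 - c)) + v * (b / c * Real.log (1 + w * c)) := by ring
    _ < u * Real.log (1 - b) + v * Real.log (1 + w * b) :=
      add_lt_add_of_lt_of_le (by gcongr) (by gcongr)

theorem eventually_one_lt_pow_mul_pow {w : ℝ} {j m : ℕ} (h : (j : ℝ) < m * w) :
    ∀ᶠ b in 𝓝[>] (0 : ℝ), 1 < (1 - b) ^ j * (1 + w * b) ^ m := by
  have hderiv : HasDerivAt (fun b : ℝ => (1 - b) ^ j * (1 + w * b) ^ m - 1) (m * w - j) 0 := by
    have hleft := ((hasDerivAt_id (0 : ℝ)).const_sub 1).fun_pow j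
    have hright := (((hasDerivAt_id (0 : ℝ)).const_mul w).const_add 1).fun_pow m
    refine ((hleft.fun_mul hright).sub_const 1).congr_deriv ?_
    simp only [id, sub_zero, mul_zero, add_zero, one_pow]
    ring
  have hsign := eventually_nhdsWithin_sign_eq_of_deriv_pos
    (hderiv.deriv ▸ sub_pos.2 h) (by simp)
  filter_upwards [nhdsWithin_le_nhds hsign, self_mem_nhdsWithin] with b hb hb0
  rw [sub_zero, sign_pos (mem_Ioi.1 hb0), sign_eq_one_iff] at hb
  linarith

theorem existsUnique_pow_mul_pow_eq_one {w : ℝ} {j m : ℕ} (hw : 0 < w) (hj : j ≠ 0)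
    (h : (j : ℝ) < m * w) :
    ∃! b : ℝ, b ∈ Ioo (0 : ℝ) 1 ∧ (1 - b) ^ j * (1 + w * b) ^ m = 1 := by
  obtain ⟨b₀, hgt, hb₀⟩ :=
    ((eventually_one_lt_pow_mul_pow h).and (Ioo_mem_nhdsGT zero_lt_one)).exists
  have hcont : ContinuousOn (fun b : ℝ => (1 - b) ^ j * (1 + w * b) ^ m) (Icc b₀ 1) := by
    fun_prop
  obtain ⟨b, hb, hroot⟩ := intermediate_value_Ioo' hb₀.2.le hcont
    (show (1 : ℝ) ∈ Ioo _ _ from ⟨by simp [hj], hgt⟩)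
  have log_eq_zero {x : ℝ} (hx : x ∈ Ioo (0 : ℝ) 1) (hx1 : (1 - x) ^ j * (1 + w * x) ^ m = 1) :
      j * Real.log (1 - x) + m * Real.log (1 + w * x) = 0 :=
    (pow_mul_pow_eq_one_iff_log (sub_pos.2 hx.2)
      (add_pos one_pos (mul_pos hw hx.1)) j m).1 hx1
  have not_lt_of_root {x y : ℝ} (hx : x ∈ Ioo (0 : ℝ) 1) (hx1 : (1 - x) ^ j * (1 + w * x) ^ m = 1)
      (hy : y ∈ Ioo (0 : ℝ) 1) (hy1 : (1 - y) ^ j * (1 + w * y) ^ m = 1) : ¬ x < y := fun hxy =>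
    (mul_log_add_mul_log_pos_of_lt (by positivity) (by positivity) hw hx.1 hxy hy.2
      (log_eq_zero hy hy1).ge).ne' (log_eq_zero hx hx1)
  have hb01 : b ∈ Ioo (0 : ℝ) 1 := ⟨hb₀.1.trans hb.1, hb.2⟩
  exact ⟨b, ⟨hb01, hroot⟩, fun c ⟨hc, hcroot⟩ =>
    le_antisymm (le_of_not_gt (not_lt_of_root hb01 hroot hc hcroot))
      (le_of_not_gt (not_lt_of_root hc hcroot hb01 hroot))⟩

theorem phiW_add_intCast (w x : ℝ) (n : ℤ) : phiW w (x + n) = phiW w x := by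
  simp only [phiW, Int.fract_add_intCast]

theorem phiW_of_le_break {w y : ℝ} (hw : 0 < w) (hy0 : 0 ≤ y) (hy : y ≤ w / (w + 1)) :
    phiW w y = -y := by
  have hbreak : w / (w + 1) < 1 := (div_lt_one (by linarith)).2 (by linarith)
  have hfract : Int.fract y = y := Int.fract_eq_self.2 ⟨hy0, hy.trans_lt hbreak⟩
  rw [phiW, hfract, if_pos hy]

theorem phiW_of_break_le {w y : ℝ} (hw : 0 < w) (hy : w / (w + 1) ≤ y) (hy1 : y ≤ 1) :
    phiW w y = w * (y - 1) := by
  have hbreak : w / (w + 1) * (w + 1) = w := div_mul_cancel₀ w (by linarith)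
  rcases hy.eq_or_lt with rfl | hlt
  · rw [phiW_of_le_break hw (by positivity) le_rfl]
    linear_combination -hbreak
  rcases hy1.eq_or_lt with rfl | hlt1
  · have hpos : 0 ≤ w / (w + 1) := by positivity
    simp [phiW, hpos]
  · have hfract : Int.fract y = y :=
      Int.fract_eq_self.2 ⟨(by positivity : 0 ≤ w / (w + 1)).trans hy, hlt1⟩
    rw [phiW, hfract, if_neg hlt.not_ge]
    linear_combination -hbreak

/-- The primitive of `ρ` vanishing at `0`, divided by the integral of `ρ` over `[0, 1]`. For a
positive `1`-periodic density `ρ` it is the lift of a circle homeomorphism. -/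
noncomputable def normalizedPrimitive (ρ : ℝ → ℝ) (t : ℝ) : ℝ :=
  (∫ s in 0..t, ρ s) / ∫ s in 0..1, ρ s

namespace normalizedPrimitive

variable {ρ : ℝ → ℝ}

theorem map_zero (ρ : ℝ → ℝ) : normalizedPrimitive ρ 0 = 0 := by
  simp [normalizedPrimitive]

theorem sub_eq_integral_div (hint : ∀ s t, IntervalIntegrable ρ volume s t) (u v : ℝ) :
    normalizedPrimitive ρ v - normalizedPrimitive ρ u =
      (∫ s in u..v, ρ s) / ∫ s in 0..1, ρ s := by
  rw [normalizedPrimitive, normalizedPrimitive, ← sub_div,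
    intervalIntegral.integral_interval_sub_left (hint 0 v) (hint 0 u)]

theorem monotone (hint : ∀ s t, IntervalIntegrable ρ volume s t) (hpos : ∀ t, 0 < ρ t) :
    Monotone (normalizedPrimitive ρ) := fun u v huv => by
  rw [← sub_nonneg, sub_eq_integral_div hint]
  exact div_nonneg (intervalIntegral.integral_nonneg huv fun s _ => (hpos s).le)
    (intervalIntegral.integral_nonneg zero_le_one fun s _ => (hpos s).le)

theorem map_add_intCast (hint : ∀ s t, IntervalIntegrable ρ volume s t) (hpos : ∀ t, 0 < ρ t)
    (hper : Periodic ρ 1) (t : ℝ) (n : ℤ) :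
    normalizedPrimitive ρ (t + n) = normalizedPrimitive ρ t + n := by
  have htotal : 0 < ∫ s in 0..1, ρ s :=
    intervalIntegral.intervalIntegral_pos_of_pos (hint 0 1) hpos zero_lt_one
  have hperiods : ∫ s in t..t + n, ρ s = n * ∫ s in 0..1, ρ s := by
    simpa [hper.intervalIntegral_add_eq t 0] using hper.intervalIntegral_add_zsmul_eq n t hint
  rw [← sub_eq_iff_eq_add', sub_eq_integral_div hint, hperiods, mul_div_cancel_right₀ _ htotal.ne']

theorem surjective (hint : ∀ s t, IntervalIntegrable ρ volume s t) (hpos : ∀ t, 0 < ρ t)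
    (hper : Periodic ρ 1) : Surjective (normalizedPrimitive ρ) := by
  have htotal : 0 < ∫ s in 0..1, ρ s :=
    intervalIntegral.intervalIntegral_pos_of_pos (hint 0 1) hpos zero_lt_one
  exact ((intervalIntegral.continuous_primitive hint 0).div_const _).surjective
    ((hper.tendsto_atTop_intervalIntegral_of_pos htotal zero_lt_one).atTop_div_const htotal)
    ((hper.tendsto_atBot_intervalIntegral_of_pos htotal zero_lt_one).atBot_div_const htotal)

theorem map_add_sub_map_add {θ r u v : ℝ} (hint : ∀ s t, IntervalIntegrable ρ volume s t)
    (huv : u ≤ v) (hratio : ∀ s ∈ Ico u v, ρ (s + θ) = r * ρ s) :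
    normalizedPrimitive ρ (v + θ) - normalizedPrimitive ρ (u + θ) =
      r * (normalizedPrimitive ρ v - normalizedPrimitive ρ u) := by
  have hscale : ∫ s in u + θ..v + θ, ρ s = r * ∫ s in u..v, ρ s := by
    rw [← intervalIntegral.integral_comp_add_right, ← intervalIntegral.integral_const_mul,
      intervalIntegral.integral_of_le huv, intervalIntegral.integral_of_le huv,
      ← integral_Ico_eq_integral_Ioc, ← integral_Ico_eq_integral_Ioc]
    exact setIntegral_congr_fun measurableSet_Ico hratio
  rw [sub_eq_integral_div hint, sub_eq_integral_div hint, hscale, mul_div_assoc]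

section TwoSlopes

variable {b c w θ : ℝ}

theorem map_break (hint : ∀ s t, IntervalIntegrable ρ volume s t) (hpos : ∀ t, 0 < ρ t)
    (hper : Periodic ρ 1) (hw : 0 < w) (hb : b ≠ 0) (hc : c ∈ Icc (0 : ℝ) 1)
    (hleft : ∀ s ∈ Ico 0 c, ρ (s + θ) = (1 - b) * ρ s)
    (hright : ∀ s ∈ Ico c 1, ρ (s + θ) = (1 + w * b) * ρ s) :
    normalizedPrimitive ρ c = w / (w + 1) := by
  have hinitial := map_add_sub_map_add hint hc.1 hleft
  have hfinal := map_add_sub_map_add hint hc.2 hright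
  have hone := map_add_intCast hint hpos hper 0 1
  have hone_add := map_add_intCast hint hpos hper θ 1
  simp only [Int.cast_one, zero_add, map_zero] at hone hone_add hinitial
  rw [add_comm 1 θ, hone_add, hone] at hfinal
  rw [eq_div_iff (by linarith)]
  exact mul_left_cancel₀ hb (by linear_combination hinitial + hfinal)

theorem semiconj_phiW (hint : ∀ s t, IntervalIntegrable ρ volume s t) (hpos : ∀ t, 0 < ρ t)
    (hper : Periodic ρ 1) (hw : 0 < w) (hb : b ≠ 0) (hc : c ∈ Icc (0 : ℝ) 1)
    (hleft : ∀ s ∈ Ico 0 c, ρ (s + θ) = (1 - b) * ρ s)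
    (hright : ∀ s ∈ Ico c 1, ρ (s + θ) = (1 + w * b) * ρ s) :
    Semiconj (normalizedPrimitive ρ) (· + θ)
      (fun x => x + normalizedPrimitive ρ θ + b * phiW w x) := by
  have hmono := monotone hint hpos
  have hadd := map_add_intCast hint hpos hper
  have hbreak := map_break hint hpos hper hw hb hc hleft hright
  have on_unit_interval (t : ℝ) (ht0 : 0 ≤ t) (ht1 : t ≤ 1) : normalizedPrimitive ρ (t + θ) =
      normalizedPrimitive ρ t + normalizedPrimitive ρ θ + b * phiW w (normalizedPrimitive ρ t) := by
    have initial (u : ℝ) (hu : 0 ≤ u) (huc : u ≤ c) : normalizedPrimitive ρ (u + θ) =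
        normalizedPrimitive ρ θ + (1 - b) * normalizedPrimitive ρ u := by
      have := map_add_sub_map_add hint hu fun s hs => hleft s ⟨hs.1, hs.2.trans_le huc⟩
      rw [zero_add, map_zero] at this
      linear_combination this
    rcases le_total t c with htc | hct
    · rw [initial t ht0 htc, phiW_of_le_break hw (map_zero ρ ▸ hmono ht0) (hbreak ▸ hmono htc)]
      ring
    · have hone : normalizedPrimitive ρ 1 = 1 := by simpa [map_zero] using hadd 0 1
      have final := map_add_sub_map_add hint hct fun s hs => hright s ⟨hs.1, hs.2.trans_le ht1⟩
      rw [phiW_of_break_le hw (hbreak ▸ hmono hct) (hone ▸ hmono ht1)]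
      have hbreak' : normalizedPrimitive ρ c * (w + 1) = w := by
        rw [hbreak, div_mul_cancel₀ w (by linarith)]
      linear_combination final + initial c hc.1 le_rfl - b * hbreak'
  intro t
  have key := on_unit_interval (Int.fract t) (Int.fract_nonneg t) (Int.fract_lt_one t).le
  have hshift : t + θ = Int.fract t + θ + ⌊t⌋ := by linear_combination -Int.fract_add_floor t
  have hmap : normalizedPrimitive ρ t = normalizedPrimitive ρ (Int.fract t) + ⌊t⌋ := by
    rw [← hadd, Int.fract_add_floor]
  simp only [hshift, hadd, hmap, phiW_add_intCast, key]
  ring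

end TwoSlopes

end normalizedPrimitive

/-- The sum of sawtooth functions `∑_{k = 1}^m fract (t - k θ)`, used as the logarithm of a density
on the circle `ℝ / ℤ`. The index of summation is shifted, so that it runs over `range m`. -/
noncomputable def sawtoothSum (θ : ℝ) (m : ℕ) (t : ℝ) : ℝ :=
  ∑ k ∈ Finset.range m, Int.fract (t - (k + 1) * θ)

namespace sawtoothSum

variable (θ : ℝ) (m : ℕ)

theorem periodic : Periodic (sawtoothSum θ m) 1 := fun t => by
  simp only [sawtoothSum, add_sub_right_comm, Int.fract_add_one]

theorem measurable : Measurable (sawtoothSum θ m) :=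
  Finset.measurable_fun_sum _ fun _ _ => (measurable_id.sub_const _).fract

theorem abs_le (t : ℝ) : |sawtoothSum θ m t| ≤ m := by
  calc
    |sawtoothSum θ m t| ≤ ∑ k ∈ Finset.range m, |Int.fract (t - (k + 1) * θ)| :=
      Finset.abs_sum_le_sum_abs _ _
    _ ≤ ∑ _k ∈ Finset.range m, 1 := Finset.sum_le_sum fun k _ => by
      rw [Int.abs_fract]
      exact (Int.fract_lt_one _).le
    _ = m := by simp

theorem map_add (t : ℝ) :
    sawtoothSum θ m (t + θ) = sawtoothSum θ m t + (Int.fract t - Int.fract (t - m * θ)) := by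
  have htelescope := Finset.sum_range_sub' (fun k : ℕ => Int.fract (t - k * θ)) m
  simp only [Nat.cast_zero, zero_mul, sub_zero, Finset.sum_sub_distrib, Nat.cast_add,
    Nat.cast_one] at htelescope
  have hreindex (k : ℕ) : t + θ - (k + 1) * θ = t - k * θ := by ring
  simp only [sawtoothSum, hreindex]
  linear_combination htelescope

theorem intervalIntegrable_exp_mul (K u v : ℝ) :
    IntervalIntegrable (fun t => Real.exp (K * sawtoothSum θ m t)) volume u v := by
  rw [intervalIntegrable_iff]
  refine Measure.integrableOn_of_bounded (M := Real.exp (|K| * m)) measure_Ioc_lt_top.ne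
    ((measurable θ m).const_mul K).exp.aestronglyMeasurable (ae_of_all _ fun t => ?_)
  rw [Real.norm_eq_abs, Real.abs_exp, Real.exp_le_exp]
  calc
    K * sawtoothSum θ m t ≤ |K| * |sawtoothSum θ m t| := (le_abs_self _).trans (abs_mul _ _).le
    _ ≤ |K| * m := by gcongr; exact abs_le θ m t

theorem map_add_of_lt_fract {t : ℝ} (ht0 : 0 ≤ t) (ht : t < Int.fract (m * θ)) :
    sawtoothSum θ m (t + θ) = sawtoothSum θ m t + (Int.fract (m * θ) - 1) := by
  have hfract_lt := Int.fract_lt_one (m * θ)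
  have hfract : Int.fract t = t := Int.fract_eq_self.2 ⟨ht0, ht.trans hfract_lt⟩
  have hfract_sub : Int.fract (t - m * θ) = t - Int.fract (m * θ) + 1 :=
    Int.fract_eq_iff.2 ⟨by linarith, by linarith, -⌊m * θ⌋ - 1, by
      push_cast
      linear_combination Int.fract_add_floor (m * θ)⟩
  rw [map_add, hfract, hfract_sub]
  ring

theorem map_add_of_fract_le {t : ℝ} (ht : Int.fract (m * θ) ≤ t) (ht1 : t < 1) :
    sawtoothSum θ m (t + θ) = sawtoothSum θ m t + Int.fract (m * θ) := by
  have hfract_nonneg := Int.fract_nonneg (m * θ)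
  have hfract : Int.fract t = t := Int.fract_eq_self.2 ⟨hfract_nonneg.trans ht, ht1⟩
  have hfract_sub : Int.fract (t - m * θ) = t - Int.fract (m * θ) :=
    Int.fract_eq_iff.2 ⟨by linarith, by linarith, -⌊m * θ⌋, by
      push_cast
      linear_combination Int.fract_add_floor (m * θ)⟩
  rw [map_add, hfract, hfract_sub]
  ring

end sawtoothSum

theorem exists_surjective_semiconj_phiW {w b : ℝ} (hw : 0 < w) (hb : b ∈ Ioo (0 : ℝ) 1) (θ : ℝ)
    (m : ℕ) (hlog : Int.fract (m * θ) * Real.log (1 - b) +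
      (1 - Int.fract (m * θ)) * Real.log (1 + w * b) = 0) :
    ∃ (ω : ℝ) (h : ℝ → ℝ), Surjective h ∧ (∀ (t : ℝ) (n : ℤ), h (t + n) = h t + n) ∧
      Semiconj h (· + θ) (fun x => x + ω + b * phiW w x) := by
  set c := Int.fract (m * θ)
  set K := Real.log (1 + w * b) - Real.log (1 - b)
  set ρ : ℝ → ℝ := fun t => Real.exp (K * sawtoothSum θ m t)
  have hslope_left : Real.exp (K * (c - 1)) = 1 - b := by
    rw [← Real.exp_log (sub_pos.2 hb.2)]
    congr 1
    linear_combination -hlog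
  have hslope_right : Real.exp (K * c) = 1 + w * b := by
    rw [← Real.exp_log (add_pos one_pos (mul_pos hw hb.1))]
    congr 1
    linear_combination -hlog
  have hint : ∀ s t, IntervalIntegrable ρ volume s t :=
    sawtoothSum.intervalIntegrable_exp_mul θ m K
  have hpos (t : ℝ) : 0 < ρ t := Real.exp_pos _
  have hper : Periodic ρ 1 := (sawtoothSum.periodic θ m).comp fun y => Real.exp (K * y)
  have hleft : ∀ s ∈ Ico 0 c, ρ (s + θ) = (1 - b) * ρ s := fun s hs => by
    simp only [ρ]
    rw [sawtoothSum.map_add_of_lt_fract θ m hs.1 hs.2, mul_add, Real.exp_add, hslope_left, mul_comm]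
  have hright : ∀ s ∈ Ico c 1, ρ (s + θ) = (1 + w * b) * ρ s := fun s hs => by
    simp only [ρ]
    rw [sawtoothSum.map_add_of_fract_le θ m hs.1 hs.2, mul_add, Real.exp_add, hslope_right,
      mul_comm]
  exact ⟨normalizedPrimitive ρ θ, normalizedPrimitive ρ,
    normalizedPrimitive.surjective hint hpos hper,
    normalizedPrimitive.map_add_intCast hint hpos hper,
    normalizedPrimitive.semiconj_phiW hint hpos hper hw hb.1.ne'
      ⟨Int.fract_nonneg _, (Int.fract_lt_one _).le⟩ hleft hright⟩

theorem iterate_eq_add_intCast_of_semiconj {f h : ℝ → ℝ} {θ : ℝ} {p : ℤ} {q : ℕ}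
    (hsurj : Surjective h) (hadd : ∀ (t : ℝ) (n : ℤ), h (t + n) = h t + n)
    (hsemi : Semiconj h (· + θ) f) (hθ : q * θ = p) : f^[q] = fun x => x + (p : ℝ) := by
  funext x
  obtain ⟨t, rfl⟩ := hsurj x
  rw [← hsemi.iterate_right q t, add_right_iterate, nsmul_eq_mul, hθ, hadd]

theorem exists_nat_fract_mul_div_eq {p : ℤ} {q j : ℕ} (hpq : IsCoprime p (q : ℤ)) (hj : j < q) :
    ∃ m : ℕ, Int.fract (m * ((p : ℝ) / q)) = j / q := by
  have : NeZero q := ⟨by omega⟩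
  have hunit : IsUnit (p : ZMod q) := (ZMod.coe_int_isUnit_iff_isCoprime p q).2 hpq.symm
  obtain ⟨a, ha⟩ := hunit.dvd (a := (j : ZMod q))
  have hmod : (a.val * p : ℤ) % q = j := by
    have hcast : ((a.val * p : ℤ) : ZMod q) = (j : ℤ) := by
      push_cast
      rw [ZMod.natCast_zmod_val, ha, mul_comm]
    rw [(ZMod.intCast_eq_intCast_iff' _ _ _).1 hcast]
    exact Int.emod_eq_of_lt (by omega) (by omega)
  refine ⟨a.val, ?_⟩
  have hfract := Int.fract_div_intCast_eq_div_intCast_mod (k := ℝ) (m := a.val * p) (n := q)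
  rw [hmod] at hfract
  push_cast at hfract
  rw [← mul_div_assoc, hfract]

theorem exists_iterate_phiW_eq_add_intCast {w b : ℝ} (hw : 0 < w) (hb : b ∈ Ioo (0 : ℝ) 1)
    {p : ℤ} {q j : ℕ} (hpq : IsCoprime p (q : ℤ)) (hj : j < q)
    (hroot : (1 - b) ^ j * (1 + w * b) ^ (q - j) = 1) :
    ∃ ω : ℝ, (fun x => x + ω + b * phiW w x)^[q] = fun x => x + (p : ℝ) := by
  have hq : (q : ℝ) ≠ 0 := Nat.cast_ne_zero.2 (by omega)
  obtain ⟨m, hm⟩ := exists_nat_fract_mul_div_eq hpq hj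
  have hlog := (pow_mul_pow_eq_one_iff_log (sub_pos.2 hb.2)
    (add_pos one_pos (mul_pos hw hb.1)) j (q - j)).1 hroot
  rw [Nat.cast_sub hj.le] at hlog
  obtain ⟨ω, h, hsurj, hadd, hsemi⟩ := exists_surjective_semiconj_phiW hw hb (p / q) m (by
    rw [hm, ← mul_right_inj' hq, mul_zero, ← hlog]
    field_simp)
  exact ⟨ω, iterate_eq_add_intCast_of_semiconj hsurj hadd hsemi (mul_div_cancel₀ _ hq)⟩

/-- For `w > 0`, coprime `p, q` with `q ≥ 1` and `1 ≤ j ≤ ⌈δq⌉ - 1` there is a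
unique `b ∈ (0,1)` with `(1-b)^j (1+wb)^{q-j} = 1`, and for this `b` there is
`ω` such that the `q`-th iterate of the lift `x ↦ x + ω + b φ_w(x)` is the
translation by `p`: the `p/q`-tongue pinches at coupling `b`. -/
theorem stmt0 (w : ℝ) (hw : 0 < w) (p : ℤ) (q j : ℕ) (hq : 1 ≤ q)
    (hpq : Int.gcd p q = 1) (hj1 : 1 ≤ j)
    (hj2 : (j : ℤ) ≤ ⌈(w / (w + 1)) * q⌉ - 1) :
    (∃! b : ℝ, b ∈ Set.Ioo (0 : ℝ) 1 ∧ (1 - b) ^ j * (1 + w * b) ^ (q - j) = 1) ∧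
    ∀ b ∈ Set.Ioo (0 : ℝ) 1, (1 - b) ^ j * (1 + w * b) ^ (q - j) = 1 →
      ∃ ω : ℝ, (fun x => x + ω + b * phiW w x)^[q] = fun x => x + (p : ℝ) := by
  have hlt : (j : ℝ) < w / (w + 1) * q := by
    exact_mod_cast Int.lt_ceil.1 (show (j : ℤ) < ⌈w / (w + 1) * q⌉ by omega)
  rw [div_mul_eq_mul_div, lt_div_iff₀ (by linarith)] at hlt
  have hjq : j < q := by
    by_contra! hle
    have : (q : ℝ) * w ≤ j * w := by gcongr
    have : (0 : ℝ) ≤ j := by positivity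
    linarith
  have hcoprime : IsCoprime p (q : ℤ) := Int.isCoprime_iff_gcd_eq_one.2 hpq
  have hslope : (j : ℝ) < (q - j : ℕ) * w := by
    rw [Nat.cast_sub hjq.le]
    linarith
  exact ⟨existsUnique_pow_mul_pow_eq_one hw (by omega) hslope,
    fun b hb hroot => exists_iterate_phiW_eq_add_intCast hw hb hcoprime hjq hroot⟩
end

section
/- Let w > 0 and δ = w/(w+1), let p and q be coprime integers with q ≥ 1, let j be an integer with 1 ≤ j ≤ ⌈δq⌉ − 1, and let b ∈ (0,1) satisfy (1−b)^j (1+wb)^{q−j} = 1. If ω ∈ ℝ is such that the map f(x) = x + ω + b·φ_w(x) satisfies f^[q](δ) = δ + p (i.e., the break point x_d = δ lies on a p/q-periodic orbit), then f^[q](x) = x + p for every x ∈ ℝ. -/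
/-!
Let `f` be the lift, `A = 1 - b` and `B = 1 + wb` its two slopes, and `O` the set of all integer
translates of the orbit of `δ`. The only points where the slope of `f` increases are the translates
of `δ`, which lie in `O`. As `f` permutes the gaps of `O`, the iterate `f^[q]` is concave on the
closure of each gap, and it moves both ends of the gap by `p`; hence `f^[q] x ≥ x + p`, with
equality throughout the gap as soon as the right slope of `f^[q]` at the left end is at most `1`,
or the left slope at the right end is at least `1`.

At every point of `O` the right slope of `f^[q]` is `A^k B^(q-k)` and the left slope is
`A^m B^(q-m)`, where `k` and `m` count the visits of the orbit of `δ` to `[0, δ)` and to `(0, δ]`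
modulo `1`. Coprimality of `p` and `q` makes this orbit visit `δ` only once per period, so
`m ≤ k + 1`. Since `A^i B^(q-i)` is nonincreasing in `i` and equals `1` at `i = j`, either `j ≤ k`
and the right slope is at most `1`, or `m ≤ j` and the left slope is at least `1`.
-/

open Set

section Concave

variable {g : ℝ → ℝ} {a b c r x : ℝ}

lemma add_const_le_of_concaveOn_Icc (hg : ConcaveOn ℝ (Icc a b) g) (ha : g a = a + c)
    (hb : g b = b + c) (hx : x ∈ Icc a b) : x + c ≤ g x := by
  have hab : a ≤ b := hx.1.trans hx.2
  have hmin := (hg.sub (convexOn_id hg.1)).min_le_of_mem_Icc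
    (left_mem_Icc.2 hab) (right_mem_Icc.2 hab) hx
  simp only [Pi.sub_apply, id, ha, hb, add_sub_cancel_left, min_self] at hmin
  linarith

lemma eq_add_const_of_concaveOn_Icc_of_right_deriv_le_one (hg : ConcaveOn ℝ (Icc a b) g)
    (ha : g a = a + c) (hb : g b = b + c) (hr : HasDerivWithinAt g r (Ioi a) a) (hr1 : r ≤ 1)
    (hx : x ∈ Icc a b) : g x = x + c := by
  refine le_antisymm ?_ (add_const_le_of_concaveOn_Icc hg ha hb hx)
  obtain rfl | hax := hx.1.eq_or_lt
  · exact ha.le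
  have hslope : slope g a x ≤ 1 := (hg.slope_le_of_hasDerivWithinAt_Ioi
    (left_mem_Icc.2 (hx.1.trans hx.2)) hx hax hr).trans hr1
  rw [slope_def_field, div_le_one (sub_pos.2 hax)] at hslope
  linarith

lemma eq_add_const_of_concaveOn_Icc_of_one_le_left_deriv (hg : ConcaveOn ℝ (Icc a b) g)
    (ha : g a = a + c) (hb : g b = b + c) (hr : HasDerivWithinAt g r (Iio b) b) (hr1 : 1 ≤ r)
    (hx : x ∈ Icc a b) : g x = x + c := by
  refine le_antisymm ?_ (add_const_le_of_concaveOn_Icc hg ha hb hx)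
  obtain rfl | hxb := hx.2.eq_or_lt
  · exact hb.le
  have hslope : 1 ≤ slope g x b := hr1.trans (hg.le_slope_of_hasDerivWithinAt_Iio
    hx (right_mem_Icc.2 (hx.1.trans hx.2)) hxb hr)
  rw [slope_def_field, one_le_div (sub_pos.2 hxb)] at hslope
  linarith

lemma concaveOn_iterate_of_disjoint {f : ℝ → ℝ} {S : Set ℝ} (hf : StrictMono f)
    (hS : S ⊆ f '' S) (hconc : ∀ a b, Disjoint (Ioo a b) S → ConcaveOn ℝ (Icc a b) f) (n : ℕ) :
    ∀ a b, Disjoint (Ioo a b) S → ConcaveOn ℝ (Icc a b) f^[n] := by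
  induction n with
  | zero => exact fun a b _ => concaveOn_id (convex_Icc a b)
  | succ n ih =>
    intro a b hab
    have himage : Disjoint (Ioo (f a) (f b)) S := by
      refine Set.disjoint_left.2 fun z hz hzS => ?_
      obtain ⟨u, hu, rfl⟩ := hS hzS
      exact Set.disjoint_left.1 hab ⟨hf.lt_iff_lt.1 hz.1, hf.lt_iff_lt.1 hz.2⟩ hu
    have hmaps : MapsTo f (Icc a b) (Icc (f a) (f b)) := hf.monotone.mapsTo_Icc
    have hfab := hconc a b hab
    refine ⟨convex_Icc a b, fun x hx y hy s t hs ht hst => ?_⟩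
    exact ((ih _ _ himage).2 (hmaps hx) (hmaps hy) hs ht hst).trans
      ((hf.monotone.iterate n) (hfab.2 hx hy hs ht hst))

end Concave

lemma exists_gap_of_isClosed {S : Set ℝ} (hS : IsClosed S) {x : ℝ} (hl : (S ∩ Iic x).Nonempty)
    (hr : (S ∩ Ici x).Nonempty) :
    ∃ a ∈ S, ∃ b ∈ S, x ∈ Icc a b ∧ Disjoint (Ioo a b) S := by
  have hbddl : BddAbove (S ∩ Iic x) := bddAbove_Iic.mono inter_subset_right
  have hbddr : BddBelow (S ∩ Ici x) := bddBelow_Ici.mono inter_subset_right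
  have hleft := (hS.inter isClosed_Iic).csSup_mem hl hbddl
  have hright := (hS.inter isClosed_Ici).csInf_mem hr hbddr
  refine ⟨_, hleft.1, _, hright.1, ⟨hleft.2, hright.2⟩, Set.disjoint_left.2 fun z hz hzS => ?_⟩
  obtain hzx | hxz := le_total z x
  · exact (le_csSup hbddl ⟨hzS, hzx⟩).not_gt hz.1
  · exact (csInf_le hbddr ⟨hzS, hxz⟩).not_gt hz.2

/-- The set of all integer translates of the forward orbit of `x₀` under `F`, that is, the preimage
in `ℝ` of the orbit of `x₀` under the circle map with lift `F`. -/
def liftedOrbit (F : CircleDeg1Lift) (x₀ : ℝ) : Set ℝ :=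
  {y | ∃ (i : ℕ) (n : ℤ), (F ^ i) x₀ + n = y}

open Classical in
/-- The number of `i < n` for which `F^i x`, reduced modulo `1` to `[0, 1)`, lies in `S`. -/
noncomputable def visitCount (F : CircleDeg1Lift) (S : Set ℝ) (n : ℕ) (x : ℝ) : ℕ :=
  Nat.count (fun i => Int.fract ((F ^ i) x) ∈ S) n

section PeriodicOrbit

variable {F : CircleDeg1Lift} {x₀ y : ℝ} {q : ℕ} {p : ℤ} {S T : Set ℝ}

lemma add_intCast_mem_liftedOrbit (F : CircleDeg1Lift) (x₀ : ℝ) (n : ℤ) :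
    x₀ + n ∈ liftedOrbit F x₀ := ⟨0, n, rfl⟩

lemma pow_add_apply_of_pow_apply_eq (hper : (F ^ q) x₀ = x₀ + p) (i : ℕ) :
    (F ^ (i + q)) x₀ = (F ^ i) x₀ + p := by
  rw [pow_add, CircleDeg1Lift.mul_apply, hper, CircleDeg1Lift.map_add_int]

lemma pow_apply_of_mem_liftedOrbit (hper : (F ^ q) x₀ = x₀ + p) (hy : y ∈ liftedOrbit F x₀) :
    (F ^ q) y = y + p := by
  obtain ⟨i, n, rfl⟩ := hy
  rw [CircleDeg1Lift.map_add_int, ← CircleDeg1Lift.mul_apply, ← pow_add, add_comm q,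
    pow_add_apply_of_pow_apply_eq hper, add_right_comm]

lemma liftedOrbit_subset_image (hq : 1 ≤ q) (hper : (F ^ q) x₀ = x₀ + p) :
    liftedOrbit F x₀ ⊆ F '' liftedOrbit F x₀ := by
  rintro _ ⟨i, n, rfl⟩
  refine ⟨_, ⟨i + (q - 1), n - p, rfl⟩, ?_⟩
  rw [CircleDeg1Lift.map_add_int, ← CircleDeg1Lift.mul_apply, ← pow_succ', add_assoc,
    Nat.sub_add_cancel hq, pow_add_apply_of_pow_apply_eq hper]
  push_cast
  ring

lemma pow_add_mul_apply_of_pow_apply_eq (hper : (F ^ q) x₀ = x₀ + p) (i m : ℕ) :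
    (F ^ (i + q * m)) x₀ = (F ^ i) x₀ + (m * p : ℤ) := by
  induction m with
  | zero => simp
  | succ m ih =>
    rw [Nat.mul_succ, ← add_assoc, pow_add_apply_of_pow_apply_eq hper, ih]
    push_cast
    ring

lemma isClosed_liftedOrbit (hq : 1 ≤ q) (hper : (F ^ q) x₀ = x₀ + p) :
    IsClosed (liftedOrbit F x₀) := by
  have hunion : liftedOrbit F x₀ =
      ⋃ i ∈ Finset.range q, range fun n : ℤ => (F ^ i) x₀ + n := by
    ext y
    simp only [liftedOrbit, mem_ofPred_eq, mem_iUnion, mem_range, Finset.mem_range, exists_prop]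
    refine ⟨?_, fun ⟨i, _, n, hn⟩ => ⟨i, n, hn⟩⟩
    rintro ⟨i, n, rfl⟩
    refine ⟨i % q, Nat.mod_lt i hq, (i / q : ℕ) * p + n, ?_⟩
    rw [← Nat.mod_add_div i q, pow_add_mul_apply_of_pow_apply_eq hper, Nat.mod_add_div]
    push_cast
    ring
  rw [hunion]
  refine isClosed_biUnion_finset fun i _ => ?_
  exact ((Homeomorph.addLeft _).isClosedEmbedding.comp
    Int.isClosedEmbedding_coe_real).isClosed_range

lemma exists_gap_liftedOrbit (hq : 1 ≤ q) (hper : (F ^ q) x₀ = x₀ + p) (x : ℝ) :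
    ∃ a ∈ liftedOrbit F x₀, ∃ b ∈ liftedOrbit F x₀,
      x ∈ Icc a b ∧ Disjoint (Ioo a b) (liftedOrbit F x₀) := by
  refine exists_gap_of_isClosed (isClosed_liftedOrbit hq hper)
    ⟨_, add_intCast_mem_liftedOrbit F x₀ ⌊x - x₀⌋, ?_⟩
    ⟨_, add_intCast_mem_liftedOrbit F x₀ ⌈x - x₀⌉, ?_⟩
  · simpa only [mem_Iic, ← le_sub_iff_add_le'] using Int.floor_le (x - x₀)
  · simpa only [mem_Ici, ← sub_le_iff_le_add'] using Int.le_ceil (x - x₀)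

lemma exists_Icc_subset_of_disjoint_liftedOrbit {a b : ℝ}
    (h : Disjoint (Ioo a b) (liftedOrbit F x₀)) :
    ∃ n : ℤ, Icc a b ⊆ Icc (x₀ - 1 + n) (x₀ + n) := by
  set n := ⌊a - x₀⌋ + 1 with hn
  have hna : x₀ - 1 + n ≤ a := by
    rw [hn]; push_cast; linarith [Int.floor_le (a - x₀)]
  have han : a < x₀ + n := by
    rw [hn]; push_cast; linarith [Int.lt_floor_add_one (a - x₀)]
  refine ⟨n, Icc_subset_Icc hna (not_lt.1 fun hnb => ?_)⟩
  exact Set.disjoint_left.1 h ⟨han, hnb⟩ (add_intCast_mem_liftedOrbit F x₀ n)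

theorem pow_apply_eq_add_of_concaveOn (hF : StrictMono F)
    (hconc : ∀ n : ℤ, ConcaveOn ℝ (Icc (x₀ - 1 + n) (x₀ + n)) F) (hq : 1 ≤ q)
    (hper : (F ^ q) x₀ = x₀ + p)
    (hslope : (∀ y ∈ liftedOrbit F x₀, ∃ r ≤ 1, HasDerivWithinAt (F ^ q) r (Ioi y) y) ∨
      ∀ y ∈ liftedOrbit F x₀, ∃ r ≥ 1, HasDerivWithinAt (F ^ q) r (Iio y) y) (x : ℝ) :
    (F ^ q) x = x + p := by
  obtain ⟨a, ha, b, hb, hx, hab⟩ := exists_gap_liftedOrbit hq hper x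
  have hconc_gap : ConcaveOn ℝ (Icc a b) (F ^ q) := by
    rw [CircleDeg1Lift.coe_pow]
    refine concaveOn_iterate_of_disjoint hF (liftedOrbit_subset_image hq hper)
      (fun u v huv => ?_) q a b hab
    obtain ⟨n, hn⟩ := exists_Icc_subset_of_disjoint_liftedOrbit huv
    exact (hconc n).subset hn (convex_Icc u v)
  have hFa := pow_apply_of_mem_liftedOrbit hper ha
  have hFb := pow_apply_of_mem_liftedOrbit hper hb
  obtain hright | hleft := hslope
  · obtain ⟨r, hr1, hr⟩ := hright a ha
    exact eq_add_const_of_concaveOn_Icc_of_right_deriv_le_one hconc_gap hFa hFb hr hr1 hx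
  · obtain ⟨r, hr1, hr⟩ := hleft b hb
    exact eq_add_const_of_concaveOn_Icc_of_one_le_left_deriv hconc_gap hFa hFb hr hr1 hx

lemma eq_zero_of_pow_apply_eq_add_int (hpq : Int.gcd p q = 1) (hper : (F ^ q) x₀ = x₀ + p)
    {i : ℕ} (hi : i < q) {n : ℤ} (hn : (F ^ i) x₀ = x₀ + n) : i = 0 := by
  by_contra hi0
  have hi_pos : 0 < i := Nat.pos_of_ne_zero hi0
  have hq_pos : 0 < q := hi_pos.trans hi
  have hrot : (n : ℝ) / i = p / q :=
    (F.translationNumber_of_map_pow_eq_add_int hn hi_pos).symm.trans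
      (F.translationNumber_of_map_pow_eq_add_int hper hq_pos)
  rw [div_eq_div_iff (by positivity) (by positivity)] at hrot
  have hdvd : (q : ℤ) ∣ p * i := ⟨n, by rw [mul_comm (q : ℤ)]; exact_mod_cast hrot.symm⟩
  have hqi : (q : ℤ) ∣ i := Int.dvd_of_dvd_mul_right_of_gcd_one hdvd (Int.gcd_comm p q ▸ hpq)
  exact hi.not_ge (Nat.le_of_dvd hi_pos (Int.natCast_dvd_natCast.1 hqi))

lemma visitCount_le (F : CircleDeg1Lift) (S : Set ℝ) (n : ℕ) (x : ℝ) : visitCount F S n x ≤ n := by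
  classical exact Nat.count_le _

lemma visitCount_succ_of_mem {x : ℝ} (hx : Int.fract x ∈ S) (n : ℕ) :
    visitCount F S (n + 1) x = visitCount F S n (F x) + 1 := by
  classical
  simp [visitCount, Nat.count_succ', hx, pow_succ]

lemma visitCount_succ_of_notMem {x : ℝ} (hx : Int.fract x ∉ S) (n : ℕ) :
    visitCount F S (n + 1) x = visitCount F S n (F x) := by
  classical
  simp [visitCount, Nat.count_succ', hx, pow_succ]

lemma visitCount_eq_of_mem_liftedOrbit (hper : (F ^ q) x₀ = x₀ + p)
    (hy : y ∈ liftedOrbit F x₀) : visitCount F S q y = visitCount F S q x₀ := by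
  classical
  obtain ⟨k, n, rfl⟩ := hy
  set P : ℕ → Prop := fun i => Int.fract ((F ^ i) x₀) ∈ S with hP
  have hperiodic : ∀ i, P (i + q) ↔ P i := fun i => by
    simp only [hP, pow_add_apply_of_pow_apply_eq hper, Int.fract_add_intCast]
  have hcount : Nat.count (fun i => P (i + k)) q + Nat.count P k =
      Nat.count P k + Nat.count P q := by
    rw [← Nat.count_add' P q k, add_comm q k, Nat.count_add' P k q]
    simp only [hperiodic]
  simp only [visitCount, CircleDeg1Lift.map_add_int, Int.fract_add_intCast,
    ← CircleDeg1Lift.mul_apply, ← pow_add]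
  exact Nat.add_right_cancel (hcount.trans (add_comm _ _))

lemma visitCount_le_visitCount_add_one {n : ℕ} {x c : ℝ} (hST : S ⊆ insert c T)
    (hc : ∀ i < n, Int.fract ((F ^ i) x) = c → i = 0) :
    visitCount F S n x ≤ visitCount F T n x + 1 := by
  classical
  simp only [visitCount, Nat.count_eq_card_filter_range]
  refine (Finset.card_le_card fun i hi => ?_).trans (Finset.card_insert_le 0 _)
  obtain ⟨hin, hiS⟩ := Finset.mem_filter.1 hi
  rw [Finset.mem_insert, Finset.mem_filter]
  exact (hST hiS).imp (hc i (Finset.mem_range.1 hin)) fun hiT => ⟨hin, hiT⟩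

lemma hasDerivWithinAt_pow_visitCount {U : ℝ → Set ℝ} {A B : ℝ}
    (hU : ∀ x, MapsTo F (U x) (U (F x)))
    (hA : ∀ x, Int.fract x ∈ S → HasDerivWithinAt F A (U x) x)
    (hB : ∀ x, Int.fract x ∉ S → HasDerivWithinAt F B (U x) x) (n : ℕ) (x : ℝ) :
    HasDerivWithinAt (F ^ n) (A ^ visitCount F S n x * B ^ (n - visitCount F S n x)) (U x) x := by
  induction n generalizing x with
  | zero => simpa [visitCount] using hasDerivWithinAt_id x (U x)
  | succ n ih =>
    rw [pow_succ, CircleDeg1Lift.coe_mul]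
    by_cases hx : Int.fract x ∈ S
    · refine ((ih (F x)).comp x (hA x hx) (hU x)).congr_deriv ?_
      rw [visitCount_succ_of_mem hx, Nat.add_sub_add_right]
      ring
    · refine ((ih (F x)).comp x (hB x hx) (hU x)).congr_deriv ?_
      rw [visitCount_succ_of_notMem hx, Nat.succ_sub (visitCount_le F S n (F x)), pow_succ B]
      ring

end PeriodicOrbit

lemma pow_mul_pow_sub_antitoneOn {A B : ℝ} (hA : 0 ≤ A) (hAB : A ≤ B) (q : ℕ) :
    AntitoneOn (fun k => A ^ k * B ^ (q - k)) (Iic q) := by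
  intro j _ k hk hjk
  have hsplit : q - j = (k - j) + (q - k) := by have := mem_Iic.1 hk; lia
  calc A ^ k * B ^ (q - k) = A ^ j * (A ^ (k - j) * B ^ (q - k)) := by
        rw [← mul_assoc, ← pow_add, Nat.add_sub_cancel' hjk]
    _ ≤ A ^ j * (B ^ (k - j) * B ^ (q - k)) := by
        have hB : 0 ≤ B := hA.trans hAB
        gcongr
    _ = A ^ j * B ^ (q - j) := by rw [← pow_add, ← hsplit]

section PhiW

variable {w b ω x : ℝ}

lemma div_add_one_mem_Ioo (hw : 0 < w) : w / (w + 1) ∈ Ioo (0 : ℝ) 1 :=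
  ⟨by positivity, (div_lt_one (by positivity)).2 (lt_add_one w)⟩

lemma phiW_add_one (w x : ℝ) : phiW w (x + 1) = phiW w x := by
  simp only [phiW, Int.fract_add_one]

lemma phiW_of_mem_Icc_falling (hw : 0 < w) {n : ℤ} (hx : x ∈ Icc (n : ℝ) (w / (w + 1) + n)) :
    phiW w x = n - x := by
  have hδ1 := (div_add_one_mem_Ioo hw).2
  have hfract : Int.fract x = x - n :=
    Int.fract_eq_iff.2 ⟨by linarith [hx.1], by linarith [hx.2], n, by ring⟩
  rw [phiW, hfract, if_pos (by linarith [hx.2])]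
  ring

lemma phiW_of_mem_Icc_rising (hw : 0 < w) {n : ℤ} (hx : x ∈ Icc (w / (w + 1) - 1 + n) (n : ℝ)) :
    phiW w x = w * (x - n) := by
  have hδ0 := (div_add_one_mem_Ioo hw).1
  have hδ : w * (w / (w + 1)) = w - w / (w + 1) := by field_simp; ring
  obtain rfl | hxn := hx.2.eq_or_lt
  · simpa using phiW_of_mem_Icc_falling hw (left_mem_Icc.2 (by linarith : (n : ℝ) ≤ _))
  have hfract : Int.fract x = x - n + 1 :=
    Int.fract_eq_iff.2 ⟨by linarith [hx.1], by linarith, n - 1, by push_cast; ring⟩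
  rw [phiW, hfract]
  split_ifs with h
  · have hx_eq : x = w / (w + 1) - 1 + n := le_antisymm (by linarith) hx.1
    rw [hx_eq]
    linear_combination -hδ
  · linear_combination -hδ

lemma phiW_of_mem_Icc (hw : 0 < w) {n : ℤ} (hx : x ∈ Icc (w / (w + 1) - 1 + n) (w / (w + 1) + n)) :
    phiW w x = min (w * (x - n)) (n - x) := by
  obtain hxn | hnx := le_total x n
  · rw [phiW_of_mem_Icc_rising hw ⟨hx.1, hxn⟩, min_eq_left]
    nlinarith
  · rw [phiW_of_mem_Icc_falling hw ⟨hnx, hx.2⟩, min_eq_right]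
    nlinarith

lemma concaveOn_phiW (hw : 0 < w) (n : ℤ) :
    ConcaveOn ℝ (Icc (w / (w + 1) - 1 + n) (w / (w + 1) + n)) (phiW w) := by
  have hconv := convex_Icc (𝕜 := ℝ) (w / (w + 1) - 1 + n) (w / (w + 1) + n)
  refine ConcaveOn.congr ?_ fun x hx => (phiW_of_mem_Icc hw hx).symm
  exact (((concaveOn_id hconv).sub (convexOn_const _ hconv)).smul hw.le).inf
    ((concaveOn_const _ hconv).sub (convexOn_id hconv))

lemma strictMono_add_mul_phiW (hw : 0 < w) (hA : 0 < 1 - b) (hB : 0 < 1 + w * b) :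
    StrictMono fun x => x + ω + b * phiW w x := by
  obtain ⟨hδ0, hδ1⟩ := div_add_one_mem_Ioo hw
  let f : AddConstMap ℝ ℝ 1 1 :=
    ⟨fun x => x + ω + b * phiW w x, fun x => by simp only [phiW_add_one]; ring⟩
  have hrising : StrictMonoOn f (Icc (w / (w + 1) - 1) 0) := by
    intro x hx y hy hxy
    simp only [f, AddConstMap.coe_mk]
    rw [phiW_of_mem_Icc_rising (n := 0) hw (by simpa using hx),
      phiW_of_mem_Icc_rising (n := 0) hw (by simpa using hy)]
    nlinarith
  have hfalling : StrictMonoOn f (Icc 0 (w / (w + 1))) := by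
    intro x hx y hy hxy
    simp only [f, AddConstMap.coe_mk]
    rw [phiW_of_mem_Icc_falling (n := 0) hw (by simpa using hx),
      phiW_of_mem_Icc_falling (n := 0) hw (by simpa using hy)]
    nlinarith
  refine (AddConstMapClass.strictMono_iff_Icc (f := f) one_pos (w / (w + 1) - 1)).2 ?_
  rw [sub_add_cancel, ← Icc_union_Icc_eq_Icc (sub_nonpos.2 hδ1.le) hδ0.le]
  exact hrising.union hfalling (isGreatest_Icc (sub_nonpos.2 hδ1.le)) (isLeast_Icc hδ0.le)

/-- The lift `x ↦ x + ω + b φ_w(x)` as a bundled monotone degree one lift, for the parameters `b`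
at which both slopes `1 - b` and `1 + wb` are positive. -/
noncomputable def phiLift (w b ω : ℝ) (hw : 0 < w) (hA : 0 < 1 - b) (hB : 0 < 1 + w * b) :
    CircleDeg1Lift where
  toFun x := x + ω + b * phiW w x
  monotone' := (strictMono_add_mul_phiW hw hA hB).monotone
  map_add_one' x := by rw [phiW_add_one]; ring

variable {hw : 0 < w} {hA : 0 < 1 - b} {hB : 0 < 1 + w * b}

lemma coe_phiLift : ⇑(phiLift w b ω hw hA hB) = fun x => x + ω + b * phiW w x := rfl

lemma strictMono_phiLift : StrictMono (phiLift w b ω hw hA hB) :=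
  strictMono_add_mul_phiW hw hA hB

lemma concaveOn_phiLift (hb : 0 ≤ b) (n : ℤ) :
    ConcaveOn ℝ (Icc (w / (w + 1) - 1 + n) (w / (w + 1) + n)) (phiLift w b ω hw hA hB) :=
  ((concaveOn_id (convex_Icc _ _)).add_const ω).add ((concaveOn_phiW hw n).smul hb)

lemma hasDerivWithinAt_phiLift_falling {n : ℤ} (hx : x ∈ Icc (n : ℝ) (w / (w + 1) + n)) :
    HasDerivWithinAt (phiLift w b ω hw hA hB) (1 - b) (Icc (n : ℝ) (w / (w + 1) + n)) x := by
  have haffine : HasDerivAt (fun y : ℝ => y + ω + b * (n - y)) (1 - b) x :=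
    (((hasDerivAt_id x).add_const ω).add
      (((hasDerivAt_id x).const_sub (n : ℝ)).const_mul b)).congr_deriv (by ring)
  refine haffine.hasDerivWithinAt.congr_of_mem (fun y hy => ?_) hx
  simp only [coe_phiLift, phiW_of_mem_Icc_falling hw hy]

lemma hasDerivWithinAt_phiLift_rising {n : ℤ} (hx : x ∈ Icc (w / (w + 1) - 1 + n) (n : ℝ)) :
    HasDerivWithinAt (phiLift w b ω hw hA hB) (1 + w * b)
      (Icc (w / (w + 1) - 1 + n) (n : ℝ)) x := by
  have haffine : HasDerivAt (fun y : ℝ => y + ω + b * (w * (y - n))) (1 + w * b) x :=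
    (((hasDerivAt_id x).add_const ω).add
      ((((hasDerivAt_id x).sub_const (n : ℝ)).const_mul w).const_mul b)).congr_deriv (by ring)
  refine haffine.hasDerivWithinAt.congr_of_mem (fun y hy => ?_) hx
  simp only [coe_phiLift, phiW_of_mem_Icc_rising hw hy]

lemma hasDerivWithinAt_pow_phiLift_Ioi (n : ℕ) (x : ℝ) :
    HasDerivWithinAt (phiLift w b ω hw hA hB ^ n)
      ((1 - b) ^ visitCount (phiLift w b ω hw hA hB) (Ico 0 (w / (w + 1))) n x *
        (1 + w * b) ^ (n - visitCount (phiLift w b ω hw hA hB) (Ico 0 (w / (w + 1))) n x))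
      (Ioi x) x := by
  refine hasDerivWithinAt_pow_visitCount (U := Ioi) (fun x y hxy => strictMono_phiLift hxy)
    (fun x hx => ?_) (fun x hx => ?_) n x
  · have hpiece : x ∈ Ico (⌊x⌋ : ℝ) (w / (w + 1) + ⌊x⌋) :=
      ⟨Int.floor_le x, by linarith [hx.2, Int.fract_add_floor x]⟩
    exact (hasDerivWithinAt_phiLift_falling (Ico_subset_Icc_self hpiece)).mono_of_mem_nhdsWithin
      (Icc_mem_nhdsGT_of_mem hpiece)
  · have hδ : w / (w + 1) ≤ Int.fract x := not_lt.1 fun h => hx ⟨Int.fract_nonneg x, h⟩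
    have hpiece : x ∈ Ico (w / (w + 1) - 1 + (⌊x⌋ + 1 : ℤ)) ((⌊x⌋ + 1 : ℤ) : ℝ) := by
      push_cast
      exact ⟨by linarith [Int.fract_add_floor x], Int.lt_floor_add_one x⟩
    exact (hasDerivWithinAt_phiLift_rising (Ico_subset_Icc_self hpiece)).mono_of_mem_nhdsWithin
      (Icc_mem_nhdsGT_of_mem hpiece)

lemma hasDerivWithinAt_pow_phiLift_Iio (n : ℕ) (x : ℝ) :
    HasDerivWithinAt (phiLift w b ω hw hA hB ^ n)
      ((1 - b) ^ visitCount (phiLift w b ω hw hA hB) (Ioc 0 (w / (w + 1))) n x *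
        (1 + w * b) ^ (n - visitCount (phiLift w b ω hw hA hB) (Ioc 0 (w / (w + 1))) n x))
      (Iio x) x := by
  refine hasDerivWithinAt_pow_visitCount (U := Iio) (fun x y hxy => strictMono_phiLift hxy)
    (fun x hx => ?_) (fun x hx => ?_) n x
  · have hpiece : x ∈ Ioc (⌊x⌋ : ℝ) (w / (w + 1) + ⌊x⌋) :=
      ⟨by linarith [hx.1, Int.fract_add_floor x], by linarith [hx.2, Int.fract_add_floor x]⟩
    exact (hasDerivWithinAt_phiLift_falling (Ioc_subset_Icc_self hpiece)).mono_of_mem_nhdsWithin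
      (Icc_mem_nhdsLT_of_mem hpiece)
  · have hpiece : x ∈ Ioc (w / (w + 1) - 1 + ⌈x⌉) (⌈x⌉ : ℝ) := by
      refine ⟨?_, Int.le_ceil x⟩
      obtain hfract | hfract := (Int.fract_nonneg x).eq_or_lt
      · have hceil : (⌈x⌉ : ℝ) ≤ ⌊x⌋ :=
          mod_cast Int.ceil_le.2 (by linarith [Int.fract_add_floor x] : x ≤ ⌊x⌋)
        linarith [(div_add_one_mem_Ioo hw).2, Int.floor_le x]
      · have hδ : w / (w + 1) < Int.fract x := not_le.1 fun h => hx ⟨hfract, h⟩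
        have hceil : (⌈x⌉ : ℝ) ≤ ⌊x⌋ + 1 := mod_cast Int.ceil_le_floor_add_one x
        linarith [Int.fract_add_floor x]
    exact (hasDerivWithinAt_phiLift_rising (Ioc_subset_Icc_self hpiece)).mono_of_mem_nhdsWithin
      (Icc_mem_nhdsLT_of_mem hpiece)

lemma visitCount_phiLift_Ioc_le {p : ℤ} {q : ℕ} (hpq : Int.gcd p q = 1)
    (hper : (phiLift w b ω hw hA hB ^ q) (w / (w + 1)) = w / (w + 1) + p) :
    visitCount (phiLift w b ω hw hA hB) (Ioc 0 (w / (w + 1))) q (w / (w + 1)) ≤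
      visitCount (phiLift w b ω hw hA hB) (Ico 0 (w / (w + 1))) q (w / (w + 1)) + 1 := by
  refine visitCount_le_visitCount_add_one (c := w / (w + 1)) ?_ fun i hi hfract => ?_
  · rw [Ico_insert_right (div_add_one_mem_Ioo hw).1.le]
    exact Ioc_subset_Icc_self
  · have hi_eq := (Int.fract_add_floor ((phiLift w b ω hw hA hB ^ i) (w / (w + 1)))).symm
    exact eq_zero_of_pow_apply_eq_add_int hpq hper hi (by rwa [hfract] at hi_eq)

end PhiW

/-- If `b ∈ (0,1)` solves `(1-b)^j (1+wb)^{q-j} = 1` for some `1 ≤ j ≤ ⌈δq⌉ - 1`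
and the break point `x_d = δ` lies on a `p/q`-periodic orbit of
`f(x) = x + ω + b φ_w(x)`, then `f^[q]` is the translation by `p`. -/
theorem stmt1 (w : ℝ) (hw : 0 < w) (p : ℤ) (q j : ℕ) (hq : 1 ≤ q)
    (hpq : Int.gcd p q = 1) (hj1 : 1 ≤ j)
    (hj2 : (j : ℤ) ≤ ⌈(w / (w + 1)) * q⌉ - 1)
    (b : ℝ) (hb : b ∈ Set.Ioo (0 : ℝ) 1)
    (hbe : (1 - b) ^ j * (1 + w * b) ^ (q - j) = 1)
    (ω : ℝ)
    (hper : (fun x => x + ω + b * phiW w x)^[q] (w / (w + 1)) = w / (w + 1) + (p : ℝ)) :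
    (fun x => x + ω + b * phiW w x)^[q] = fun x => x + (p : ℝ) := by
  obtain ⟨hb0, hb1⟩ := hb
  have hA : 0 < 1 - b := sub_pos.2 hb1
  have hB : 0 < 1 + w * b := by positivity
  have hAB : 1 - b ≤ 1 + w * b := by linarith [mul_pos hw hb0]
  have hanti := pow_mul_pow_sub_antitoneOn hA.le hAB q
  have hjq : j ≤ q := by
    have hceil : ⌈w / (w + 1) * q⌉ ≤ (q : ℤ) := Int.ceil_le.2 <| by
      simpa using mul_le_of_le_one_left q.cast_nonneg (div_add_one_mem_Ioo hw).2.le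
    lia
  rw [← coe_phiLift (hw := hw) (hA := hA) (hB := hB), ← CircleDeg1Lift.coe_pow] at hper ⊢
  have hcount := visitCount_phiLift_Ioc_le hpq hper
  refine funext (pow_apply_eq_add_of_concaveOn strictMono_phiLift
    (concaveOn_phiLift hb0.le) hq hper ?_)
  obtain hjk | hkj := le_or_gt j (visitCount (phiLift w b ω hw hA hB) (Ico 0 (w / (w + 1))) q
    (w / (w + 1)))
  · refine .inl fun y hy => ⟨_, ?_, hasDerivWithinAt_pow_phiLift_Ioi q y⟩
    rw [visitCount_eq_of_mem_liftedOrbit hper hy]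
    exact (hanti hjq (visitCount_le _ _ _ _) hjk).trans_eq hbe
  · refine .inr fun y hy => ⟨_, ?_, hasDerivWithinAt_pow_phiLift_Iio q y⟩
    rw [visitCount_eq_of_mem_liftedOrbit hper hy]
    exact hbe.ge.trans (hanti (visitCount_le _ _ _ _) hjq (hcount.trans hkj))
end

section
/- Let m ≥ 1 and let k_1, …, k_m be real numbers with k_i ≥ −1 for all i, min_i k_i < 0, and max_i k_i > 0. Define p(y) = ∏_{i=1}^m (1 + y·k_i). Then the equation p(y) = 1 has a solution y ∈ (0,1) if and only if ∑_{i=1}^m k_i > 0 and ∏_{i=1}^m (1 + k_i) < 1. Moreover, if y* ∈ (0,1) satisfies p(y*) = 1, then y* is the unique solution of p(y) = 1 in (0,1) and p'(y*) < 0. -/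
/-!
Write `p y = ∏ (1 + y * k i)`. If `p y ≤ p x`, the ratios `r i` of the factors of `p` at `x` to
those at `y` have product at least one, so by `log r ≤ r - 1` the sum of the `r i - 1`, which is
`(x - y) * p' y / p y`, is positive. Thus `p` is strictly pseudoconcave: it can be as large at `x`
as at `y` only if it increases at `y` in the direction of `x`. Taking `x = 0`, a solution `y > 0` of
`p y = p 0` is crossed downwards, and then `p` cannot come back to this level on `(y, 1]`;
exchanging the roles of `0` and `y` gives `p' 0 > 0`, where `p' 0 = ∑ k i`. Conversely, if
`p' 0 > 0` and `p 1 < p 0`, the intermediate value theorem yields a solution.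
-/

open Set Filter Topology

lemma eventually_nhdsGT_lt_of_deriv_pos {f : ℝ → ℝ} {a : ℝ} (hf : 0 < deriv f a) :
    ∀ᶠ x in 𝓝[>] a, f a < f x := by
  have hderiv := (differentiableAt_of_deriv_ne_zero hf.ne').hasDerivAt
  have hslope := (hasDerivAt_iff_tendsto_slope_left_right.1 hderiv).2.eventually (lt_mem_nhds hf)
  filter_upwards [hslope, self_mem_nhdsWithin] with x hx hax
  rw [slope_def_field] at hx
  exact sub_pos.1 ((div_pos_iff_of_pos_right (sub_pos.2 hax)).1 hx)

lemma exists_mem_Ioo_eq_left_of_deriv_pos {f : ℝ → ℝ} {a b : ℝ} (hab : a < b)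
    (hf : ContinuousOn f (Icc a b)) (ha : 0 < deriv f a) (hb : f b < f a) :
    ∃ y ∈ Ioo a b, f y = f a := by
  obtain ⟨x, hax, hx⟩ :=
    ((eventually_nhdsGT_lt_of_deriv_pos ha).and (Ioo_mem_nhdsGT hab)).exists
  obtain ⟨y, hy, hya⟩ :=
    intermediate_value_Ioo' hx.2.le (hf.mono (Icc_subset_Icc_left hx.1.le)) ⟨hb, hax⟩
  exact ⟨y, ⟨hx.1.trans hy.1, hy.2⟩, hya⟩

/-- Strict pseudoconcavity of `f` on `[a, b]`: `f` can be as large at `x` as at `y` only if `f` has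
a positive slope at `y` in the direction of `x`. The base point `y` ranges over `[a, b)` only, since
a product of affine factors may vanish to order two or more at `b`. -/
def StrictPseudoconcaveOnIcc (f : ℝ → ℝ) (a b : ℝ) : Prop :=
  ∀ ⦃x⦄, x ∈ Icc a b → ∀ ⦃y⦄, y ∈ Ico a b → x ≠ y → f y ≤ f x → 0 < (x - y) * deriv f y

namespace StrictPseudoconcaveOnIcc

variable {f : ℝ → ℝ} {a b y z : ℝ}

lemma deriv_left_pos (hf : StrictPseudoconcaveOnIcc f a b) (hy : y ∈ Ioc a b) (hay : f a ≤ f y) :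
    0 < deriv f a :=
  pos_of_mul_pos_right
    (hf (Ioc_subset_Icc_self hy) (left_mem_Ico.2 (hy.1.trans_le hy.2)) hy.1.ne' hay)
    (sub_pos.2 hy.1).le

lemma deriv_neg_of_le_left (hf : StrictPseudoconcaveOnIcc f a b) (hy : y ∈ Ioo a b)
    (hya : f y ≤ f a) : deriv f y < 0 :=
  neg_of_mul_pos_right
    (hf (left_mem_Icc.2 (hy.1.trans hy.2).le) (Ioo_subset_Ico_self hy) hy.1.ne hya)
    (sub_neg.2 hy.1).le

lemma lt_of_le_left (hf : StrictPseudoconcaveOnIcc f a b) (hy : y ∈ Ioo a b) (hya : f y ≤ f a)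
    (hz : z ∈ Ioc y b) : f z < f y := by
  by_contra! hyz
  have hslope : 0 < (z - y) * deriv f y :=
    hf ⟨(hy.1.trans hz.1).le, hz.2⟩ (Ioo_subset_Ico_self hy) hz.1.ne' hyz
  exact hslope.not_gt
    (mul_neg_of_pos_of_neg (sub_pos.2 hz.1) (hf.deriv_neg_of_le_left hy hya))

lemma eq_of_eq_left (hf : StrictPseudoconcaveOnIcc f a b) (hy : y ∈ Ioo a b) (hya : f y = f a)
    (hz : z ∈ Ioo a b) (hza : f z = f a) : z = y := by
  rcases lt_trichotomy z y with hzy | hzy | hyz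
  · exact absurd (hya.trans hza.symm) (hf.lt_of_le_left hz hza.le ⟨hzy, hy.2.le⟩).ne
  · exact hzy
  · exact absurd (hza.trans hya.symm) (hf.lt_of_le_left hy hya.le ⟨hyz, hz.2.le⟩).ne

lemma exists_eq_left_iff (hf : StrictPseudoconcaveOnIcc f a b) (hab : a < b)
    (hcont : ContinuousOn f (Icc a b)) :
    (∃ y ∈ Ioo a b, f y = f a) ↔ 0 < deriv f a ∧ f b < f a := by
  refine ⟨fun ⟨y, hy, hya⟩ => ⟨?_, ?_⟩, fun ⟨ha, hb⟩ => ?_⟩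
  · exact hf.deriv_left_pos (Ioo_subset_Ioc_self hy) hya.ge
  · exact (hf.lt_of_le_left hy hya.le (right_mem_Ioc.2 hy.2)).trans_eq hya
  · exact exists_mem_Ioo_eq_left_of_deriv_pos hab hcont ha hb

end StrictPseudoconcaveOnIcc

section Products

variable {ι : Type*} {s : Finset ι}

lemma sum_sub_one_pos_of_one_le_prod {r : ι → ℝ} (hr : ∀ i ∈ s, 0 ≤ r i)
    (hne : ∃ i ∈ s, r i ≠ 1) (hprod : 1 ≤ ∏ i ∈ s, r i) : 0 < ∑ i ∈ s, (r i - 1) := by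
  have hr' : ∀ i ∈ s, r i ≠ 0 := Finset.prod_ne_zero_iff.1 (zero_lt_one.trans_le hprod).ne'
  have hpos : ∀ i ∈ s, 0 < r i := fun i hi => (hr i hi).lt_of_ne' (hr' i hi)
  obtain ⟨j, hj, hj1⟩ := hne
  calc
    0 ≤ Real.log (∏ i ∈ s, r i) := Real.log_nonneg hprod
    _ = ∑ i ∈ s, Real.log (r i) := Real.log_prod hr'
    _ < ∑ i ∈ s, (r i - 1) :=
      Finset.sum_lt_sum (fun i hi => Real.log_le_sub_one_of_pos (hpos i hi))
        ⟨j, hj, Real.log_lt_sub_one_of_pos (hpos j hj) hj1⟩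

variable {k : ι → ℝ} {x y : ℝ}

lemma deriv_prod_one_add_mul (hy : ∀ i ∈ s, 1 + y * k i ≠ 0) :
    deriv (fun y => ∏ i ∈ s, (1 + y * k i)) y =
      (∏ i ∈ s, (1 + y * k i)) * ∑ i ∈ s, k i / (1 + y * k i) := by
  have hlog : logDeriv (fun y => ∏ i ∈ s, (1 + y * k i)) y =
      ∑ i ∈ s, k i / (1 + y * k i) := by
    rw [logDeriv_prod hy fun i _ => by fun_prop]
    simp [logDeriv_apply]
  rw [← hlog, logDeriv_apply, mul_div_cancel₀ _ (Finset.prod_ne_zero_iff.2 hy)]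

lemma deriv_prod_one_add_mul_zero :
    deriv (fun y => ∏ i ∈ s, (1 + y * k i)) 0 = ∑ i ∈ s, k i := by
  simp [deriv_prod_one_add_mul]

lemma sub_mul_deriv_prod_one_add_mul_pos (hx : ∀ i ∈ s, 0 ≤ 1 + x * k i)
    (hy : ∀ i ∈ s, 0 < 1 + y * k i) (hk : ∃ i ∈ s, k i ≠ 0) (hxy : x ≠ y)
    (hle : ∏ i ∈ s, (1 + y * k i) ≤ ∏ i ∈ s, (1 + x * k i)) :
    0 < (x - y) * deriv (fun y => ∏ i ∈ s, (1 + y * k i)) y := by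
  have hprod_pos : 0 < ∏ i ∈ s, (1 + y * k i) := Finset.prod_pos hy
  have hratio : ∀ i ∈ s,
      (1 + x * k i) / (1 + y * k i) - 1 = (x - y) * (k i / (1 + y * k i)) := fun i hi => by
    rw [div_sub_one (hy i hi).ne']
    ring
  have hsum : 0 < ∑ i ∈ s, ((1 + x * k i) / (1 + y * k i) - 1) := by
    refine sum_sub_one_pos_of_one_le_prod (fun i hi => div_nonneg (hx i hi) (hy i hi).le) ?_ ?_
    · obtain ⟨j, hj, hkj⟩ := hk
      refine ⟨j, hj, sub_ne_zero.1 ?_⟩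
      rw [hratio j hj]
      exact mul_ne_zero (sub_ne_zero.2 hxy) (div_ne_zero hkj (hy j hj).ne')
    · rwa [Finset.prod_div_distrib, one_le_div hprod_pos]
  rw [Finset.sum_congr rfl hratio, ← Finset.mul_sum] at hsum
  rw [deriv_prod_one_add_mul fun i hi => (hy i hi).ne', mul_left_comm]
  exact mul_pos hprod_pos hsum

lemma strictPseudoconcaveOnIcc_prod_one_add_mul (hk : ∀ i ∈ s, -1 ≤ k i)
    (hne : ∃ i ∈ s, k i ≠ 0) :
    StrictPseudoconcaveOnIcc (fun y => ∏ i ∈ s, (1 + y * k i)) 0 1 := by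
  intro x hx y hy
  refine sub_mul_deriv_prod_one_add_mul_pos (fun i hi => ?_) (fun i hi => ?_) hne
  · nlinarith [hk i hi, hx.1, hx.2]
  · nlinarith [hk i hi, hy.1, hy.2]

end Products

theorem stmt2_general {ι : Type*} (s : Finset ι) (k : ι → ℝ) (hk : ∀ i ∈ s, -1 ≤ k i)
    (hne : ∃ i ∈ s, k i ≠ 0) :
    ((∃ y ∈ Ioo (0 : ℝ) 1, ∏ i ∈ s, (1 + y * k i) = 1) ↔
      (0 < ∑ i ∈ s, k i ∧ ∏ i ∈ s, (1 + k i) < 1)) ∧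
    ∀ y ∈ Ioo (0 : ℝ) 1, ∏ i ∈ s, (1 + y * k i) = 1 →
      (∀ y' ∈ Ioo (0 : ℝ) 1, ∏ i ∈ s, (1 + y' * k i) = 1 → y' = y) ∧
      deriv (fun y : ℝ => ∏ i ∈ s, (1 + y * k i)) y < 0 := by
  have hp : StrictPseudoconcaveOnIcc (fun y => ∏ i ∈ s, (1 + y * k i)) 0 1 :=
    strictPseudoconcaveOnIcc_prod_one_add_mul hk hne
  have hp_zero : ∏ i ∈ s, (1 + 0 * k i) = 1 := by simp
  refine ⟨?_, fun y hy hpy => ⟨fun z hz hpz => ?_, ?_⟩⟩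
  · simpa only [hp_zero, one_mul, deriv_prod_one_add_mul_zero] using
      hp.exists_eq_left_iff zero_lt_one (by fun_prop)
  · exact hp.eq_of_eq_left hy (hpy.trans hp_zero.symm) hz (hpz.trans hp_zero.symm)
  · exact hp.deriv_neg_of_le_left hy (hpy.trans hp_zero.symm).le

/-- Calculus lemma: for `p(y) = ∏ (1 + y k_i)` with all `k_i ≥ -1`, some `k_i < 0`
and some `k_i > 0`, the equation `p(y) = 1` has a solution in `(0,1)` iff
`∑ k_i > 0` and `∏ (1 + k_i) < 1`; moreover any solution `y* ∈ (0,1)` is unique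
and satisfies `p'(y*) < 0`. -/
theorem stmt2 (m : ℕ) (hm : 1 ≤ m) (k : Fin m → ℝ) (hk : ∀ i, -1 ≤ k i)
    (hneg : ∃ i, k i < 0) (hpos : ∃ i, 0 < k i) :
    ((∃ y ∈ Set.Ioo (0 : ℝ) 1, ∏ i, (1 + y * k i) = 1) ↔
      (0 < ∑ i, k i ∧ ∏ i, (1 + k i) < 1)) ∧
    ∀ y ∈ Set.Ioo (0 : ℝ) 1, ∏ i, (1 + y * k i) = 1 →
      (∀ y' ∈ Set.Ioo (0 : ℝ) 1, ∏ i, (1 + y' * k i) = 1 → y' = y) ∧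
      deriv (fun y : ℝ => ∏ i, (1 + y * k i)) y < 0 := by
  obtain ⟨j, hj⟩ := hpos
  exact stmt2_general Finset.univ k (fun i _ => hk i) ⟨j, Finset.mem_univ j, hj.ne'⟩
end

section
/- Let φ : ℝ → ℝ be Lipschitz with φ(x+1) = φ(x) for all x. Then the following are equivalent: (i) the essential infimum with respect to Lebesgue measure of deriv φ equals −1; (ii) for every b ∈ [0,1) and every ω ∈ ℝ the map x ↦ x + ω + b·φ(x) is strictly increasing, and for every b > 1 and every ω ∈ ℝ there exist x < y with x + ω + b·φ(x) > y + ω + b·φ(y). -/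
open MeasureTheory

/-!
For Lipschitz `f`, write `m = essInf (deriv f)`. Integrating `m ≤ deriv f` shows that every slope of
`f` is at least `m`, so `f` is strictly increasing if `0 < m` and monotone exactly when `0 ≤ m`.
Adding a constant to the derivative and scaling it by `b ≥ 0` act affinely on the essential infimum,
so for `x ↦ x + ω + b * φ x` the deciding quantity is `1 + b * essInf (deriv φ)`. This is positive
for all `0 ≤ b < 1` and negative for all `b > 1` exactly when `essInf (deriv φ) = -1`.
-/

open Filter Set Topology
open scoped NNReal

theorem essInf_const_add_mul {α : Type*} {_ : MeasurableSpace α} {μ : Measure α} [NeZero μ]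
    {f : α → ℝ} (hle : IsBoundedUnder (· ≤ ·) (ae μ) f) (hge : IsBoundedUnder (· ≥ ·) (ae μ) f)
    (a : ℝ) {b : ℝ} (hb : 0 ≤ b) :
    essInf (fun x => a + b * f x) μ = a + b * essInf f μ := by
  have hmono : Monotone fun t : ℝ => a + b * t := fun s t hst =>
    add_le_add_right (mul_le_mul_of_nonneg_left hst hb) a
  exact (hmono.map_liminf_of_continuousAt f (by fun_prop) hle.isCoboundedUnder_ge hge).symm

theorem mul_sub_le_sub_of_ae_le_deriv {f : ℝ → ℝ} {c x y : ℝ}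
    (hf : AbsolutelyContinuousOnInterval f x y) (hxy : x ≤ y)
    (hc : ∀ᵐ t ∂volume.restrict (Icc x y), c ≤ deriv f t) :
    c * (y - x) ≤ f y - f x :=
  calc c * (y - x) = ∫ _ in x..y, c := by
        rw [intervalIntegral.integral_const, smul_eq_mul, mul_comm]
    _ ≤ ∫ t in x..y, deriv f t :=
        intervalIntegral.integral_mono_ae_restrict hxy intervalIntegrable_const
          hf.intervalIntegrable_deriv hc
    _ = f y - f x := hf.integral_deriv_eq_sub

section Lipschitz

variable {f : ℝ → ℝ} {K : ℝ≥0}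

theorem isBoundedUnder_le_deriv_of_lipschitzWith (hf : LipschitzWith K f) (l : Filter ℝ) :
    IsBoundedUnder (· ≤ ·) l (deriv f) :=
  isBoundedUnder_of ⟨K, fun _ => (abs_le.1 (norm_deriv_le_of_lipschitz hf)).2⟩

theorem isBoundedUnder_ge_deriv_of_lipschitzWith (hf : LipschitzWith K f) (l : Filter ℝ) :
    IsBoundedUnder (· ≥ ·) l (deriv f) :=
  isBoundedUnder_of ⟨-K, fun _ => (abs_le.1 (norm_deriv_le_of_lipschitz hf)).1⟩

theorem essInf_deriv_mul_sub_le (hf : LipschitzWith K f) {x y : ℝ} (hxy : x ≤ y) :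
    essInf (deriv f) volume * (y - x) ≤ f y - f x :=
  mul_sub_le_sub_of_ae_le_deriv hf.lipschitzOnWith.absolutelyContinuousOnInterval hxy
    (ae_restrict_of_ae (ae_essInf_le (isBoundedUnder_ge_deriv_of_lipschitzWith hf _)))

theorem strictMono_of_essInf_deriv_pos (hf : LipschitzWith K f)
    (h : 0 < essInf (deriv f) volume) : StrictMono f := fun _ _ hxy =>
  sub_pos.1 ((mul_pos h (sub_pos.2 hxy)).trans_le (essInf_deriv_mul_sub_le hf hxy.le))

theorem monotone_iff_essInf_deriv_nonneg (hf : LipschitzWith K f) :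
    Monotone f ↔ 0 ≤ essInf (deriv f) volume where
  mp hmono := le_essInf_of_ae_le 0 (.of_forall fun _ => hmono.deriv_nonneg)
    (isBoundedUnder_le_deriv_of_lipschitzWith hf _).isCoboundedUnder_ge
  mpr h _ _ hxy :=
    sub_nonneg.1 ((mul_nonneg h (sub_nonneg.2 hxy)).trans (essInf_deriv_mul_sub_le hf hxy))

theorem exists_lt_map_lt_iff_essInf_deriv_neg (hf : LipschitzWith K f) :
    (∃ x y, x < y ∧ f y < f x) ↔ essInf (deriv f) volume < 0 := by
  rw [← not_le, ← monotone_iff_essInf_deriv_nonneg hf, monotone_iff_forall_lt]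
  push Not
  rfl

end Lipschitz

/-- The family `f_{b,ω,φ}` of lifts of circle maps with coupling `b`, rotation parameter `ω` and
forcing `φ`; the Arnold standard family is the case of a sinusoidal `φ`. -/
def standardFamily (b ω : ℝ) (φ : ℝ → ℝ) (x : ℝ) : ℝ :=
  x + ω + b * φ x

section StandardFamily

variable {φ : ℝ → ℝ} {K : ℝ≥0} {b : ℝ}

theorem lipschitzWith_standardFamily (hφ : LipschitzWith K φ) (b ω : ℝ) :
    LipschitzWith (1 + ‖b‖₊ * K) (standardFamily b ω φ) :=
  (isometry_add_right ω).lipschitz.add ((lipschitzWith_smul b).comp hφ)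

theorem deriv_standardFamily_ae_eq (hφ : LipschitzWith K φ) (b ω : ℝ) :
    deriv (standardFamily b ω φ) =ᵐ[volume] fun x => 1 + b * deriv φ x := by
  filter_upwards [hφ.ae_differentiableAt_real] with x hx
  exact (((hasDerivAt_id x).add_const ω).add (hx.hasDerivAt.const_mul b)).deriv

theorem essInf_deriv_standardFamily (hφ : LipschitzWith K φ) (hb : 0 ≤ b) (ω : ℝ) :
    essInf (deriv (standardFamily b ω φ)) volume = 1 + b * essInf (deriv φ) volume :=
  (essInf_congr_ae (deriv_standardFamily_ae_eq hφ b ω)).trans <|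
    essInf_const_add_mul (isBoundedUnder_le_deriv_of_lipschitzWith hφ _)
      (isBoundedUnder_ge_deriv_of_lipschitzWith hφ _) 1 hb

theorem strictMono_standardFamily (hφ : LipschitzWith K φ) (hb : 0 ≤ b) (ω : ℝ)
    (h : 0 < 1 + b * essInf (deriv φ) volume) : StrictMono (standardFamily b ω φ) :=
  strictMono_of_essInf_deriv_pos (lipschitzWith_standardFamily hφ b ω)
    (by rwa [essInf_deriv_standardFamily hφ hb])

theorem monotone_standardFamily_iff (hφ : LipschitzWith K φ) (hb : 0 ≤ b) (ω : ℝ) :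
    Monotone (standardFamily b ω φ) ↔ 0 ≤ 1 + b * essInf (deriv φ) volume := by
  rw [monotone_iff_essInf_deriv_nonneg (lipschitzWith_standardFamily hφ b ω),
    essInf_deriv_standardFamily hφ hb]

theorem exists_lt_standardFamily_lt_iff (hφ : LipschitzWith K φ) (hb : 0 ≤ b) (ω : ℝ) :
    (∃ x y, x < y ∧ standardFamily b ω φ y < standardFamily b ω φ x) ↔
      1 + b * essInf (deriv φ) volume < 0 := by
  rw [exists_lt_map_lt_iff_essInf_deriv_neg (lipschitzWith_standardFamily hφ b ω),
    essInf_deriv_standardFamily hφ hb]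

end StandardFamily

theorem eq_neg_one_of_forall_one_add_mul {m : ℝ} (hlt : ∀ b, 0 ≤ b → b < 1 → 0 ≤ 1 + b * m)
    (hgt : ∀ b, 1 < b → 1 + b * m ≤ 0) : m = -1 := by
  have hcont : Tendsto (fun b : ℝ => 1 + b * m) (𝓝 1) (𝓝 (1 + 1 * m)) :=
    Continuous.tendsto (by fun_prop) 1
  have hnonneg : 0 ≤ 1 + 1 * m := by
    refine ge_of_tendsto (hcont.mono_left (nhdsWithin_le_nhds (s := Iio 1))) ?_
    filter_upwards [Ico_mem_nhdsLT zero_lt_one] with b hb using hlt b hb.1 hb.2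
  have hnonpos : 1 + 1 * m ≤ 0 := by
    refine le_of_tendsto (hcont.mono_left (nhdsWithin_le_nhds (s := Ioi 1))) ?_
    filter_upwards [self_mem_nhdsWithin] with b hb using hgt b hb
  linarith

theorem stmt3_general {φ : ℝ → ℝ} {K : ℝ≥0} (hφ : LipschitzWith K φ) :
    essInf (deriv φ) volume = -1 ↔
      ((∀ b : ℝ, 0 ≤ b → b < 1 → ∀ ω : ℝ, StrictMono (standardFamily b ω φ)) ∧
       (∀ b : ℝ, 1 < b → ∀ ω : ℝ,
          ∃ x y : ℝ, x < y ∧ standardFamily b ω φ y < standardFamily b ω φ x)) := by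
  constructor
  · intro h
    refine ⟨fun b hb hb1 ω => strictMono_standardFamily hφ hb ω ?_, fun b hb ω =>
      (exists_lt_standardFamily_lt_iff hφ (zero_le_one.trans hb.le) ω).2 ?_⟩
    all_goals rw [h]; linarith
  · rintro ⟨hstrict, hfold⟩
    refine eq_neg_one_of_forall_one_add_mul (fun b hb hb1 => ?_) (fun b hb => ?_)
    · exact (monotone_standardFamily_iff hφ hb 0).1 (hstrict b hb hb1 0).monotone
    · exact ((exists_lt_standardFamily_lt_iff hφ (zero_le_one.trans hb.le) 0).1 (hfold b hb 0)).le

/-- Characterization of Lipschitz standard-like forcings: a Lipschitz 1-periodic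
`φ` has `essinf (deriv φ) = -1` iff the family `x ↦ x + ω + b φ(x)` is strictly
increasing for all `b ∈ [0,1)` and not weakly order preserving for all `b > 1`. -/
theorem stmt3 (φ : ℝ → ℝ) (hL : ∃ K, LipschitzWith K φ)
    (hper : ∀ x, φ (x + 1) = φ x) :
    essInf (deriv φ) volume = -1 ↔
      ((∀ b : ℝ, 0 ≤ b → b < 1 → ∀ ω : ℝ,
          StrictMono (fun x => x + ω + b * φ x)) ∧
       (∀ b : ℝ, 1 < b → ∀ ω : ℝ,
          ∃ x y : ℝ, x < y ∧ y + ω + b * φ y < x + ω + b * φ x)) :=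
  hL.elim fun _ hφ => stmt3_general hφ
end

section
/- Let φ : ℝ → ℝ be 1-periodic and nonconstant, and suppose there exists an entire function F : ℂ → ℂ (differentiable on all of ℂ) with F(x) = φ(x) for every real x; in particular, φ may be any nonconstant trigonometric polynomial. Then for all coprime integers p, q with q ≥ 1, every b ∈ (0,1], and every ω ∈ ℝ, the q-th iterate of the map f_{b,ω,φ}(x) = x + ω + b·φ(x) is not equal to the translation R_p : x ↦ x + p; that is, φ is not p/q-pinching for any p/q. -/
/-!
If some iterate of an entire function `G` is a translation, then `G` has an entire left inverse, so
it is proper and its derivative vanishes nowhere. Therefore `k z = z / (G z - G 0)` extends to an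
entire function, whose slope `1 / (G z - G 0) - k 0 / z` from `0` tends to `0` at infinity. By
Liouville's theorem the slope vanishes, so `k` is constant and `G` is affine. When the lift
`x ↦ x + ω + b * φ x` is the restriction of such a `G` to the real line, `φ` is affine as well, and
an affine periodic function is constant.
-/

open Bornology Filter Function Topology

section Cobounded

variable {𝕜 : Type*} [NontriviallyNormedField 𝕜]

theorem tendsto_inv_sub_const_zero {α : Type*} {l : Filter α} {f : α → 𝕜}
    (hf : Tendsto f l (cobounded 𝕜)) (a : 𝕜) : Tendsto (fun x => (f x - a)⁻¹) l (𝓝 0) :=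
  tendsto_inv₀_cobounded.comp ((tendsto_sub_const_cobounded a).comp hf)

theorem tendsto_dslope_inv_dslope_cobounded {f : 𝕜 → 𝕜}
    (hf : Tendsto f (cobounded 𝕜) (cobounded 𝕜)) (a : 𝕜) :
    Tendsto (dslope (dslope f a)⁻¹ a) (cobounded 𝕜) (𝓝 0) := by
  have hlim : Tendsto (fun z => (f z - f a)⁻¹ - (dslope f a a)⁻¹ * (z - a)⁻¹) (cobounded 𝕜)
      (𝓝 0) := by
    simpa using (tendsto_inv_sub_const_zero hf (f a)).sub
      ((tendsto_inv_sub_const_zero tendsto_id a).const_mul (dslope f a a)⁻¹)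
  refine hlim.congr' ?_
  filter_upwards [eventually_ne_cobounded a] with z hz
  have hza : z - a ≠ 0 := sub_ne_zero.2 hz
  rw [dslope_of_ne _ hz, slope_def_field, Pi.inv_apply, Pi.inv_apply, dslope_of_ne _ hz,
    slope_def_field, inv_div, sub_div, div_right_comm, div_self hza, one_div, div_eq_mul_inv]

end Cobounded

section LeftInverse

variable {𝕜 : Type*} [NontriviallyNormedField 𝕜] {f g : 𝕜 → 𝕜}

theorem deriv_ne_zero_of_leftInverse {x : 𝕜} (hg : DifferentiableAt 𝕜 g (f x))
    (hf : DifferentiableAt 𝕜 f x) (hgf : LeftInverse g f) : deriv f x ≠ 0 := by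
  have hchain : deriv g (f x) * deriv f x = 1 := by
    rw [← deriv_comp x hg hf, hgf.comp_eq_id, deriv_id]
  exact right_ne_zero_of_mul_eq_one hchain

theorem dslope_ne_zero_of_leftInverse {a : 𝕜} (hg : DifferentiableAt 𝕜 g (f a))
    (hf : DifferentiableAt 𝕜 f a) (hgf : LeftInverse g f) (z : 𝕜) : dslope f a z ≠ 0 := by
  rcases eq_or_ne z a with rfl | hz
  · simpa only [dslope_same] using deriv_ne_zero_of_leftInverse hg hf hgf
  · rw [dslope_of_ne f hz, slope_def_field]
    exact div_ne_zero (sub_ne_zero.2 (hgf.injective.ne hz)) (sub_ne_zero.2 hz)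

end LeftInverse

section Entire

variable {E : Type*} [NormedAddCommGroup E] [NormedSpace ℂ E] [CompleteSpace E]

theorem differentiable_dslope {f : ℂ → E} (hf : Differentiable ℂ f) (a : ℂ) :
    Differentiable ℂ (dslope f a) :=
  differentiableOn_univ.1 ((Complex.differentiableOn_dslope univ_mem).2 hf.differentiableOn)

theorem eq_of_tendsto_dslope_cobounded {f : ℂ → E} (hf : Differentiable ℂ f) {a : ℂ}
    (hlim : Tendsto (dslope f a) (cobounded ℂ) (𝓝 0)) (z : ℂ) : f z = f a := by
  have hzero : dslope f a z = 0 :=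
    (differentiable_dslope hf a).apply_eq_of_tendsto_cocompact z
      (Metric.cobounded_eq_cocompact (α := ℂ) ▸ hlim)
  rw [← sub_eq_zero, ← sub_smul_dslope, hzero, smul_zero]

theorem eq_of_forall_ofReal_eq {f g : ℂ → E} (hf : Differentiable ℂ f) (hg : Differentiable ℂ g)
    (h : ∀ x : ℝ, f x = g x) : f = g := by
  have hreal : Tendsto ((↑) : ℝ → ℂ) (𝓝[≠] 0) (𝓝[≠] ((0 : ℝ) : ℂ)) :=
    Complex.continuous_ofReal.continuousWithinAt.tendsto_nhdsWithin
      fun _ hx => Complex.ofReal_injective.ne hx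
  exact AnalyticOnNhd.eq_of_frequently_eq (fun z _ => hf.analyticAt z) (fun z _ => hg.analyticAt z)
    (hreal.frequently (Frequently.of_forall h))

end Entire

section EntireAutomorphism

variable {G : ℂ → ℂ}

theorem exists_eq_mul_add_of_leftInverse {K : ℂ → ℂ} (hG : Differentiable ℂ G)
    (hK : Differentiable ℂ K) (hKG : LeftInverse K G) : ∃ m d : ℂ, ∀ z, G z = m * z + d := by
  have hproper : Tendsto G (cobounded ℂ) (cobounded ℂ) := by
    simpa only [Metric.cobounded_eq_cocompact] using
      (hKG.isClosedEmbedding hK.continuous hG.continuous).tendsto_cocompact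
  have hinv : Differentiable ℂ (dslope G 0)⁻¹ :=
    (differentiable_dslope hG 0).inv (dslope_ne_zero_of_leftInverse (hK _) (hG 0) hKG)
  have hconst (z : ℂ) : dslope G 0 z = dslope G 0 0 :=
    inv_injective <|
      eq_of_tendsto_dslope_cobounded hinv (tendsto_dslope_inv_dslope_cobounded hproper 0) z
  refine ⟨dslope G 0 0, G 0, fun z => ?_⟩
  calc G z = (z - 0) • dslope G 0 z + G 0 := by rw [sub_smul_dslope, sub_add_cancel]
    _ = dslope G 0 0 * z + G 0 := by rw [hconst, sub_zero, smul_eq_mul, mul_comm]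

theorem exists_eq_mul_add_of_iterate_eq_add_const (hG : Differentiable ℂ G) {n : ℕ} (hn : n ≠ 0)
    {c : ℂ} (hiter : G^[n] = fun z => z + c) : ∃ m d : ℂ, ∀ z, G z = m * z + d := by
  obtain ⟨k, rfl⟩ := Nat.exists_eq_succ_of_ne_zero hn
  refine exists_eq_mul_add_of_leftInverse (K := fun z => G^[k] z - c) hG
    ((hG.iterate k).sub_const c) fun z => ?_
  change G^[k] (G z) - c = z
  rw [← iterate_succ_apply, hiter, add_sub_cancel_right]

end EntireAutomorphism

theorem exists_real_eq_mul_add_of_iterate_eq_add_const {f : ℝ → ℝ} {G : ℂ → ℂ}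
    (hG : Differentiable ℂ G) (hGf : ∀ x : ℝ, G x = f x) {n : ℕ} (hn : n ≠ 0) {c : ℝ}
    (hiter : f^[n] = fun x => x + c) : ∃ m d : ℝ, ∀ x, f x = m * x + d := by
  have hsemi : Semiconj ((↑) : ℝ → ℂ) f G := fun x => (hGf x).symm
  have hGiter : G^[n] = fun z => z + (c : ℂ) :=
    eq_of_forall_ofReal_eq (hG.iterate n) (differentiable_id.add_const _) fun x => by
      rw [← (hsemi.iterate_right n).eq, hiter, Complex.ofReal_add]
  obtain ⟨m, d, hmd⟩ := exists_eq_mul_add_of_iterate_eq_add_const hG hn hGiter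
  refine ⟨m.re, d.re, fun x => ?_⟩
  simpa using congrArg Complex.re ((hGf x).symm.trans (hmd x))

theorem not_exists_eq_mul_add_of_periodic {R : Type*} [NonAssocRing R] [NoZeroDivisors R]
    {f : R → R} {T : R} (hT : T ≠ 0) (hper : Periodic f T) (hf : ∃ x y, f x ≠ f y) :
    ¬ ∃ m d : R, ∀ x, f x = m * x + d := by
  rintro ⟨m, d, hmd⟩
  obtain ⟨x, y, hxy⟩ := hf
  have hmT : m * T = 0 := by simpa [hmd] using hper 0
  have hm : m = 0 := (mul_eq_zero.1 hmT).resolve_right hT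
  exact hxy (by simp only [hmd, hm, zero_mul])

theorem stmt5_general {φ : ℝ → ℝ} (hφ : ¬ ∃ m d : ℝ, ∀ x, φ x = m * x + d)
    (hF : ∃ F : ℂ → ℂ, Differentiable ℂ F ∧ ∀ x : ℝ, F x = (φ x : ℂ)) (c : ℝ) {q : ℕ} (hq : q ≠ 0)
    {b : ℝ} (hb : b ≠ 0) (ω : ℝ) : (fun x => x + ω + b * φ x)^[q] ≠ fun x => x + c := by
  intro hiter
  obtain ⟨F, hFd, hFφ⟩ := hF
  have hGd : Differentiable ℂ fun z => z + ω + b * F z := by fun_prop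
  obtain ⟨m, d, hmd⟩ :=
    exists_real_eq_mul_add_of_iterate_eq_add_const hGd (fun x => by simp [hFφ]) hq hiter
  refine hφ ⟨(m - 1) / b, (d - ω) / b, fun x => ?_⟩
  field_simp
  linear_combination hmd x

/-- Herman's lemma: if a nonconstant 1-periodic `φ : ℝ → ℝ` extends to an entire
function on `ℂ` (e.g. a nonconstant trigonometric polynomial), then for all
coprime `p, q` with `q ≥ 1`, all `b ∈ (0,1]` and all `ω`, the `q`-th iterate of
`x ↦ x + ω + b φ(x)` is not the translation by `p`; i.e. `φ` is never pinching. -/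
theorem stmt5 (φ : ℝ → ℝ) (hper : ∀ x, φ (x + 1) = φ x)
    (hnc : ∃ x y : ℝ, φ x ≠ φ y)
    (hF : ∃ F : ℂ → ℂ, Differentiable ℂ F ∧ ∀ x : ℝ, F x = (φ x : ℂ)) :
    ∀ (p : ℤ) (q : ℕ), 1 ≤ q → Int.gcd p q = 1 →
      ∀ b : ℝ, 0 < b → b ≤ 1 → ∀ ω : ℝ,
        (fun x => x + ω + b * φ x)^[q] ≠ fun x => x + (p : ℝ) := by
  intro p q hq _ b hb _ ω
  exact stmt5_general (not_exists_eq_mul_add_of_periodic one_ne_zero hper hnc) hF p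
    (Nat.one_le_iff_ne_zero.1 hq) hb.ne' ω
end

section
/- Let r ≥ 1 be a natural number and let φ : ℝ → ℝ be r-times continuously differentiable and 1-periodic with φ'(x) ≥ −1 for all x and min φ' = −1. Let p, q be coprime integers with q ≥ 1, let n ≥ 2 be a natural number, and let ε > 0. Then there exists ψ : ℝ → ℝ, r-times continuously differentiable and 1-periodic, with ψ'(x) ≥ −1 for all x and min ψ' = −1, such that ∑_{i=0}^r sup_x |iteratedDeriv i (φ − ψ)(x)| < ε and for every b ∈ [1/n, 1] and every ω ∈ ℝ the q-th iterate of the map x ↦ x + ω + b·ψ(x) is not equal to x ↦ x + p. -/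
/-!
Approximate `φ` in `C^r` by a trigonometric polynomial, and rescale it so that its derivative again
has minimum `-1`. For the resulting `ψ`, the map `x ↦ x + ω + b ψ(x)` extends to an entire function
`F`. If some iterate `F^[q]` is a translation, the chain rule shows that `F' = 1 + b ψ'` has no
zero in `ℂ`. A zero-free trigonometric polynomial is a Laurent polynomial in `w = e^{2πiz}` that
does not vanish on `ℂ \ {0}`, hence a monomial `c e^{2πikz}`. The mean of `F'` over a period is
`1`, so `F'` is identically `1`, which contradicts `b ψ' ≠ 0`.
-/

open Function Polynomial Set Filter Topology

lemma eq_C_mul_X_pow_of_forall_eval_ne_zero {k : Type*} [Field k] [IsAlgClosed k] {P : k[X]}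
    (hP : ∀ w ≠ 0, P.eval w ≠ 0) : ∃ (c : k) (m : ℕ), P = C c * X ^ m := by
  have hroots : P.roots = Multiset.replicate (Multiset.card P.roots) 0 :=
    Multiset.eq_replicate_of_mem fun w hw => by_contra fun hw0 => hP w hw0 (isRoot_of_mem_roots hw)
  refine ⟨P.leadingCoeff, Multiset.card P.roots, ?_⟩
  conv_lhs => rw [(IsAlgClosed.splits P).eq_prod_roots, hroots]
  simp

lemma deriv_ne_zero_of_deriv_iterate_ne_zero {𝕜 : Type*} [NontriviallyNormedField 𝕜] {F : 𝕜 → 𝕜}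
    (hF : Differentiable 𝕜 F) {q : ℕ} (hq : q ≠ 0) {z : 𝕜} (hz : deriv F^[q] z ≠ 0) :
    deriv F z ≠ 0 := by
  obtain ⟨k, rfl⟩ := Nat.exists_eq_succ_of_ne_zero hq
  rw [iterate_succ, deriv_comp z ((hF.iterate k) (F z)) (hF z)] at hz
  exact right_ne_zero_of_mul hz

lemma eq_of_forall_ofReal_eq_s6 {F G : ℂ → ℂ} (hF : Differentiable ℂ F) (hG : Differentiable ℂ G)
    (h : ∀ x : ℝ, F x = G x) : F = G := by
  refine AnalyticOnNhd.eq_of_frequently_eq (z₀ := 0) (fun z _ => hF.analyticAt z)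
    (fun z _ => hG.analyticAt z) ?_
  have htend : Tendsto ((↑) : ℝ → ℂ) (𝓝[≠] 0) (𝓝[≠] 0) := by
    simpa using Complex.continuous_ofReal.continuousAt.continuousWithinAt.tendsto_nhdsWithin
      (x := (0 : ℝ)) (s := {0}ᶜ) (t := {0}ᶜ) fun x hx => by simpa using hx
  exact htend.frequently (Frequently.of_forall h)

lemma periodic_iteratedDeriv {𝕜 F : Type*} [NontriviallyNormedField 𝕜] [NormedAddCommGroup F]
    [NormedSpace 𝕜 F] {f : 𝕜 → F} {c : 𝕜} (hf : Periodic f c) (n : ℕ) :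
    Periodic (iteratedDeriv n f) c := fun x => by
  rw [← congrFun (iteratedDeriv_comp_add_const n f c) x, hf.funext]

lemma periodic_deriv {𝕜 F : Type*} [NontriviallyNormedField 𝕜] [NormedAddCommGroup F]
    [NormedSpace 𝕜 F] {f : 𝕜 → F} {c : 𝕜} (hf : Periodic f c) : Periodic (deriv f) c :=
  iteratedDeriv_one (f := f) ▸ periodic_iteratedDeriv hf 1

lemma norm_sub_le_of_periodic {E : Type*} [NormedAddCommGroup E] [NormedSpace ℝ E] {h h' : ℝ → E}
    {c C : ℝ} (hc : 0 < c) (hper : Periodic h c) (hh : ∀ x, HasDerivAt h (h' x) x)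
    (hC : ∀ x, ‖h' x‖ ≤ C) (x : ℝ) : ‖h x - h 0‖ ≤ C * c := by
  obtain ⟨y, ⟨hy0, hyc⟩, hxy⟩ := hper.exists_mem_Ico₀ hc x
  have hmvt := convex_univ.norm_image_sub_le_of_norm_hasDerivWithin_le
    (fun x _ => (hh x).hasDerivWithinAt) (fun x _ => hC x) (mem_univ 0) (mem_univ y)
  rw [hxy]
  refine hmvt.trans (mul_le_mul_of_nonneg_left ?_ ((norm_nonneg _).trans (hC 0)))
  rw [sub_zero, Real.norm_of_nonneg hy0]
  exact hyc.le

lemma abs_le_of_periodic_of_hasDerivAt_const_add {h h' : ℝ → ℝ} {a c C : ℝ} (hc : 0 < c)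
    (hper : Periodic h c) (hh : ∀ x, HasDerivAt h (a + h' x) x) (hC : ∀ x, |h' x| ≤ C) :
    |a| ≤ C := by
  obtain ⟨y, -, hy⟩ := exists_hasDerivAt_eq_zero hc
    (fun x _ => (hh x).continuousAt.continuousWithinAt) (by simpa using (hper 0).symm)
    fun x _ => hh x
  rw [eq_neg_of_add_eq_zero_left hy, abs_neg]
  exact hC y

lemma norm_iteratedDeriv_const_add_le {𝕜 F : Type*} [NontriviallyNormedField 𝕜]
    [NormedAddCommGroup F] [NormedSpace 𝕜 F] (n : ℕ) (c : F) (f : 𝕜 → F) (x : 𝕜) :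
    ‖iteratedDeriv n (fun y => c + f y) x‖ ≤ ‖c‖ + ‖iteratedDeriv n f x‖ := by
  rcases n.eq_zero_or_pos with rfl | hn
  · simpa only [iteratedDeriv_zero] using norm_add_le c (f x)
  · rw [iteratedDeriv_const_add hn]
    exact le_add_of_nonneg_left (norm_nonneg c)

lemma exists_forall_norm_iteratedDeriv_le {E : Type*} [NormedAddCommGroup E] [NormedSpace ℝ E]
    {f : ℝ → E} {c : ℝ} {r : ℕ} (hf : ContDiff ℝ r f) (hper : Periodic f c) (hc : c ≠ 0) :
    ∃ M, ∀ i ≤ r, ∀ x, ‖iteratedDeriv i f x‖ ≤ M := by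
  have hbound : ∀ i ∈ Iic r, ∀ᶠ M in atTop, ∀ x, ‖iteratedDeriv i f x‖ ≤ M := by
    intro i hi
    obtain ⟨M, hM⟩ := ((periodic_iteratedDeriv hper i).isBounded_of_continuous hc
      (hf.continuous_iteratedDeriv i (mod_cast hi))).exists_norm_le
    filter_upwards [eventually_ge_atTop M] with M' hM' x
    exact (hM _ ⟨x, rfl⟩).trans hM'
  exact ((eventually_all_finite (finite_Iic r)).2 hbound).exists

lemma abs_sub_le_of_isLeast_range {α : Type*} {f g : α → ℝ} {a b δ : ℝ} (ha : IsLeast (range f) a)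
    (hb : IsLeast (range g) b) (hfg : ∀ x, |f x - g x| ≤ δ) : |a - b| ≤ δ := by
  obtain ⟨⟨x, rfl⟩, hf⟩ := ha
  obtain ⟨⟨y, rfl⟩, hg⟩ := hb
  have hxy : f x ≤ f y := hf ⟨y, rfl⟩
  have hyx : g y ≤ g x := hg ⟨x, rfl⟩
  have hx := abs_le.1 (hfg x)
  have hy := abs_le.1 (hfg y)
  exact abs_le.2 ⟨by linarith, by linarith⟩

lemma isLeast_range_deriv_const_mul {f : ℝ → ℝ} {c m : ℝ} (hc : 0 ≤ c)
    (hm : IsLeast (range (deriv f)) m) : IsLeast (range (deriv fun x => c * f x)) (c * m) := by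
  have hrange : range (deriv fun x => c * f x) = (c * ·) '' range (deriv f) := by
    rw [← range_comp]
    exact congrArg range (funext fun x => deriv_const_mul_field c)
  rw [hrange]
  exact (monotone_mul_left_of_nonneg hc).map_isLeast hm

lemma norm_iteratedDeriv_sub_const_smul_le {𝕜 E : Type*} [NontriviallyNormedField 𝕜]
    [NormedAddCommGroup E] [NormedSpace 𝕜 E] {f g : 𝕜 → E} {i : ℕ} {x : 𝕜}
    (hf : ContDiffAt 𝕜 i f x) (hg : ContDiffAt 𝕜 i g x) (c : 𝕜) :
    ‖iteratedDeriv i (f - c • g) x‖ ≤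
      ‖c‖ * ‖iteratedDeriv i (f - g) x‖ + ‖1 - c‖ * ‖iteratedDeriv i f x‖ := by
  have hsub : f - c • g = c • (f - g) + (1 - c) • f := by module
  have hfg : ContDiffAt 𝕜 i (c • (f - g)) x := (hf.sub hg).const_smul c
  have hf' : ContDiffAt 𝕜 i ((1 - c) • f) x := hf.const_smul (1 - c)
  rw [hsub, iteratedDeriv_add hfg hf', iteratedDeriv_const_smul_field,
    iteratedDeriv_const_smul_field, ← norm_smul, ← norm_smul]
  exact norm_add_le _ _

lemma abs_one_sub_inv_le {m δ : ℝ} (hm : |m - 1| ≤ δ) (hδ : δ ≤ 1 / 2) : |1 - m⁻¹| ≤ 2 * δ := by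
  have hm0 : 1 / 2 ≤ m := by linarith [(abs_le.1 hm).1]
  have hpos : 0 < m := one_half_pos.trans_le hm0
  calc |1 - m⁻¹| = m⁻¹ * |m - 1| := by
        rw [← abs_of_pos (inv_pos.2 hpos), ← abs_mul, abs_of_pos (inv_pos.2 hpos), mul_sub_one,
          inv_mul_cancel₀ hpos.ne']
    _ ≤ 2 * δ := by
        gcongr
        exact inv_le_of_inv_le₀ two_pos (by linarith)

/-- `fourierExp k` is the entire function `z ↦ e^{2πikz}`, extending the `k`-th Fourier monomial of
the circle `ℝ / ℤ` from `ℝ` to `ℂ`. -/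
noncomputable def fourierExp (k : ℤ) (z : ℂ) : ℂ := Complex.exp (2 * Real.pi * Complex.I * k * z)

lemma fourierExp_zero (z : ℂ) : fourierExp 0 z = 1 := by simp [fourierExp]

lemma fourierExp_eq_zpow (k : ℤ) (z : ℂ) : fourierExp k z = fourierExp 1 z ^ k := by
  simp only [fourierExp, ← Complex.exp_int_mul]
  congr 1
  push_cast
  ring

lemma fourierExp_ne_zero (k : ℤ) (z : ℂ) : fourierExp k z ≠ 0 := Complex.exp_ne_zero _

lemma exists_fourierExp_one_eq {w : ℂ} (hw : w ≠ 0) : ∃ z, fourierExp 1 z = w := by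
  refine ⟨Complex.log w / (2 * Real.pi * Complex.I), ?_⟩
  rw [fourierExp, Int.cast_one, mul_one, mul_div_cancel₀ _ Complex.two_pi_I_ne_zero,
    Complex.exp_log hw]

lemma periodic_fourierExp (k : ℤ) : Periodic (fourierExp k) 1 := fun z =>
  Complex.exp_eq_exp_iff_exists_int.2 ⟨k, by ring⟩

lemma hasDerivAt_fourierExp (k : ℤ) (z : ℂ) :
    HasDerivAt (fourierExp k) (2 * Real.pi * Complex.I * k * fourierExp k z) z :=
  ((hasDerivAt_id z).const_mul (2 * Real.pi * Complex.I * k)).cexp.congr_deriv <| by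
    rw [mul_one, mul_comm, id_eq, fourierExp]

lemma conj_fourierExp_conj (k : ℤ) (z : ℂ) :
    starRingEnd ℂ (fourierExp k (starRingEnd ℂ z)) = fourierExp (-k) z := by
  simp [fourierExp, ← Complex.exp_conj, Complex.conj_ofNat]

lemma two_pi_I_mul_intCast_ne_zero {k : ℤ} (hk : k ≠ 0) :
    (2 * Real.pi * Complex.I * k : ℂ) ≠ 0 :=
  mul_ne_zero Complex.two_pi_I_ne_zero (Int.cast_ne_zero.2 hk)

lemma integral_fourierExp {k : ℤ} (hk : k ≠ 0) : ∫ x in (0 : ℝ)..1, fourierExp k x = 0 := by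
  have hper : fourierExp k 1 = fourierExp k 0 := by simpa using periodic_fourierExp k 0
  simp only [fourierExp] at hper ⊢
  rw [integral_exp_mul_complex (two_pi_I_mul_intCast_ne_zero hk), Complex.ofReal_one,
    Complex.ofReal_zero, hper, sub_self, zero_div]

/-- The space of complex trigonometric polynomials of period `1`, as entire functions. -/
noncomputable def trigPolynomial : Submodule ℂ (ℂ → ℂ) := Submodule.span ℂ (range fourierExp)

section trigPolynomial

variable {g : ℂ → ℂ}

lemma fourierExp_mem_trigPolynomial (k : ℤ) : fourierExp k ∈ trigPolynomial :=
  Submodule.subset_span ⟨k, rfl⟩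

lemma const_mem_trigPolynomial (c : ℂ) : (fun _ => c) ∈ trigPolynomial := by
  convert trigPolynomial.smul_mem c (fourierExp_mem_trigPolynomial 0) using 1
  ext z
  simp [fourierExp_zero]

lemma differentiable_of_mem_trigPolynomial (hg : g ∈ trigPolynomial) : Differentiable ℂ g := by
  induction hg using Submodule.span_induction with
  | mem _ h => obtain ⟨k, rfl⟩ := h; exact fun z => (hasDerivAt_fourierExp k z).differentiableAt
  | zero => exact differentiable_const 0
  | add _ _ _ _ hf hg => exact hf.add hg
  | smul c _ _ hf => exact hf.const_smul c

lemma periodic_of_mem_trigPolynomial (hg : g ∈ trigPolynomial) : Periodic g 1 := by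
  induction hg using Submodule.span_induction with
  | mem _ h => obtain ⟨k, rfl⟩ := h; exact periodic_fourierExp k
  | zero => exact fun _ => rfl
  | add _ _ _ _ hf hg => exact hf.add hg
  | smul c _ _ hf => exact hf.smul c

lemma deriv_mem_trigPolynomial (hg : g ∈ trigPolynomial) : deriv g ∈ trigPolynomial := by
  induction hg using Submodule.span_induction with
  | mem _ h =>
    obtain ⟨k, rfl⟩ := h
    convert trigPolynomial.smul_mem (2 * Real.pi * Complex.I * k)
      (fourierExp_mem_trigPolynomial k) using 1
    exact funext fun z => (hasDerivAt_fourierExp k z).deriv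
  | zero => rw [deriv_zero]; exact zero_mem _
  | add f g hf hg hf' hg' =>
    convert add_mem hf' hg' using 1
    exact funext fun z => deriv_add (differentiable_of_mem_trigPolynomial hf z)
      (differentiable_of_mem_trigPolynomial hg z)
  | smul c f hf hf' =>
    convert trigPolynomial.smul_mem c hf' using 1
    exact funext fun z => deriv_const_smul c (differentiable_of_mem_trigPolynomial hf z)

lemma exists_hasDerivAt_sub_const_of_mem_trigPolynomial (hg : g ∈ trigPolynomial) :
    ∃ a : ℂ, ∃ G ∈ trigPolynomial, ∀ z, HasDerivAt G (g z - a) z := by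
  induction hg using Submodule.span_induction with
  | mem _ h =>
    obtain ⟨k, rfl⟩ := h
    rcases eq_or_ne k 0 with rfl | hk
    · exact ⟨1, 0, zero_mem _, fun z => by simp [fourierExp_zero]⟩
    · refine ⟨0, _, trigPolynomial.smul_mem (2 * Real.pi * Complex.I * k)⁻¹
        (fourierExp_mem_trigPolynomial k), fun z => ?_⟩
      refine ((hasDerivAt_fourierExp k z).const_smul _).congr_deriv ?_
      rw [smul_eq_mul, inv_mul_cancel_left₀ (two_pi_I_mul_intCast_ne_zero hk), sub_zero]
  | zero => exact ⟨0, 0, zero_mem _, fun z => by simp⟩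
  | add f g _ _ hf hg =>
    obtain ⟨a, F, hF, hF'⟩ := hf
    obtain ⟨b, G, hG, hG'⟩ := hg
    exact ⟨a + b, F + G, add_mem hF hG, fun z => ((hF' z).add (hG' z)).congr_deriv
      (sub_add_sub_comm _ _ _ _)⟩
  | smul c f _ hf =>
    obtain ⟨a, F, hF, hF'⟩ := hf
    exact ⟨c • a, c • F, trigPolynomial.smul_mem c hF, fun z =>
      ((hF' z).const_smul c).congr_deriv (smul_sub _ _ _)⟩

lemma conj_conj_mem_trigPolynomial (hg : g ∈ trigPolynomial) :
    (fun z => starRingEnd ℂ (g (starRingEnd ℂ z))) ∈ trigPolynomial := by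
  induction hg using Submodule.span_induction with
  | mem _ h =>
    obtain ⟨k, rfl⟩ := h
    simpa only [conj_fourierExp_conj] using fourierExp_mem_trigPolynomial (-k)
  | zero => simpa using const_mem_trigPolynomial 0
  | add f g _ _ hf hg =>
    convert add_mem hf hg using 1
    ext z
    simp
  | smul c f _ hf =>
    convert trigPolynomial.smul_mem (starRingEnd ℂ c) hf using 1
    ext z
    simp

lemma exists_pow_mul_eq_eval_of_mem_trigPolynomial (hg : g ∈ trigPolynomial) :
    ∃ (N : ℕ) (P : ℂ[X]), ∀ z, fourierExp 1 z ^ N * g z = P.eval (fourierExp 1 z) := by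
  induction hg using Submodule.span_induction with
  | mem _ h =>
    obtain ⟨k, rfl⟩ := h
    refine ⟨k.natAbs, X ^ (k.natAbs + k).toNat, fun z => ?_⟩
    rw [fourierExp_eq_zpow k, eval_pow, eval_X, ← zpow_natCast, ← zpow_natCast,
      ← zpow_add₀ (fourierExp_ne_zero 1 z), Int.toNat_of_nonneg (by omega)]
  | zero => exact ⟨0, 0, by simp⟩
  | add f g _ _ hf hg =>
    obtain ⟨N, P, hP⟩ := hf
    obtain ⟨M, Q, hQ⟩ := hg
    refine ⟨N + M, X ^ M * P + X ^ N * Q, fun z => ?_⟩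
    simp only [eval_add, eval_mul, eval_pow, eval_X, ← hP, ← hQ, Pi.add_apply]
    ring
  | smul c f _ hf =>
    obtain ⟨N, P, hP⟩ := hf
    refine ⟨N, C c * P, fun z => ?_⟩
    simp only [eval_mul, eval_C, ← hP, Pi.smul_apply, smul_eq_mul]
    ring

lemma exists_eq_mul_fourierExp_of_forall_ne_zero (hg : g ∈ trigPolynomial) (h0 : ∀ z, g z ≠ 0) :
    ∃ (c : ℂ) (k : ℤ), ∀ z, g z = c * fourierExp k z := by
  obtain ⟨N, P, hP⟩ := exists_pow_mul_eq_eval_of_mem_trigPolynomial hg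
  have hP0 : ∀ w ≠ 0, P.eval w ≠ 0 := by
    intro w hw
    obtain ⟨z, rfl⟩ := exists_fourierExp_one_eq hw
    rw [← hP]
    exact mul_ne_zero (pow_ne_zero N hw) (h0 z)
  obtain ⟨c, m, rfl⟩ := eq_C_mul_X_pow_of_forall_eval_ne_zero hP0
  refine ⟨c, m - N, fun z => mul_left_cancel₀ (pow_ne_zero N (fourierExp_ne_zero 1 z)) ?_⟩
  rw [hP, fourierExp_eq_zpow (m - N), zpow_sub₀ (fourierExp_ne_zero 1 z), zpow_natCast,
    zpow_natCast, eval_mul, eval_C, eval_pow, eval_X, mul_left_comm,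
    mul_div_cancel₀ _ (pow_ne_zero N (fourierExp_ne_zero 1 z))]

lemma eq_integral_of_forall_ne_zero (hg : g ∈ trigPolynomial) (h0 : ∀ z, g z ≠ 0)
    (hint : ∫ x in (0 : ℝ)..1, g x ≠ 0) (z : ℂ) : g z = ∫ x in (0 : ℝ)..1, g x := by
  obtain ⟨c, k, hck⟩ := exists_eq_mul_fourierExp_of_forall_ne_zero hg h0
  simp only [hck, intervalIntegral.integral_const_mul] at hint ⊢
  obtain rfl : k = 0 := by_contra fun hk => right_ne_zero_of_mul hint (integral_fourierExp hk)
  simp [fourierExp_zero]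

lemma integral_one_add_deriv (hg : g ∈ trigPolynomial) :
    ∫ x in (0 : ℝ)..1, (1 + deriv g x) = 1 := by
  have hderiv (x : ℝ) : HasDerivAt (fun y : ℝ => (y : ℂ) + g y) (1 + deriv g x) x :=
    ((hasDerivAt_id (x : ℂ)).add
      (differentiable_of_mem_trigPolynomial hg x).hasDerivAt).comp_ofReal
  have hcont : Continuous (deriv g) :=
    (differentiable_of_mem_trigPolynomial (deriv_mem_trigPolynomial hg)).continuous
  have hper : g 1 = g 0 := by simpa using periodic_of_mem_trigPolynomial hg 0
  rw [intervalIntegral.integral_eq_sub_of_hasDerivAt (fun x _ => hderiv x)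
    ((continuous_const.add (hcont.comp Complex.continuous_ofReal)).intervalIntegrable 0 1)]
  simp [hper]

lemma deriv_eq_zero_of_forall_one_add_deriv_ne_zero (hg : g ∈ trigPolynomial)
    (h0 : ∀ z, 1 + deriv g z ≠ 0) (z : ℂ) : deriv g z = 0 := by
  have hmem : (fun z => 1 + deriv g z) ∈ trigPolynomial :=
    add_mem (const_mem_trigPolynomial 1) (deriv_mem_trigPolynomial hg)
  have hconst := eq_integral_of_forall_ne_zero hmem h0 (by simp [integral_one_add_deriv hg]) z
  rwa [integral_one_add_deriv hg, add_eq_left] at hconst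

end trigPolynomial

/-- A real function is a trigonometric polynomial of period `1` if it extends to an element of
`trigPolynomial`. -/
def IsTrigPolynomial (ψ : ℝ → ℝ) : Prop := ∃ g ∈ trigPolynomial, ∀ x : ℝ, g x = ψ x

lemma isTrigPolynomial_re {g : ℂ → ℂ} (hg : g ∈ trigPolynomial) :
    IsTrigPolynomial fun x => (g x).re := by
  refine ⟨_, trigPolynomial.smul_mem (1 / 2)
    (add_mem hg (conj_conj_mem_trigPolynomial hg)), fun x => ?_⟩
  simp only [Pi.smul_apply, Pi.add_apply, Complex.conj_ofReal, Complex.add_conj, smul_eq_mul]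
  push_cast
  ring

namespace IsTrigPolynomial

variable {ψ : ℝ → ℝ}

lemma const_add (hψ : IsTrigPolynomial ψ) (c : ℝ) : IsTrigPolynomial fun x => c + ψ x := by
  obtain ⟨g, hg, hgψ⟩ := hψ
  exact ⟨_, add_mem (const_mem_trigPolynomial c) hg, fun x => by simp [hgψ]⟩

lemma const_mul (hψ : IsTrigPolynomial ψ) (c : ℝ) : IsTrigPolynomial fun x => c * ψ x := by
  obtain ⟨g, hg, hgψ⟩ := hψ
  exact ⟨_, trigPolynomial.smul_mem (c : ℂ) hg, fun x => by simp [hgψ]⟩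

lemma contDiff (hψ : IsTrigPolynomial ψ) {n : WithTop ℕ∞} : ContDiff ℝ n ψ := by
  obtain ⟨g, hg, hgψ⟩ := hψ
  have hre : ContDiff ℝ n fun x : ℝ => (g x).re :=
    (differentiable_of_mem_trigPolynomial hg).contDiff.real_of_complex
  simpa only [hgψ, Complex.ofReal_re] using hre

lemma differentiable (hψ : IsTrigPolynomial ψ) : Differentiable ℝ ψ :=
  hψ.contDiff.differentiable one_ne_zero

lemma periodic (hψ : IsTrigPolynomial ψ) : Periodic ψ 1 := by
  obtain ⟨g, hg, hgψ⟩ := hψ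
  intro x
  have := periodic_of_mem_trigPolynomial hg x
  rw [← Complex.ofReal_one, ← Complex.ofReal_add, hgψ, hgψ] at this
  exact_mod_cast this

lemma exists_hasDerivAt_sub_const (hψ : IsTrigPolynomial ψ) :
    ∃ (a : ℝ) (Ψ : ℝ → ℝ), IsTrigPolynomial Ψ ∧ ∀ x, HasDerivAt Ψ (ψ x - a) x := by
  obtain ⟨g, hg, hgψ⟩ := hψ
  obtain ⟨a, G, hG, hG'⟩ := exists_hasDerivAt_sub_const_of_mem_trigPolynomial hg
  refine ⟨a.re, _, isTrigPolynomial_re hG, fun x => (hG' x).real_of_complex.congr_deriv ?_⟩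
  rw [hgψ, Complex.sub_re, Complex.ofReal_re]

theorem iterate_id_add_ne_add_const (hψ : IsTrigPolynomial ψ) {x₀ : ℝ} (hx₀ : deriv ψ x₀ ≠ 0)
    {q : ℕ} (hq : q ≠ 0) (t : ℝ) : (fun x => x + ψ x)^[q] ≠ fun x => x + t := by
  intro hpinch
  have hψd := (hψ.differentiable x₀).hasDerivAt
  obtain ⟨g, hg, hgψ⟩ := hψ
  have hgd := differentiable_of_mem_trigPolynomial hg
  set F : ℂ → ℂ := fun z => z + g z with hF
  have hFd : Differentiable ℂ F := differentiable_id.add hgd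
  have hsemiconj : Semiconj ((↑) : ℝ → ℂ) (fun x => x + ψ x) F := fun x => by simp [hF, hgψ]
  have hFq : F^[q] = fun z => z + (t : ℂ) :=
    eq_of_forall_ofReal_eq_s6 (hFd.iterate q) (by fun_prop) fun x => by
      rw [← (hsemiconj.iterate_right q).eq, hpinch, Complex.ofReal_add]
  have hF' (z : ℂ) : 1 + deriv g z ≠ 0 := by
    have := deriv_ne_zero_of_deriv_iterate_ne_zero hFd hq (z := z) (by simp [hFq])
    rwa [hF, deriv_fun_add differentiableAt_fun_id (hgd z), deriv_id''] at this
  have hg' := (hgd x₀).hasDerivAt.comp_ofReal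
  rw [deriv_eq_zero_of_forall_one_add_deriv_ne_zero hg hF'] at hg'
  simp only [hgψ] at hg'
  exact hx₀ (by exact_mod_cast hψd.ofReal_comp.unique hg')

end IsTrigPolynomial

lemma exists_mem_trigPolynomial_eq_of_mem_span_fourier {f : C(UnitAddCircle, ℂ)}
    (hf : f ∈ Submodule.span ℂ (range (@fourier 1))) :
    ∃ g ∈ trigPolynomial, ∀ x : ℝ, g x = f x := by
  induction hf using Submodule.span_induction with
  | mem _ h =>
    obtain ⟨k, rfl⟩ := h
    exact ⟨fourierExp k, fourierExp_mem_trigPolynomial k, fun x => by simp [fourierExp]⟩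
  | zero => exact ⟨0, zero_mem _, fun _ => rfl⟩
  | add _ _ _ _ hf hg =>
    obtain ⟨F, hF, hFf⟩ := hf
    obtain ⟨G, hG, hGg⟩ := hg
    exact ⟨F + G, add_mem hF hG, fun x => by simp [hFf, hGg]⟩
  | smul c _ _ hf =>
    obtain ⟨F, hF, hFf⟩ := hf
    exact ⟨c • F, trigPolynomial.smul_mem c hF, fun x => by simp [hFf]⟩

section Approximation

variable {φ : ℝ → ℝ} {r : ℕ} {ε : ℝ}

lemma exists_isTrigPolynomial_abs_sub_lt (hφ : Continuous φ) (hper : Periodic φ 1) (hε : 0 < ε) :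
    ∃ T, IsTrigPolynomial T ∧ ∀ x, |φ x - T x| < ε := by
  have hperℂ : Periodic (fun x => (φ x : ℂ)) 1 := hper.comp Complex.ofReal
  let f : C(UnitAddCircle, ℂ) :=
    ⟨hperℂ.lift, continuous_coinduced_dom.2 (Complex.continuous_ofReal.comp hφ)⟩
  have hf : f ∈ closure (Submodule.span ℂ (range (@fourier 1)) : Set C(UnitAddCircle, ℂ)) := by
    rw [← Submodule.topologicalClosure_coe, span_fourier_closure_eq_top]
    trivial
  obtain ⟨h, hh, hfh⟩ := Metric.mem_closure_iff.1 hf ε hε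
  obtain ⟨g, hg, hgh⟩ := exists_mem_trigPolynomial_eq_of_mem_span_fourier hh
  refine ⟨_, isTrigPolynomial_re hg, fun x => ?_⟩
  calc |φ x - (g x).re| = |((φ x : ℂ) - g x).re| := by simp
    _ ≤ ‖(φ x : ℂ) - g x‖ := Complex.abs_re_le_norm _
    _ = dist (f x) (h x) := by rw [hgh, dist_eq_norm]; rfl
    _ ≤ dist f h := ContinuousMap.dist_apply_le_dist _
    _ < ε := hfh

lemma exists_isTrigPolynomial_of_abs_deriv_sub_le (hφ : Differentiable ℝ φ) (hper : Periodic φ 1)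
    {S : ℝ → ℝ} (hS : IsTrigPolynomial S) (hφS : ∀ x, |deriv φ x - S x| ≤ ε) :
    ∃ T, IsTrigPolynomial T ∧ (∀ x, |φ x - T x| ≤ 2 * ε) ∧
      ∃ a, |a| ≤ ε ∧ deriv (φ - T) = fun x => a + (deriv φ - S) x := by
  obtain ⟨a, Ψ, hΨ, hΨ'⟩ := hS.exists_hasDerivAt_sub_const
  set T : ℝ → ℝ := fun x => (φ 0 - Ψ 0) + Ψ x with hT_def
  have hT : IsTrigPolynomial T := hΨ.const_add _
  have hper' : Periodic (φ - T) 1 := hper.sub hT.periodic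
  have hderiv (x : ℝ) : HasDerivAt (φ - T) (a + (deriv φ - S) x) x :=
    ((hφ x).hasDerivAt.sub ((hΨ' x).const_add _)).congr_deriv (by rw [Pi.sub_apply]; ring)
  have ha : |a| ≤ ε := abs_le_of_periodic_of_hasDerivAt_const_add one_pos hper' hderiv hφS
  refine ⟨T, hT, fun x => ?_, a, ha, funext fun x => (hderiv x).deriv⟩
  have hbound (x : ℝ) : ‖a + (deriv φ - S) x‖ ≤ 2 * ε :=
    (norm_add_le _ _).trans ((add_le_add ha (hφS x)).trans_eq (two_mul ε).symm)
  have h0 : (φ - T) 0 = 0 := by simp [hT_def]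
  have hsub := norm_sub_le_of_periodic one_pos hper' hderiv hbound x
  rwa [h0, sub_zero, mul_one] at hsub

theorem exists_isTrigPolynomial_abs_iteratedDeriv_sub_le (hφ : ContDiff ℝ r φ)
    (hper : Periodic φ 1) (hε : 0 < ε) :
    ∃ T, IsTrigPolynomial T ∧ ∀ i ≤ r, ∀ x, |iteratedDeriv i (φ - T) x| ≤ ε := by
  induction r generalizing φ ε with
  | zero =>
    obtain ⟨T, hT, hφT⟩ := exists_isTrigPolynomial_abs_sub_lt hφ.continuous hper hε
    refine ⟨T, hT, fun i hi x => ?_⟩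
    rw [Nat.le_zero.1 hi, iteratedDeriv_zero]
    exact (hφT x).le
  | succ r ih =>
    rw [Nat.cast_succ, contDiff_succ_iff_deriv] at hφ
    obtain ⟨hφd, -, hφ'⟩ := hφ
    obtain ⟨S, hS, hφS⟩ := ih hφ' (periodic_deriv hper) (half_pos hε)
    obtain ⟨T, hT, hφT, a, ha, hderiv⟩ := exists_isTrigPolynomial_of_abs_deriv_sub_le hφd hper hS
      fun x => by simpa only [iteratedDeriv_zero, Pi.sub_apply] using hφS 0 r.zero_le x
    refine ⟨T, hT, fun i hi x => ?_⟩
    cases i with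
    | zero => simpa [mul_div_cancel₀] using hφT x
    | succ i =>
      rw [iteratedDeriv_succ', hderiv]
      calc |iteratedDeriv i (fun y => a + (deriv φ - S) y) x|
          ≤ |a| + |iteratedDeriv i (deriv φ - S) x| := norm_iteratedDeriv_const_add_le i a _ x
        _ ≤ ε / 2 + ε / 2 := add_le_add ha (hφS i (Nat.le_of_succ_le_succ hi) x)
        _ = ε := add_halves ε

end Approximation

theorem exists_isTrigPolynomial_isLeast_range_deriv {φ : ℝ → ℝ} {r : ℕ} {ε : ℝ} (hr : r ≠ 0)
    (hφ : ContDiff ℝ r φ) (hper : Periodic φ 1) (hmin : IsLeast (range (deriv φ)) (-1))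
    (hε : 0 < ε) :
    ∃ ψ, IsTrigPolynomial ψ ∧ IsLeast (range (deriv ψ)) (-1) ∧
      ∀ i ≤ r, ∀ x, |iteratedDeriv i (φ - ψ) x| ≤ ε := by
  obtain ⟨M, hM⟩ := exists_forall_norm_iteratedDeriv_le hφ hper one_ne_zero
  have hM0 : 0 ≤ M := (norm_nonneg _).trans (hM 0 r.zero_le 0)
  obtain ⟨δ, hδ0, hδ⟩ := exists_pos_mul_lt (lt_min hε one_pos) (2 * (1 + M))
  obtain ⟨hδε, hδ1⟩ := lt_min_iff.1 hδ
  have hδ2 : δ ≤ 1 / 2 := by nlinarith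
  obtain ⟨T, hT, hφT⟩ := exists_isTrigPolynomial_abs_iteratedDeriv_sub_le hφ hper hδ0
  obtain ⟨m, hm⟩ := ((periodic_deriv hT.periodic).compact_of_continuous one_ne_zero
    (hT.contDiff.continuous_deriv le_rfl)).exists_isLeast (range_nonempty _)
  have hclose (x : ℝ) : |deriv φ x - deriv T x| ≤ δ := by
    rw [← deriv_sub (hφ.differentiable (mod_cast hr) x) (hT.differentiable x), ← iteratedDeriv_one]
    exact hφT 1 (Nat.one_le_iff_ne_zero.2 hr) x
  have hm1 : |-m - 1| ≤ δ := by
    rw [← neg_sub_comm]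
    exact abs_sub_le_of_isLeast_range hmin hm hclose
  have hm0 : m ≠ 0 := by
    rintro rfl
    norm_num at hm1
    linarith
  have hc1 : |1 - (-m)⁻¹| ≤ 2 * δ := abs_one_sub_inv_le hm1 hδ2
  obtain ⟨hc2, hc0⟩ := abs_le.1 (hc1.trans (by linarith : 2 * δ ≤ 1))
  refine ⟨_, hT.const_mul (-m)⁻¹, ?_, fun i hi x => ?_⟩
  · convert isLeast_range_deriv_const_mul (by linarith : 0 ≤ (-m)⁻¹) hm using 1
    rw [inv_neg, neg_mul, inv_mul_cancel₀ hm0]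
  calc |iteratedDeriv i (φ - (-m)⁻¹ • T) x|
      ≤ |(-m)⁻¹| * |iteratedDeriv i (φ - T) x| + |1 - (-m)⁻¹| * |iteratedDeriv i φ x| :=
        norm_iteratedDeriv_sub_const_smul_le (hφ.of_le (mod_cast hi)).contDiffAt
          hT.contDiff.contDiffAt _
    _ ≤ 2 * δ + 2 * δ * M := by
        gcongr
        exacts [abs_le.2 ⟨by linarith, by linarith⟩, hφT i hi x, hM i hi x]
    _ ≤ ε := by linarith

theorem stmt6_general {r : ℕ} (hr : r ≠ 0) {φ : ℝ → ℝ} (hφ : ContDiff ℝ r φ) (hper : Periodic φ 1)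
    (hmin : IsLeast (range (deriv φ)) (-1)) {ε : ℝ} (hε : 0 < ε) :
    ∃ ψ, IsTrigPolynomial ψ ∧ IsLeast (range (deriv ψ)) (-1) ∧
      (∑ i ∈ Finset.range (r + 1), ⨆ x, |iteratedDeriv i (fun y => φ y - ψ y) x|) < ε ∧
      ∀ b : ℝ, b ≠ 0 → ∀ (ω : ℝ) (q : ℕ), q ≠ 0 → ∀ t : ℝ,
        (fun x => x + ω + b * ψ x)^[q] ≠ fun x => x + t := by
  obtain ⟨ψ, hψ, hψmin, hφψ⟩ := exists_isTrigPolynomial_isLeast_range_deriv hr hφ hper hmin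
    (show 0 < ε / (r + 2) by positivity)
  obtain ⟨x₀, hx₀⟩ := hψmin.1
  refine ⟨ψ, hψ, hψmin, ?_, fun b hb ω q hq t => ?_⟩
  · calc _ ≤ ∑ _i ∈ Finset.range (r + 1), ε / (r + 2) := Finset.sum_le_sum fun i hi =>
          ciSup_le (hφψ i (Nat.lt_succ_iff.1 (Finset.mem_range.1 hi)))
      _ = (r + 1) * (ε / (r + 2)) := by simp
      _ < (r + 2) * (ε / (r + 2)) := by gcongr; norm_num
      _ = ε := mul_div_cancel₀ ε (by positivity)
  · have hderiv : deriv (fun x => ω + b * ψ x) x₀ ≠ 0 := by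
      simpa [deriv_const_add, deriv_const_mul_field, hx₀] using hb
    simpa only [add_assoc] using
      ((hψ.const_mul b).const_add ω).iterate_id_add_ne_add_const hderiv hq t

/-- `C^r` density lemma: every standard-like `C^r` forcing (`r ≥ 1`) can be
`C^r`-approximated by a standard-like `C^r` forcing `ψ` whose family has no
`p/q`-pinch point with coupling `b ∈ [1/n, 1]`. -/
theorem stmt6 (r : ℕ) (hr : 1 ≤ r) (φ : ℝ → ℝ)
    (hφ : ContDiff ℝ r φ) (hper : ∀ x, φ (x + 1) = φ x)
    (hd1 : ∀ x : ℝ, -1 ≤ deriv φ x) (hd2 : ∃ x₀ : ℝ, deriv φ x₀ = -1)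
    (p : ℤ) (q : ℕ) (hq : 1 ≤ q) (hpq : Int.gcd p q = 1)
    (n : ℕ) (hn : 2 ≤ n) (ε : ℝ) (hε : 0 < ε) :
    ∃ ψ : ℝ → ℝ, ContDiff ℝ r ψ ∧ (∀ x, ψ (x + 1) = ψ x) ∧
      (∀ x : ℝ, -1 ≤ deriv ψ x) ∧ (∃ x₀ : ℝ, deriv ψ x₀ = -1) ∧
      (∑ i ∈ Finset.range (r + 1),
        ⨆ x : ℝ, |iteratedDeriv i (fun y => φ y - ψ y) x|) < ε ∧
      ∀ b : ℝ, 1 / (n : ℝ) ≤ b → b ≤ 1 → ∀ ω : ℝ,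
        (fun x => x + ω + b * ψ x)^[q] ≠ fun x => x + (p : ℝ) := by
  obtain ⟨ψ, hψ, hmin, hdist, hpinch⟩ := stmt6_general (Nat.one_le_iff_ne_zero.1 hr) hφ hper
    ⟨hd2, forall_mem_range.2 hd1⟩ hε
  exact ⟨ψ, hψ.contDiff, hψ.periodic, fun x => hmin.2 ⟨x, rfl⟩, hmin.1, hdist, fun b hb _ ω =>
    hpinch b (lt_of_lt_of_le (by positivity) hb).ne' ω q (Nat.one_le_iff_ne_zero.1 hq) p⟩
end

section
/- Let φ : ℝ → ℝ be Lipschitz and 1-periodic with essential infimum of deriv φ (with respect to Lebesgue measure) equal to −1. Let p, q be coprime integers with q ≥ 1, let n ≥ 2 be a natural number, and let ε > 0. Then there exists ψ : ℝ → ℝ, Lipschitz and 1-periodic, with essential infimum of deriv ψ equal to −1, such that sup_x |φ(x) − ψ(x)| + K(φ − ψ) < ε and for every b ∈ [1/n, 1] and every ω ∈ ℝ the q-th iterate of the map x ↦ x + ω + b·ψ(x) is not equal to x ↦ x + p. -/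
open MeasureTheory

/-- The least Lipschitz constant of `h : ℝ → ℝ`. -/
noncomputable def lipConst (h : ℝ → ℝ) : ℝ :=
  sInf {K : ℝ | 0 ≤ K ∧ ∀ x y : ℝ, |h x - h y| ≤ K * |x - y|}

/-!
The maps `f_{b,ω,φ}` with `f^q = R_p` are parametrised by the two numbers `b, ω`, while `φ` may be
perturbed in three independent directions. If `f` is `L`-Lipschitz and `f^q = R_p`, coprimality of
`p` and `q` keeps `f^i x` away from `x + ℤ` for `0 < i < q`, at a distance depending only on `L` and
`q`. Place three tents so close together that an orbit starting at one of their centres does not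
meet their supports again at times `0 < i < q`. If `F` and `G` are pinched lifts built with tent
heights `t` and `s`, the identity `F (R_p x) = R_p (F x)` compares `F x - G x` with the values of
`F - G` along the rest of the `G`-orbit, where only `b` and `ω` matter. Hence `t` depends in a
locally Lipschitz way on `(b, ω)`, the bad `t` form a set of Hausdorff dimension at most `2` in
`ℝ³`, and arbitrarily small good `t` exist. Rescaling by a factor close to `1` restores the
essential infimum `-1` of the derivative, and only changes `b`.
-/

open Set Function Filter Finset Module
open scoped NNReal

section Iterate

variable {X : Type*} [PseudoMetricSpace X] {F G : X → X} {L : ℝ≥0} {x : X} {D : ℝ} {n : ℕ}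

theorem dist_iterate_le_geom_sum (hF : LipschitzWith L F) (x : X) (n : ℕ) :
    dist x (F^[n] x) ≤ (∑ k ∈ range n, (L : ℝ) ^ k) * dist x (F x) :=
  calc dist x (F^[n] x) ≤ ∑ k ∈ range n, dist (F^[k] x) (F^[k + 1] x) :=
        dist_le_range_sum_dist (fun k => F^[k] x) n
    _ ≤ ∑ k ∈ range n, dist x (F x) * (L : ℝ) ^ k :=
        Finset.sum_le_sum fun k _ => hF.dist_iterate_succ_le_geometric x k
    _ = (∑ k ∈ range n, (L : ℝ) ^ k) * dist x (F x) := by rw [← mul_sum, mul_comm]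

theorem dist_iterate_iterate_le_geom_sum (hF : LipschitzWith L F)
    (hD : ∀ k < n, dist (F (G^[k] x)) (G (G^[k] x)) ≤ D) :
    dist (F^[n] x) (G^[n] x) ≤ (∑ k ∈ range n, (L : ℝ) ^ k) * D := by
  induction n with
  | zero => simp
  | succ n ih =>
    have ih := ih fun k hk => hD k (hk.trans n.lt_succ_self)
    rw [iterate_succ_apply', iterate_succ_apply', geom_sum_succ, add_mul, one_mul, mul_assoc]
    calc dist (F (F^[n] x)) (G (G^[n] x))
        ≤ dist (F (F^[n] x)) (F (G^[n] x)) + dist (F (G^[n] x)) (G (G^[n] x)) :=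
          dist_triangle _ _ _
      _ ≤ L * ((∑ k ∈ range n, (L : ℝ) ^ k) * D) + D :=
          add_le_add (hF.dist_le_mul_of_le ih) (hD n n.lt_succ_self)

theorem dist_apply_le_of_iterate_eq_isometry {T : X → X} (hT : Isometry T)
    (hF : LipschitzWith L F) (hFT : F^[n + 1] = T) (hGT : G^[n + 1] x = T x)
    (hD : ∀ k < n, dist (F (G^[k + 1] x)) (G (G^[k + 1] x)) ≤ D) :
    dist (F x) (G x) ≤ L * ((∑ k ∈ range n, (L : ℝ) ^ k) * D) := by
  have hTF : T (F x) = F (G^[n] (G x)) := by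
    rw [← iterate_succ_apply G, hGT, ← hFT, ← iterate_succ_apply F, ← iterate_succ_apply' F]
  have hTG : T (G x) = F (F^[n] (G x)) := by rw [← hFT, iterate_succ_apply']
  rw [← hT.dist_eq, hTF, hTG, dist_comm]
  exact hF.dist_le_mul_of_le (dist_iterate_iterate_le_geom_sum hF hD)

end Iterate

section Separation

variable {f : ℝ → ℝ} {L : ℝ≥0} {p : ℤ} {q i : ℕ}

theorem one_le_of_lipschitzWith_of_commute_add_one (hL : LipschitzWith L f)
    (hf : Function.Commute f (· + 1)) : 1 ≤ L := by
  have h := hL.dist_le_mul (0 + 1) 0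
  rw [show f (0 + 1) = f 0 + 1 from hf 0] at h
  simpa using h

theorem commute_add_intCast (hf : Function.Commute f (· + 1)) (j : ℤ) :
    Function.Commute f (· + (j : ℝ)) :=
  fun x => AddConstMapClass.map_add_int (AddConstMap.mk f hf) x j

theorem not_dvd_mul_of_lt (hpq : IsCoprime p q) (hi : 0 < i) (hiq : i < q) :
    ¬ (q : ℤ) ∣ i * p := fun h =>
  (Nat.le_of_dvd hi (Int.natCast_dvd_natCast.1 (hpq.symm.dvd_of_dvd_mul_right h))).not_gt hiq

/- With `j` the integer nearest to `f^i x - x`, the `q`-th iterate of `f^i - j` is the translation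
by the nonzero integer `i * p - q * j`. -/
theorem one_le_geom_sum_mul_dist_iterate (hL : LipschitzWith L f)
    (hf : Function.Commute f (· + 1)) (hpq : IsCoprime p q) (hfq : f^[q] = (· + (p : ℝ)))
    (hi : 0 < i) (hiq : i < q) (x : ℝ) :
    1 ≤ (∑ k ∈ range q, ((L : ℝ) ^ q) ^ k) * dist ((f^[i] x : ℝ) : UnitAddCircle) x := by
  set j : ℤ := round (f^[i] x - x) with hj
  set g : ℝ → ℝ := (· + ((-j : ℤ) : ℝ)) ∘ f^[i] with hg
  have hgL : LipschitzWith (L ^ q) g := by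
    have hLi : L ^ i ≤ L ^ q :=
      pow_le_pow_right₀ (one_le_of_lipschitzWith_of_commute_add_one hL hf) hiq.le
    exact one_mul (L ^ q) ▸
      (isometry_add_right _).lipschitz.comp ((hL.iterate i).weaken hLi)
  have hgq : g^[q] x = x + ((i * p - q * j : ℤ) : ℝ) := by
    rw [hg, ((commute_add_intCast hf (-j)).iterate_left i).symm.comp_iterate, ← iterate_mul,
      mul_comm i, iterate_mul, hfq]
    simp only [add_right_iterate, comp_apply]
    push_cast
    ring
  have hne : (i * p - q * j : ℤ) ≠ 0 := fun h =>
    not_dvd_mul_of_lt hpq hi hiq ⟨j, sub_eq_zero.1 h⟩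
  have hdist : dist ((f^[i] x : ℝ) : UnitAddCircle) x = dist x (g x) := by
    rw [dist_eq_norm, ← AddCircle.coe_sub, UnitAddCircle.norm_eq, ← hj, dist_comm, Real.dist_eq]
    congr 1
    simp only [hg, comp_apply]
    push_cast
    ring
  calc (1 : ℝ) ≤ |((i * p - q * j : ℤ) : ℝ)| := mod_cast Int.one_le_abs hne
    _ = dist x (g^[q] x) := by rw [hgq, dist_self_add_right, Real.norm_eq_abs]
    _ ≤ _ := by simpa only [hdist, NNReal.coe_pow] using dist_iterate_le_geom_sum hgL x q

end Separation

section Lift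

/-- The lift `f_{b,ω,φ}` associated with the forcing `φ`. -/
def circleLift (b ω : ℝ) (φ : ℝ → ℝ) (x : ℝ) : ℝ := x + ω + b * φ x

/-- `(b, ω)` is a `p/q`-pinch point of the family `f_{b,ω,φ}`: the `q`-th iterate of the lift is the
translation by `p`. -/
def IsPinchPoint (φ : ℝ → ℝ) (p : ℤ) (q : ℕ) (b ω : ℝ) : Prop :=
  (circleLift b ω φ)^[q] = (· + (p : ℝ))

variable {φ ψ : ℝ → ℝ} {K L : ℝ≥0} {M δ b b' ω ω' x : ℝ} {p : ℤ} {q : ℕ}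

theorem isPinchPoint_const_mul {c : ℝ} :
    IsPinchPoint (fun x => c * φ x) p q b ω ↔ IsPinchPoint φ p q (b * c) ω := by
  have : circleLift b ω (fun x => c * φ x) = circleLift (b * c) ω φ :=
    funext fun x => by simp only [circleLift, mul_assoc]
  rw [IsPinchPoint, IsPinchPoint, this]

theorem lipschitzWith_circleLift (hφ : LipschitzWith K φ) (b ω : ℝ) :
    LipschitzWith (1 + ‖b‖₊ * K) (circleLift b ω φ) := by
  have h := (LipschitzWith.id.add (.const ω)).add ((lipschitzWith_smul b).comp hφ)
  rwa [add_zero] at h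

theorem circleLift_commute_add_one (hφ : Periodic φ 1) (b ω : ℝ) :
    Function.Commute (circleLift b ω φ) (· + 1) := fun x => by
  simp only [circleLift, hφ x]
  ring

theorem circleLift_sub_circleLift (b b' ω ω' : ℝ) (φ ψ : ℝ → ℝ) (x : ℝ) :
    circleLift b ω φ x - circleLift b' ω' ψ x =
      b * (φ x - ψ x) + ((b - b') * ψ x + (ω - ω')) := by
  simp only [circleLift]
  ring

theorem abs_mul_abs_sub_le_of_isPinchPoint (hψ : Periodic ψ 1)
    (hLφ : LipschitzWith L (circleLift b ω φ)) (hLψ : LipschitzWith L (circleLift b' ω' ψ))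
    (hq : 0 < q) (hpq : IsCoprime p q)
    (hδ : (∑ k ∈ range q, ((L : ℝ) ^ q) ^ k) * δ ≤ 1)
    (heq : ∀ y : ℝ, δ ≤ dist (y : UnitAddCircle) x → φ y = ψ y) (hM : ∀ y, |ψ y| ≤ M)
    (hpφ : IsPinchPoint φ p q b ω) (hpψ : IsPinchPoint ψ p q b' ω') :
    |b| * |φ x - ψ x| ≤ (∑ k ∈ range q, (L : ℝ) ^ k) * (M * |b - b'| + |ω - ω'|) := by
  set D : ℝ := M * |b - b'| + |ω - ω'|
  have hD (y : ℝ) : |(b - b') * ψ y + (ω - ω')| ≤ D := by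
    refine (abs_add_le _ _).trans (add_le_add_left ?_ _)
    rw [abs_mul, mul_comm]
    exact mul_le_mul_of_nonneg_right (hM y) (abs_nonneg _)
  have hΛ : 0 < ∑ k ∈ range q, ((L : ℝ) ^ q) ^ k := geom_sum_pos (by positivity) hq.ne'
  have horbit (k : ℕ) (hk : 0 < k) (hkq : k < q) :
      φ ((circleLift b' ω' ψ)^[k] x) = ψ ((circleLift b' ω' ψ)^[k] x) :=
    heq _ <| le_of_mul_le_mul_left
      (hδ.trans <| one_le_geom_sum_mul_dist_iterate hLψ (circleLift_commute_add_one hψ b' ω')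
        hpq hpψ hk hkq x) hΛ
  obtain ⟨r, rfl⟩ := Nat.exists_eq_succ_of_ne_zero hq.ne'
  have hdist := dist_apply_le_of_iterate_eq_isometry (isometry_add_right (p : ℝ)) hLφ hpφ
    (congrFun hpψ x) (D := D) fun k hk => by
      rw [Real.dist_eq, circleLift_sub_circleLift, horbit (k + 1) k.succ_pos (by lia), sub_self,
        mul_zero, zero_add]
      exact hD _
  rw [Real.dist_eq] at hdist
  calc |b| * |φ x - ψ x|
      = |circleLift b ω φ x - circleLift b' ω' ψ x - ((b - b') * ψ x + (ω - ω'))| := by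
        rw [← abs_mul, circleLift_sub_circleLift, add_sub_cancel_right]
    _ ≤ L * ((∑ k ∈ range r, (L : ℝ) ^ k) * D) + D :=
        (abs_sub _ _).trans (add_le_add hdist (hD x))
    _ = (∑ k ∈ range (r + 1), (L : ℝ) ^ k) * D := by rw [geom_sum_succ]; ring

end Lift

section Tent

variable {X ι : Type*} [PseudoMetricSpace X] [Fintype ι] {w : ℝ} {a x : X} {c : ι → X} {t : ι → ℝ}

/-- The tent function of height `w` and slope `1` centred at `a`. -/
noncomputable def tent (w : ℝ) (a x : X) : ℝ := max 0 (w - dist x a)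

theorem lipschitzWith_tent (w : ℝ) (a : X) : LipschitzWith 1 (tent w a) := by
  have h := ((LipschitzWith.const w).sub (LipschitzWith.dist_left a)).const_max 0
  rwa [zero_add] at h

theorem abs_tent_le (hw : 0 ≤ w) (a x : X) : |tent w a x| ≤ w := by
  rw [abs_of_nonneg (le_max_left _ _)]
  exact max_le hw (sub_le_self w dist_nonneg)

theorem tent_self (hw : 0 ≤ w) (a : X) : tent w a a = w := by
  simp [tent, hw]

theorem tent_eq_zero (h : w ≤ dist x a) : tent w a x = 0 :=
  max_eq_left (sub_nonpos.2 h)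

/-- The combination with coefficients `t` of the tents centred at the points `c i`. -/
noncomputable def tentSum (w : ℝ) (c : ι → X) (t : ι → ℝ) (x : X) : ℝ :=
  ∑ i, t i * tent w (c i) x

theorem lipschitzWith_tentSum (w : ℝ) (c : ι → X) (t : ι → ℝ) :
    LipschitzWith (Fintype.card ι * ‖t‖₊) (tentSum w c t) := by
  refine .of_dist_le_mul fun x y => ?_
  calc dist (tentSum w c t x) (tentSum w c t y)
      ≤ ∑ i, dist (t i * tent w (c i) x) (t i * tent w (c i) y) := dist_sum_sum_le _ _ _
    _ ≤ ∑ _i : ι, ‖t‖ * dist x y := Finset.sum_le_sum fun i _ => by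
        rw [Real.dist_eq, ← mul_sub, abs_mul]
        gcongr
        · exact norm_le_pi_norm t i
        · simpa [Real.dist_eq] using (lipschitzWith_tent w (c i)).dist_le_mul x y
    _ = _ := by simp [mul_assoc]

theorem abs_tentSum_le (hw : 0 ≤ w) (c : ι → X) (t : ι → ℝ) (x : X) :
    |tentSum w c t x| ≤ Fintype.card ι * ‖t‖ * w :=
  calc |tentSum w c t x| ≤ ∑ i, |t i * tent w (c i) x| := abs_sum_le_sum_abs _ _
    _ ≤ ∑ _i : ι, ‖t‖ * w := Finset.sum_le_sum fun i _ => by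
        rw [abs_mul]
        gcongr
        · exact norm_le_pi_norm t i
        · exact abs_tent_le hw _ _
    _ = _ := by simp [mul_assoc]

theorem tentSum_apply_center (hw : 0 ≤ w) (hc : Pairwise fun i j => w ≤ dist (c i) (c j))
    (t : ι → ℝ) (i : ι) : tentSum w c t (c i) = t i * w := by
  rw [tentSum, Finset.sum_eq_single i _ (by simp), tent_self hw]
  exact fun j _ hji => by rw [tent_eq_zero (hc hji.symm), mul_zero]

theorem tentSum_eq_zero (h : ∀ i, w ≤ dist x (c i)) (t : ι → ℝ) : tentSum w c t x = 0 :=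
  Finset.sum_eq_zero fun i _ => by rw [tent_eq_zero (h i), mul_zero]

end Tent

section Circle

theorem lipschitzWith_coe_unitAddCircle : LipschitzWith 1 ((↑) : ℝ → UnitAddCircle) :=
  .of_dist_le_mul fun x y => by
    rw [dist_eq_norm, dist_eq_norm, ← AddCircle.coe_sub, NNReal.coe_one, one_mul]
    exact QuotientAddGroup.norm_mk_le_norm

theorem dist_coe_unitAddCircle_of_abs_sub_le {x y : ℝ} (h : |x - y| ≤ 1 / 2) :
    dist (x : UnitAddCircle) y = |x - y| := by
  rw [dist_eq_norm, ← AddCircle.coe_sub, AddCircle.norm_coe_eq_abs_iff 1 one_ne_zero]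
  simpa using h

theorem exists_separated_cluster (n : ℕ) {δ : ℝ} (hδ : 0 < δ) :
    ∃ w > 0, w ≤ 1 ∧ ∃ c : Fin n → UnitAddCircle, (Pairwise fun i j => w ≤ dist (c i) (c j)) ∧
      ∀ x i j, δ ≤ dist x (c i) → w ≤ dist x (c j) := by
  set w : ℝ := min δ (1 / 2) / (n + 1) with hw
  have hw0 : 0 < w := by positivity
  have hnw : (n + 1) * w = min δ (1 / 2) := by rw [hw]; field_simp
  have hδw : (n + 1) * w ≤ δ := hnw.trans_le (min_le_left _ _)
  have hw2 : (n + 1) * w ≤ 1 / 2 := hnw.trans_le (min_le_right _ _)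
  have hsub (i j : Fin n) : |(i : ℝ) * w - (j : ℝ) * w| ≤ n * w := by
    rw [← sub_mul, abs_mul, abs_of_pos hw0]
    gcongr
    exact (abs_sub_lt_of_nonneg_of_lt (by positivity) (mod_cast i.2) (by positivity)
      (mod_cast j.2)).le
  have hdist (i j : Fin n) : dist (((i : ℝ) * w : ℝ) : UnitAddCircle) ((j : ℝ) * w : ℝ) =
      |(i : ℝ) * w - (j : ℝ) * w| :=
    dist_coe_unitAddCircle_of_abs_sub_le ((hsub i j).trans (by linarith))
  refine ⟨w, hw0, by nlinarith, fun i => ((i : ℝ) * w : ℝ), fun i j hij => ?_,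
    fun x i j hx => ?_⟩
  · have hone : (1 : ℝ) ≤ |(i : ℝ) - j| := by
      have hne : (i : ℤ) - j ≠ 0 := sub_ne_zero.2 (by simpa [Fin.val_inj] using hij)
      exact_mod_cast Int.one_le_abs hne
    simp only [hdist]
    rw [← sub_mul, abs_mul, abs_of_pos hw0]
    exact le_mul_of_one_le_left hw0.le hone
  · have := dist_triangle_right x (((i : ℝ) * w : ℝ) : UnitAddCircle) ((j : ℝ) * w : ℝ)
    linarith [hsub i j, hdist i j]

end Circle

section Dimension

variable {X Y : Type*} [MetricSpace X] [MetricSpace Y] {R : X → Y → Prop} {C : ℝ≥0}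

theorem dimH_setOf_exists_le (h : ∀ x x' y y', R x y → R x' y' → dist x x' ≤ C * dist y y') :
    dimH {x | ∃ y, R x y} ≤ dimH (univ : Set Y) := by
  choose τ hτ using fun x : {x | ∃ y, R x y} => x.2
  have hanti : AntilipschitzWith C τ :=
    .of_le_mul_dist fun x x' => h _ _ _ _ (hτ x) (hτ x')
  calc dimH {x | ∃ y, R x y} = dimH (univ : Set {x | ∃ y, R x y}) := by
        rw [← Isometry.dimH_image (f := Subtype.val) isometry_subtype_coe, image_univ,
          Subtype.range_coe]
    _ ≤ dimH (τ '' univ) := hanti.le_dimH_image univ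
    _ ≤ dimH (univ : Set Y) := dimH_mono (subset_univ _)

theorem dimH_setOf_exists_le_of_weight {ν : Y → ℝ}
    (h : ∀ x x' y y', R x y → R x' y' → ν y * dist x x' ≤ C * dist y y') :
    dimH {x | ∃ y, 0 < ν y ∧ R x y} ≤ dimH (univ : Set Y) := by
  have hcover : {x | ∃ y, 0 < ν y ∧ R x y} ⊆
      ⋃ n : ℕ, {x | ∃ y, 1 / ((n : ℝ) + 1) < ν y ∧ R x y} := by
    rintro x ⟨y, hy, hxy⟩
    obtain ⟨n, hn⟩ := exists_nat_one_div_lt hy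
    exact mem_iUnion.2 ⟨n, y, hn, hxy⟩
  refine (dimH_mono hcover).trans ((dimH_iUnion _).trans_le (iSup_le fun n => ?_))
  refine dimH_setOf_exists_le (C := (n + 1) * C) ?_
  rintro x x' y y' ⟨hy, hxy⟩ ⟨-, hxy'⟩
  have hle : 1 / ((n : ℝ) + 1) * dist x x' ≤ C * dist y y' :=
    (mul_le_mul_of_nonneg_right hy.le dist_nonneg).trans (h x x' y y' hxy hxy')
  rwa [div_mul_eq_mul_div, one_mul, div_le_iff₀ (by positivity), mul_comm, ← mul_assoc] at hle

end Dimension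

section Perturbation

variable {ι : Type*} [Fintype ι] {φ : ℝ → ℝ} {K L M : ℝ≥0} {w δ b b' ω ω' : ℝ}
  {c : ι → UnitAddCircle} {t s : ι → ℝ} {p : ℤ} {q : ℕ}

/-- The forcing `φ` with tents of height `t i * w` added at the points `c i` of the circle. -/
noncomputable def addTents (φ : ℝ → ℝ) (w : ℝ) (c : ι → UnitAddCircle) (t : ι → ℝ) (x : ℝ) : ℝ :=
  φ x + tentSum w c t x

theorem periodic_addTents (hφ : Periodic φ 1) (w : ℝ) (c : ι → UnitAddCircle) (t : ι → ℝ) :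
    Periodic (addTents φ w c t) 1 := fun x => by
  rw [addTents, addTents, hφ x, AddCircle.coe_add_period]

theorem lipschitzWith_tentSum_coe (w : ℝ) (c : ι → UnitAddCircle) (t : ι → ℝ) :
    LipschitzWith (Fintype.card ι * ‖t‖₊) fun x : ℝ => tentSum w c t (x : UnitAddCircle) :=
  mul_one (Fintype.card ι * ‖t‖₊) ▸
    (lipschitzWith_tentSum w c t).comp lipschitzWith_coe_unitAddCircle

theorem abs_mul_dist_le_of_isPinchPoint_addTents (hφ : Periodic φ 1) (hq : 0 < q)
    (hpq : IsCoprime p q) (hδ : (∑ k ∈ range q, ((L : ℝ) ^ q) ^ k) * δ ≤ 1) (hw : 0 ≤ w)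
    (hc : Pairwise fun i j => w ≤ dist (c i) (c j))
    (hfar : ∀ x i j, δ ≤ dist x (c i) → w ≤ dist x (c j))
    (hLt : LipschitzWith L (circleLift b ω (addTents φ w c t)))
    (hLs : LipschitzWith L (circleLift b' ω' (addTents φ w c s)))
    (hM : ∀ x, |addTents φ w c s x| ≤ M)
    (hpt : IsPinchPoint (addTents φ w c t) p q b ω)
    (hps : IsPinchPoint (addTents φ w c s) p q b' ω') :
    |b| * w * dist t s ≤ (∑ k ∈ range q, (L : ℝ) ^ k) * (M * |b - b'| + |ω - ω'|) := by
  have hcoord (i : ι) : |b| * w * |t i - s i| ≤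
      (∑ k ∈ range q, (L : ℝ) ^ k) * (M * |b - b'| + |ω - ω'|) := by
    obtain ⟨x, hx⟩ := QuotientAddGroup.mk_surjective (c i)
    have hdiff : addTents φ w c t x - addTents φ w c s x = w * (t i - s i) := by
      rw [addTents, addTents, hx, tentSum_apply_center hw hc, tentSum_apply_center hw hc]
      ring
    have h := abs_mul_abs_sub_le_of_isPinchPoint (x := x) (periodic_addTents hφ w c s) hLt hLs hq
      hpq hδ (fun y hy => ?_) hM hpt hps
    · rwa [hdiff, abs_mul, abs_of_nonneg hw, ← mul_assoc] at h
    · have hzero (j : ι) : w ≤ dist (y : UnitAddCircle) (c j) := hfar y i j (hx ▸ hy)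
      rw [addTents, addTents, tentSum_eq_zero hzero, tentSum_eq_zero hzero]
  have hnorm : |b| * w * dist t s = ‖(|b| * w) • (t - s)‖ := by
    rw [norm_smul, Real.norm_of_nonneg (by positivity), dist_eq_norm]
  rw [hnorm, pi_norm_le_iff_of_nonneg (by positivity)]
  intro i
  simpa [abs_mul, abs_of_nonneg hw] using hcoord i

theorem lipschitzWith_circleLift_addTents (hφ : LipschitzWith K φ) {B : ℝ≥0} (hb : |b| ≤ B)
    (ht : ‖t‖ ≤ 1) (ω w : ℝ) (c : ι → UnitAddCircle) :
    LipschitzWith (1 + B * (K + Fintype.card ι)) (circleLift b ω (addTents φ w c t)) := by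
  refine (lipschitzWith_circleLift (hφ.add (lipschitzWith_tentSum_coe w c t)) b ω).weaken ?_
  have hb' : ‖b‖₊ ≤ B := hb
  have ht' : ‖t‖₊ ≤ 1 := ht
  gcongr
  exact mul_le_of_le_one_right' ht'

theorem abs_addTents_le (hφ : ∀ x, |φ x| ≤ M) (hw : 0 ≤ w) (hw1 : w ≤ 1) (ht : ‖t‖ ≤ 1)
    (c : ι → UnitAddCircle) (x : ℝ) :
    |addTents φ w c t x| ≤ (M + Fintype.card ι : ℝ≥0) := by
  have htents : |tentSum w c t (x : UnitAddCircle)| ≤ Fintype.card ι := by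
    refine (abs_tentSum_le hw c t x).trans ?_
    rw [mul_assoc]
    exact mul_le_of_le_one_right (Nat.cast_nonneg _) (mul_le_one₀ ht hw hw1)
  push_cast
  exact (abs_add_le _ _).trans (add_le_add (hφ x) htents)

theorem exists_abs_le_of_periodic {c : ℝ} (hφ : Periodic φ c) (hc : c ≠ 0) (hcont : Continuous φ) :
    ∃ M : ℝ≥0, ∀ x, |φ x| ≤ M := by
  obtain ⟨M, hM⟩ := (hφ.isBounded_of_continuous hc hcont).exists_norm_le
  exact ⟨M.toNNReal, fun x => (hM _ (mem_range_self x)).trans M.le_coe_toNNReal⟩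

theorem exists_dimH_setOf_isPinchPoint_addTents_le_two (hφ : LipschitzWith K φ)
    (hper : Periodic φ 1) (hq : 0 < q) (hpq : IsCoprime p q) (B : ℝ≥0) (n : ℕ) :
    ∃ w, 0 ≤ w ∧ w ≤ 1 ∧ ∃ c : Fin n → UnitAddCircle,
      dimH {t | ‖t‖ ≤ 1 ∧
        ∃ b ω : ℝ, b ≠ 0 ∧ |b| ≤ B ∧ IsPinchPoint (addTents φ w c t) p q b ω} ≤ 2 := by
  obtain ⟨M, hM⟩ := exists_abs_le_of_periodic hper one_ne_zero hφ.continuous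
  set L : ℝ≥0 := 1 + B * (K + Fintype.card (Fin n))
  set M' : ℝ≥0 := M + Fintype.card (Fin n)
  have hΛ : 0 < ∑ k ∈ range q, ((L : ℝ) ^ q) ^ k := geom_sum_pos (by positivity) hq.ne'
  obtain ⟨w, hw, hw1, c, hc, hfar⟩ := exists_separated_cluster n (inv_pos.2 hΛ)
  refine ⟨w, hw.le, hw1, c, ?_⟩
  have hplane : dimH (univ : Set (ℝ × ℝ)) = 2 := by
    simp [Real.dimH_univ_eq_finrank]
  rw [← hplane]
  refine (dimH_mono ?_).trans (dimH_setOf_exists_le_of_weight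
    (R := fun t (y : ℝ × ℝ) =>
      ‖t‖ ≤ 1 ∧ |y.1| ≤ B ∧ IsPinchPoint (addTents φ w c t) p q y.1 y.2)
    (ν := fun y => |y.1| * w) (C := (∑ k ∈ range q, L ^ k) * (M' + 1)) ?_)
  · rintro t ⟨ht, b, ω, hb, hbB, hpinch⟩
    exact ⟨(b, ω), mul_pos (abs_pos.2 hb) hw, ht, hbB, hpinch⟩
  · rintro t s ⟨b, ω⟩ ⟨b', ω'⟩ ⟨ht, hb, hpt⟩ ⟨hs, hb', hps⟩
    have hdist_b : |b - b'| ≤ dist (b, ω) (b', ω') := le_max_left _ _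
    have hdist_ω : |ω - ω'| ≤ dist (b, ω) (b', ω') := le_max_right _ _
    push_cast
    calc |b| * w * dist t s
        ≤ (∑ k ∈ range q, (L : ℝ) ^ k) * (M' * |b - b'| + |ω - ω'|) :=
          abs_mul_dist_le_of_isPinchPoint_addTents hper hq hpq (mul_inv_cancel₀ hΛ.ne').le hw.le hc
            hfar (lipschitzWith_circleLift_addTents hφ hb ht ω w c)
            (lipschitzWith_circleLift_addTents hφ hb' hs ω' w c)
            (abs_addTents_le hM hw.le hw1 hs c) hpt hps
      _ ≤ (∑ k ∈ range q, (L : ℝ) ^ k) *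
          (M' * dist (b, ω) (b', ω') + dist (b, ω) (b', ω')) := by gcongr
      _ = _ := by ring

theorem exists_lipschitz_perturbation_not_isPinchPoint (hφ : LipschitzWith K φ)
    (hper : Periodic φ 1) (hq : 0 < q) (hpq : IsCoprime p q) (B : ℝ≥0) {r : ℝ≥0} (hr : 0 < r) :
    ∃ g : ℝ → ℝ, LipschitzWith r g ∧ (∀ x, |g x| ≤ r) ∧ Periodic g 1 ∧
      ∀ b ω : ℝ, b ≠ 0 → |b| ≤ B → ¬ IsPinchPoint (φ + g) p q b ω := by
  obtain ⟨w, hw, hw1, c, hdim⟩ :=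
    exists_dimH_setOf_isPinchPoint_addTents_le_two hφ hper hq hpq B 3
  have hdim_lt := hdim.trans_lt (b := 2) (c := (finrank ℝ (Fin 3 → ℝ) : ENNReal)) (by
    rw [finrank_fin_fun]
    norm_num)
  obtain ⟨t, hgood, ht⟩ := (dense_compl_of_dimH_lt_finrank hdim_lt).exists_dist_lt 0
    (lt_min one_pos (div_pos (NNReal.coe_pos.2 hr) three_pos))
  rw [dist_zero_left, lt_min_iff] at ht
  have htr : Fintype.card (Fin 3) * ‖t‖ ≤ r := by
    rw [Fintype.card_fin]
    push_cast
    linarith [ht.2]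
  refine ⟨fun x => tentSum w c t (x : UnitAddCircle),
    (lipschitzWith_tentSum_coe w c t).weaken (mod_cast htr), fun x => ?_, fun x => ?_,
    fun b ω hb hbB hpinch => hgood ⟨ht.1.le, b, ω, hb, hbB, hpinch⟩⟩
  · exact (abs_tentSum_le hw c t x).trans ((mul_le_of_le_one_right (by positivity) hw1).trans htr)
  · simp only [AddCircle.coe_add_period]

end Perturbation

section EssInf

theorem essInf_le_essInf_add {α : Type*} [MeasurableSpace α] {μ : Measure α} {f g : α → ℝ} {C : ℝ}
    (h : ∀ᵐ x ∂μ, f x ≤ g x + C) (hf : IsBoundedUnder (· ≥ ·) (ae μ) f)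
    (hg : IsCoboundedUnder (· ≥ ·) (ae μ) g) : essInf f μ ≤ essInf g μ + C := by
  refine sub_le_iff_le_add.1 (le_essInf_of_ae_le _ ?_ hg)
  filter_upwards [h, ae_essInf_le hf] with x hfg hfx
  linarith

variable {f g : ℝ → ℝ} {K δ : ℝ≥0}

theorem isBoundedUnder_abs_deriv (hf : LipschitzWith K f) (l : Filter ℝ) :
    l.IsBoundedUnder (· ≤ ·) fun x => |deriv f x| :=
  isBoundedUnder_of ⟨K, fun _ => norm_deriv_le_of_lipschitz hf⟩

theorem abs_essInf_deriv_add_sub_le (hf : LipschitzWith K f) (hg : LipschitzWith δ g) :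
    |essInf (deriv (f + g)) volume - essInf (deriv f) volume| ≤ δ := by
  obtain ⟨hf_le, hf_ge⟩ := isBoundedUnder_le_abs.1 (isBoundedUnder_abs_deriv hf (ae volume))
  obtain ⟨hfg_le, hfg_ge⟩ :=
    isBoundedUnder_le_abs.1 (isBoundedUnder_abs_deriv (hf.add hg) (ae volume))
  have hderiv : ∀ᵐ x, |deriv (f + g) x - deriv f x| ≤ δ := by
    filter_upwards [hf.ae_differentiableAt_real, hg.ae_differentiableAt_real] with x hfx hgx
    rw [deriv_add hfx hgx, add_sub_cancel_left]
    exact norm_deriv_le_of_lipschitz hg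
  rw [abs_sub_le_iff, sub_le_iff_le_add', sub_le_iff_le_add']
  constructor
  · refine essInf_le_essInf_add ?_ hfg_ge hf_le.isCoboundedUnder_ge
    filter_upwards [hderiv] with x hx using sub_le_iff_le_add'.1 (abs_sub_le_iff.1 hx).1
  · refine essInf_le_essInf_add ?_ hf_ge hfg_le.isCoboundedUnder_ge
    filter_upwards [hderiv] with x hx using sub_le_iff_le_add'.1 (abs_sub_le_iff.1 hx).2

theorem essInf_deriv_const_mul (hf : LipschitzWith K f) {c : ℝ} (hc : 0 < c) :
    essInf (deriv fun x => c * f x) volume = c * essInf (deriv f) volume := by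
  obtain ⟨hf_le, hf_ge⟩ := isBoundedUnder_le_abs.1 (isBoundedUnder_abs_deriv hf (ae volume))
  have hcf : LipschitzWith (‖c‖₊ * K) fun x => c * f x := (lipschitzWith_smul c).comp hf
  obtain ⟨hcf_le, hcf_ge⟩ :=
    isBoundedUnder_le_abs.1 (isBoundedUnder_abs_deriv hcf (ae volume))
  have hderiv : (deriv fun x => c * f x) = fun x => c * deriv f x :=
    funext fun x => deriv_const_mul_field c
  rw [hderiv] at hcf_le hcf_ge ⊢
  exact ((OrderIso.mulLeft₀ c hc).essInf_apply (deriv f) volume hf_ge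
    hf_le.isCoboundedUnder_ge hcf_ge hcf_le.isCoboundedUnder_ge).symm

theorem exists_mul_essInf_deriv_eq_neg_one (hf : LipschitzWith K f) (hg : LipschitzWith δ g)
    (hδ : δ ≤ 1 / 2) (hinf : essInf (deriv f) volume = -1) :
    ∃ c : ℝ, 0 < c ∧ c ≤ 2 ∧ |1 - c| ≤ 2 * δ ∧
      essInf (deriv fun x => c * (f + g) x) volume = -1 := by
  have hm := abs_essInf_deriv_add_sub_le hf hg
  set m := essInf (deriv (f + g)) volume
  rw [hinf, abs_le] at hm
  have hm2 : 1 / 2 ≤ -m := by linarith [show (δ : ℝ) ≤ 1 / 2 from mod_cast hδ]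
  have hm0 : 0 < -m := one_half_pos.trans_le hm2
  have hcm : (-m)⁻¹ * -m = 1 := inv_mul_cancel₀ hm0.ne'
  have hc : 0 < (-m)⁻¹ := inv_pos.2 hm0
  have hc2 : (-m)⁻¹ ≤ 2 := by nlinarith
  refine ⟨(-m)⁻¹, hc, hc2, ?_, ?_⟩
  · rw [show 1 - (-m)⁻¹ = (-m)⁻¹ * (-m - 1) by linarith, abs_mul, abs_of_pos hc]
    exact mul_le_mul hc2 (abs_le.2 ⟨by linarith, by linarith⟩) (abs_nonneg _) zero_le_two
  · rw [essInf_deriv_const_mul (f := f + g) (hf.add hg) hc]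
    linarith

end EssInf

section LipschitzNorm

variable {h f g : ℝ → ℝ} {K δ : ℝ≥0} {M c : ℝ}

theorem lipConst_le (hh : LipschitzWith K h) : lipConst h ≤ K :=
  csInf_le ⟨0, fun _ hk => hk.1⟩ ⟨K.2, hh.dist_le_mul⟩

theorem iSup_abs_add_lipConst_sub_const_mul_le (hf : LipschitzWith K f) (hfM : ∀ x, |f x| ≤ M)
    (hg : LipschitzWith δ g) (hgδ : ∀ x, |g x| ≤ δ) (hc : 0 ≤ c) :
    (⨆ x, |f x - c * (f + g) x|) + lipConst (fun x => f x - c * (f + g) x) ≤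
      |1 - c| * (M + K) + c * (2 * δ) := by
  have hdecomp (x : ℝ) : f x - c * (f + g) x = (1 - c) * f x - c * g x := by
    simp only [Pi.add_apply]
    ring
  have hsup : (⨆ x, |(1 - c) * f x - c * g x|) ≤ |1 - c| * M + c * δ := ciSup_le fun x => by
    refine (abs_sub _ _).trans ?_
    rw [abs_mul, abs_mul, abs_of_nonneg hc]
    gcongr
    exacts [hfM x, hgδ x]
  have hlip : lipConst (fun x => (1 - c) * f x - c * g x) ≤ |1 - c| * K + c * δ := by
    have := lipConst_le (((lipschitzWith_smul (1 - c)).comp hf).sub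
      ((lipschitzWith_smul c).comp hg))
    simpa [abs_of_nonneg hc] using this
  simp only [hdecomp]
  linarith

end LipschitzNorm

theorem stmt7_general (φ : ℝ → ℝ) (hL : ∃ K, LipschitzWith K φ)
    (hper : ∀ x, φ (x + 1) = φ x)
    (hinf : essInf (deriv φ) volume = -1)
    (p : ℤ) (q : ℕ) (hq : 1 ≤ q) (hpq : Int.gcd p q = 1)
    (B : ℝ≥0) (ε : ℝ) (hε : 0 < ε) :
    ∃ ψ : ℝ → ℝ, (∃ K, LipschitzWith K ψ) ∧ (∀ x, ψ (x + 1) = ψ x) ∧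
      essInf (deriv ψ) volume = -1 ∧
      (⨆ x : ℝ, |φ x - ψ x|) + lipConst (fun x => φ x - ψ x) < ε ∧
      ∀ b ω : ℝ, b ≠ 0 → |b| ≤ B → ¬ IsPinchPoint ψ p q b ω := by
  obtain ⟨K, hK⟩ := hL
  obtain ⟨M, hM⟩ := exists_abs_le_of_periodic hper one_ne_zero hK.continuous
  obtain ⟨δ, hδ0, hδ⟩ : ∃ δ : ℝ≥0, 0 < δ ∧ δ < min (1 / 2) (ε.toNNReal / (2 * (M + K + 2))) :=
    exists_between (by positivity)
  obtain ⟨hδ2, hδε⟩ := lt_min_iff.1 hδ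
  obtain ⟨g, hg, hgδ, hgper, hpinch⟩ := exists_lipschitz_perturbation_not_isPinchPoint hK hper hq
    (Int.isCoprime_iff_gcd_eq_one.2 hpq) (2 * B) hδ0
  obtain ⟨c, hc0, hc2, hc1, hcinf⟩ := exists_mul_essInf_deriv_eq_neg_one hK hg hδ2.le hinf
  refine ⟨fun x => c * (φ + g) x, ⟨_, (lipschitzWith_smul c).comp (hK.add hg)⟩, fun x => ?_, hcinf,
    ?_, fun b ω hb hbB h =>
      hpinch (b * c) ω (mul_ne_zero hb hc0.ne') ?_ (isPinchPoint_const_mul.1 h)⟩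
  · simp only [Pi.add_apply, hper x, hgper x]
  · have hδε' : (δ : ℝ) * (2 * (M + K + 2)) < ε := by
      rw [lt_div_iff₀ (by positivity)] at hδε
      exact_mod_cast Real.lt_toNNReal_iff_coe_lt.1 hδε
    calc _ ≤ |1 - c| * (M + K) + c * (2 * δ) :=
          iSup_abs_add_lipConst_sub_const_mul_le hK hM hg hgδ hc0.le
      _ ≤ 2 * δ * (M + K) + 2 * (2 * δ) := by gcongr
      _ = δ * (2 * (M + K + 2)) := by ring
      _ < ε := hδε'
  · rw [abs_mul, abs_of_pos hc0, mul_comm]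
    push_cast
    gcongr

/-- Lipschitz density theorem: every standard-like Lipschitz forcing can be
approximated in the Lipschitz norm by a standard-like Lipschitz forcing `ψ`
whose family has no `p/q`-pinch point with coupling `b ∈ [1/n, 1]`. -/
theorem stmt7 (φ : ℝ → ℝ) (hL : ∃ K, LipschitzWith K φ)
    (hper : ∀ x, φ (x + 1) = φ x)
    (hinf : essInf (deriv φ) volume = -1)
    (p : ℤ) (q : ℕ) (hq : 1 ≤ q) (hpq : Int.gcd p q = 1)
    (n : ℕ) (hn : 2 ≤ n) (ε : ℝ) (hε : 0 < ε) :
    ∃ ψ : ℝ → ℝ, (∃ K, LipschitzWith K ψ) ∧ (∀ x, ψ (x + 1) = ψ x) ∧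
      essInf (deriv ψ) volume = -1 ∧
      (⨆ x : ℝ, |φ x - ψ x|) + lipConst (fun x => φ x - ψ x) < ε ∧
      ∀ b : ℝ, 1 / (n : ℝ) ≤ b → b ≤ 1 → ∀ ω : ℝ,
        (fun x => x + ω + b * ψ x)^[q] ≠ fun x => x + (p : ℝ) := by
  obtain ⟨ψ, hLψ, hperψ, hinfψ, hψε, hψ⟩ := stmt7_general φ hL hper hinf p q hq hpq 1 ε hε
  refine ⟨ψ, hLψ, hperψ, hinfψ, hψε, fun b hb hb1 ω => ?_⟩
  have hb0 : 0 < b := lt_of_lt_of_le (by positivity) hb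
  exact hψ b ω hb0.ne' (by simpa [abs_of_pos hb0] using hb1)
end

section
/- Let q > 1 and N > 3q be integers, let n > 1 be real, let m ∈ ℝ^N satisfy m_i > 0 for all i and ∑ m_i = 1, and let ŵ ∈ ℝ^N satisfy ŵ_1 = −1, ŵ_i ≥ −1 for all i, and ∑ ŵ_i·m_i = 0. Then for every ε > 0 there exists w ∈ ℝ^N with w_1 = −1, w_i ≥ −1 for all i, ∑ w_i·m_i = 0, and max_i |w_i − ŵ_i| < ε, such that distinct (1/n)-plausible polynomials for w have distinct associated solutions: whenever J_1 and J_2 are multisets of cardinality q with elements in {1,…,N} whose associated polynomials p_{J_1}(y) = ∏_{j∈J_1}(1 + w_j·y) and p_{J_2}(y) = ∏_{j∈J_2}(1 + w_j·y) are not identical, and b_1, b_2 ∈ [1/n, 1] satisfy p_{J_1}(b_1) = 1 and p_{J_2}(b_2) = 1, then b_1 ≠ b_2. -/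
/-!
Perturb `w` inside the polytope of admissible weights. For fixed multisets `J₁ ≠ J₂` of equal size,
a common solution `b` gives two linear equations in the numbers `log (1 + w l * b)`, whose
coefficients are the multiplicities in `J₁` and `J₂`. Some `2 × 2` minor of this system is nonzero.

* If one can be found in columns `i` and `j` away from the coordinate `z` with `w z = -1`, then
  Cramer's rule shows that the pairs `(w i, w j)` admitting a common solution trace a `C¹` curve
  parametrized by `b`. A curve has Hausdorff dimension at most one, so arbitrarily small changes of
  `w i` and `w j` avoid it; the constraint `∑ l, w l * m l = 0` is restored by moving a coordinate
  `k` that neither multiset uses.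
* Otherwise a nonzero minor involves `z`, and eliminating the other column leaves
  `log (1 - b) = 0`, which is impossible.

Hence each pair excludes only a meagre set of weights, and by Baire's theorem a generic
admissible weight avoids all of them at once.
-/

open Set Filter Topology

section Topology

variable {X Y : Type*} [TopologicalSpace X] [TopologicalSpace Y]

theorem isOpen_setOf_forall_mem_of_isCompact {U : Set (X × Y)} (hU : IsOpen U) {K : Set Y}
    (hK : IsCompact K) : IsOpen {x | ∀ y ∈ K, (x, y) ∈ U} :=
  isOpen_iff_eventually.2 fun _ hx =>
    hK.eventually_forall_of_forall_eventually fun y hy => hU.mem_nhds (hx y hy)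

theorem isGδ_setOf_forall_mem_of_isSigmaCompact {U : Set (X × Y)} (hU : IsOpen U) {T : Set Y}
    (hT : IsSigmaCompact T) : IsGδ {x | ∀ y ∈ T, (x, y) ∈ U} := by
  obtain ⟨K, hK, rfl⟩ := hT
  have h_inter : {x | ∀ y ∈ ⋃ n, K n, (x, y) ∈ U} = ⋂ n, {x | ∀ y ∈ K n, (x, y) ∈ U} := by
    ext x
    simp only [mem_iUnion, mem_ofPred_eq, mem_iInter, forall_exists_index]
    exact forall_comm
  rw [h_inter]
  exact .iInter_of_isOpen fun n => isOpen_setOf_forall_mem_of_isCompact hU (hK n)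

theorem isSigmaCompact_Ioc (a b : ℝ) : IsSigmaCompact (Ioc a b) := by
  have h_loc : LocallyCompactSpace (Ioc a b) := isLocallyClosed_Ioc.locallyCompactSpace
  exact isSigmaCompact_iff_sigmaCompactSpace.2 inferInstance

end Topology

section Curves

variable {F : Type*} [NormedAddCommGroup F] [NormedSpace ℝ F] [FiniteDimensional ℝ F]

theorem dense_compl_image_Ioc_of_contDiffOn_Ioo (hF : 1 < Module.finrank ℝ F) {f : ℝ → F}
    {a b : ℝ} (hf : ContDiffOn ℝ 1 f (Ioo a b)) : Dense (f '' Ioc a b)ᶜ := by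
  have h_nontrivial : Nontrivial F := Module.nontrivial_of_finrank_pos (zero_lt_one.trans hF)
  have h_dim : dimH (Ioo a b) < Module.finrank ℝ F := calc
    dimH (Ioo a b) ≤ dimH (univ : Set ℝ) := dimH_mono (subset_univ _)
    _ = 1 := Real.dimH_univ
    _ < Module.finrank ℝ F := mod_cast hF
  have h_Ioo : Dense (f '' Ioo a b)ᶜ :=
    hf.dense_compl_image_of_dimH_lt_finrank (convex_Ioo a b) subset_rfl h_dim
  have h_Ioc : f '' Ioc a b ⊆ insert (f b) (f '' Ioo a b) := by
    rw [← image_insert_eq]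
    refine image_mono fun x hx => ?_
    rcases hx.2.eq_or_lt with rfl | hxb
    · exact mem_insert _ _
    · exact mem_insert_of_mem _ ⟨hx.1, hxb⟩
  refine (h_Ioo.sdiff_singleton (f b)).mono fun p hp hp_mem => ?_
  rcases h_Ioc hp_mem with hpb | hp'
  · exact hp.2 hpb
  · exact hp.1 hp'

theorem dense_setOf_not_log_system {α β γ δ : ℝ} (hdet : α * δ ≠ β * γ) {R₁ R₂ : ℝ → ℝ}
    (hR₁ : ContDiffOn ℝ 1 R₁ (Ioo 0 1)) (hR₂ : ContDiffOn ℝ 1 R₂ (Ioo 0 1)) :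
    Dense {p : ℝ × ℝ | ∀ b ∈ Ioc (0 : ℝ) 1, 0 < 1 + p.1 * b → 0 < 1 + p.2 * b →
      ¬ (α * Real.log (1 + p.1 * b) + β * Real.log (1 + p.2 * b) + R₁ b = 0 ∧
        γ * Real.log (1 + p.1 * b) + δ * Real.log (1 + p.2 * b) + R₂ b = 0)} := by
  let u : ℝ → ℝ := fun b => (β * R₂ b - δ * R₁ b) / (α * δ - β * γ)
  let v : ℝ → ℝ := fun b => (γ * R₁ b - α * R₂ b) / (α * δ - β * γ)
  let f : ℝ → ℝ × ℝ := fun b => ((Real.exp (u b) - 1) / b, (Real.exp (v b) - 1) / b)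
  have hf : ContDiffOn ℝ 1 f (Ioo 0 1) := by
    have hu : ContDiffOn ℝ 1 u (Ioo 0 1) :=
      ((contDiffOn_const.mul hR₂).sub (contDiffOn_const.mul hR₁)).div_const _
    have hv : ContDiffOn ℝ 1 v (Ioo 0 1) :=
      ((contDiffOn_const.mul hR₁).sub (contDiffOn_const.mul hR₂)).div_const _
    have h_ne : ∀ b ∈ Ioo (0 : ℝ) 1, b ≠ 0 := fun b hb => hb.1.ne'
    exact ((hu.exp.sub contDiffOn_const).div contDiffOn_id h_ne).prodMk
      ((hv.exp.sub contDiffOn_const).div contDiffOn_id h_ne)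
  refine (dense_compl_image_Ioc_of_contDiffOn_Ioo (by simp) hf).mono ?_
  rintro ⟨s, t⟩ h_curve b hb hs ht ⟨eq₁, eq₂⟩
  have hdet' : α * δ - β * γ ≠ 0 := sub_ne_zero.2 hdet
  have hu : u b = Real.log (1 + s * b) := by
    rw [div_eq_iff hdet']; linear_combination β * eq₂ - δ * eq₁
  have hv : v b = Real.log (1 + t * b) := by
    rw [div_eq_iff hdet']; linear_combination γ * eq₁ - α * eq₂
  refine h_curve ⟨b, hb, ?_⟩
  simp only [f, hu, hv, Real.exp_log hs, Real.exp_log ht, add_sub_cancel_left,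
    mul_div_cancel_right₀ _ hb.1.ne']

end Curves

section Multisets

variable {ι : Type*}

theorem exists_count_mul_count_ne [DecidableEq ι] {J₁ J₂ : Multiset ι}
    (h_card : J₁.card = J₂.card) (h_ne : J₁ ≠ J₂) :
    ∃ i j, J₁.count i * J₂.count j ≠ J₁.count j * J₂.count i := by
  by_contra! h_minors
  let S := (J₁ + J₂).toFinset
  have h_sum₁ : ∑ j ∈ S, J₁.count j = J₁.card :=
    Multiset.sum_count_eq_card fun a ha => by simp [S, ha]
  have h_sum₂ : ∑ j ∈ S, J₂.count j = J₂.card :=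
    Multiset.sum_count_eq_card fun a ha => by simp [S, ha]
  have h_prop (i : ι) : J₂.card * J₁.count i = J₂.card * J₂.count i := calc
    J₂.card * J₁.count i = ∑ j ∈ S, J₁.count i * J₂.count j := by
      rw [← h_sum₂, Finset.sum_mul]; simp only [mul_comm]
    _ = ∑ j ∈ S, J₁.count j * J₂.count i := Finset.sum_congr rfl fun j _ => h_minors i j
    _ = J₂.card * J₂.count i := by rw [← Finset.sum_mul, h_sum₁, h_card]
  rcases J₂.card.eq_zero_or_pos with h_zero | h_pos
  · exact h_ne (by rw [Multiset.card_eq_zero.1 (h_card.trans h_zero),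
      Multiset.card_eq_zero.1 h_zero])
  · exact h_ne (Multiset.ext.2 fun i => Nat.eq_of_mul_eq_mul_left h_pos (h_prop i))

theorem exists_ne_notMem_notMem_of_card [Fintype ι] (z : ι) {J₁ J₂ : Multiset ι}
    (h : J₁.card + J₂.card + 1 < Fintype.card ι) : ∃ k ≠ z, k ∉ J₁ ∧ k ∉ J₂ := by
  classical
  have h_card : (z ::ₘ (J₁ + J₂)).toFinset.card < Fintype.card ι :=
    (Multiset.toFinset_card_le _).trans_lt (by simpa using h)
  obtain ⟨k, hk⟩ : ∃ k, k ∉ (z ::ₘ (J₁ + J₂)).toFinset := by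
    by_contra! h_all
    exact h_card.ne ((Finset.card_eq_iff_eq_univ _).2 (Finset.eq_univ_of_forall h_all))
  exact ⟨k, by simpa [not_or] using hk⟩

theorem log_prod_map_eq_sum_count [DecidableEq ι] {J : Multiset ι} {S : Finset ι}
    (hS : ∀ l ∈ J, l ∈ S) {f : ι → ℝ} (h : (J.map f).prod ≠ 0) :
    Real.log (J.map f).prod = ∑ l ∈ S, J.count l * Real.log (f l) := by
  rw [Real.log_multiset_prod fun x hx hx0 => h (Multiset.prod_eq_zero (hx0 ▸ hx)),
    Multiset.map_map, Finset.sum_multiset_map_count]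
  simp only [nsmul_eq_mul, Function.comp_apply]
  refine Finset.sum_subset (fun l hl => hS l (Multiset.mem_toFinset.1 hl)) fun l _ hl => ?_
  rw [Multiset.count_eq_zero.2 (by simpa using hl), Nat.cast_zero, zero_mul]

end Multisets

/-- The polynomial `p_J(y) = ∏_{j ∈ J} (1 + w_j y)` associated with `J` for the weights `w`, as a
function on `ℝ`. -/
def associatedPoly {ι : Type*} (w : ι → ℝ) (J : Multiset ι) (y : ℝ) : ℝ :=
  (J.map fun j => 1 + w j * y).prod

/-- The weights for which the polynomials associated with `J₁` and `J₂` do not both take the value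
`1` at any point of `(0, 1]`. The interval contains `[1/n, 1]` for every `n > 1`, so a single
choice of weights serves all `n`. -/
def separatingWeights {ι : Type*} (J₁ J₂ : Multiset ι) : Set (ι → ℝ) :=
  {w | ∀ b ∈ Ioc (0 : ℝ) 1, ¬ (associatedPoly w J₁ b = 1 ∧ associatedPoly w J₂ b = 1)}

theorem isGδ_separatingWeights {ι : Type*} (J₁ J₂ : Multiset ι) :
    IsGδ (separatingWeights J₁ J₂) := by
  have h_cont (J : Multiset ι) :
      Continuous fun q : (ι → ℝ) × ℝ => associatedPoly q.1 J q.2 :=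
    continuous_multiset_prod _ fun j _ => by fun_prop
  have h_open : IsOpen
      {q : (ι → ℝ) × ℝ | ¬ (associatedPoly q.1 J₁ q.2 = 1 ∧ associatedPoly q.1 J₂ q.2 = 1)} :=
    ((isClosed_eq (h_cont J₁) continuous_const).inter
      (isClosed_eq (h_cont J₂) continuous_const)).isOpen_compl
  exact isGδ_setOf_forall_mem_of_isSigmaCompact h_open (isSigmaCompact_Ioc 0 1)

section Admissible

variable {ι : Type*} [Fintype ι] {z : ι} {m w : ι → ℝ}

/-- The polytope of weights that are balanced with respect to the masses `m`, bounded below by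
`-1`, and equal to `-1` at `z`. -/
def admissibleWeights (z : ι) (m : ι → ℝ) : Set (ι → ℝ) :=
  {w | w z = -1 ∧ (∀ i, -1 ≤ w i) ∧ ∑ i, w i * m i = 0}

/-- The admissible weights for which `z` is the only coordinate attaining the lower bound `-1`, so
that all the others can be moved freely. -/
def strictlyAdmissibleWeights (z : ι) (m : ι → ℝ) : Set (ι → ℝ) :=
  {w | w z = -1 ∧ (∀ i ≠ z, -1 < w i) ∧ ∑ i, w i * m i = 0}

theorem isClosed_admissibleWeights : IsClosed (admissibleWeights z m) := by
  simp only [admissibleWeights, ofPred_and, ofPred_forall]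
  exact (isClosed_eq (by fun_prop) (by fun_prop)).inter <|
    (isClosed_iInter fun i => isClosed_le (by fun_prop) (by fun_prop)).inter <|
      isClosed_eq (by fun_prop) (by fun_prop)

theorem strictlyAdmissibleWeights_subset :
    strictlyAdmissibleWeights z m ⊆ admissibleWeights z m := by
  rintro w ⟨hz, h_lt, h_sum⟩
  refine ⟨hz, fun i => ?_, h_sum⟩
  rcases eq_or_ne i z with rfl | hi
  · exact hz.ge
  · exact (h_lt i hi).le

theorem nonempty_strictlyAdmissibleWeights (hm : ∀ i, 0 < m i) (hw : w ∈ admissibleWeights z m) :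
    (strictlyAdmissibleWeights z m).Nonempty := by
  classical
  have h_rest (v : ι → ℝ) : ∑ i, v i * m i = v z * m z + ∑ i ∈ Finset.univ.erase z, v i * m i :=
    (Finset.add_sum_erase _ _ (Finset.mem_univ z)).symm
  have h_ne : (Finset.univ.erase z).Nonempty := by
    refine Finset.nonempty_of_sum_ne_zero (f := fun i => w i * m i) ?_
    have h_balance := h_rest w
    rw [hw.2.2, hw.1] at h_balance
    linarith [hm z]
  set M := ∑ i ∈ Finset.univ.erase z, m i with hM
  have hM_pos : 0 < M := Finset.sum_pos (fun i _ => hm i) h_ne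
  refine ⟨Function.update (fun _ => m z / M) z (-1), by simp, fun i hi => ?_, ?_⟩
  · rw [Function.update_of_ne hi]
    linarith [div_pos (hm z) hM_pos]
  · have h_sum : ∑ i ∈ Finset.univ.erase z,
        Function.update (fun _ => m z / M) z (-1) i * m i = m z / M * M := by
      rw [hM, Finset.mul_sum]
      refine Finset.sum_congr rfl fun i hi => ?_
      rw [Function.update_of_ne (Finset.ne_of_mem_erase hi)]
    rw [h_rest, h_sum, Function.update_self, div_mul_cancel₀ _ hM_pos.ne']
    ring

theorem openSegment_subset_strictlyAdmissibleWeights {v : ι → ℝ}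
    (hw : w ∈ admissibleWeights z m) (hv : v ∈ strictlyAdmissibleWeights z m) :
    openSegment ℝ w v ⊆ strictlyAdmissibleWeights z m := by
  rintro _ ⟨a, b, ha, hb, hab, rfl⟩
  refine ⟨?_, fun i hi => ?_, ?_⟩
  · simp only [Pi.add_apply, Pi.smul_apply, smul_eq_mul, hw.1, hv.1]
    linarith
  · simp only [Pi.add_apply, Pi.smul_apply, smul_eq_mul]
    nlinarith [hw.2.1 i, hv.2.1 i hi]
  · simp only [Pi.add_apply, Pi.smul_apply, smul_eq_mul, add_mul, mul_assoc,
      Finset.sum_add_distrib, ← Finset.mul_sum, hw.2.2, hv.2.2, mul_zero, add_zero]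

theorem admissibleWeights_subset_closure (hm : ∀ i, 0 < m i) :
    admissibleWeights z m ⊆ closure (strictlyAdmissibleWeights z m) := by
  intro w hw
  obtain ⟨v, hv⟩ := nonempty_strictlyAdmissibleWeights hm hw
  exact closure_mono (openSegment_subset_strictlyAdmissibleWeights hw hv)
    (segment_subset_closure_openSegment (left_mem_segment ℝ w v))

end Admissible

section Rebalance

variable {ι : Type*} [DecidableEq ι] {m w : ι → ℝ} {i j k l : ι}

/-- The direction that raises the weight at `i` at unit speed and compensates at `k`, so that the
total moment with respect to `m` is unchanged when `m k ≠ 0`. -/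
noncomputable def balancedDirection (m : ι → ℝ) (k i : ι) : ι → ℝ :=
  Pi.single i 1 - Pi.single k (m i / m k)

/-- The weights obtained from `w` by prescribing the values `p` at `i` and `j` and compensating
at `k`. -/
noncomputable def rebalance (m w : ι → ℝ) (k i j : ι) (p : ℝ × ℝ) : ι → ℝ :=
  w + (p.1 - w i) • balancedDirection m k i + (p.2 - w j) • balancedDirection m k j

theorem sum_balancedDirection_mul [Fintype ι] (hk : m k ≠ 0) :
    ∑ l, balancedDirection m k i l * m l = 0 := by
  simp [balancedDirection, sub_mul, Finset.sum_sub_distrib, Pi.single_apply, hk]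

theorem sum_rebalance_mul [Fintype ι] (hk : m k ≠ 0) (p : ℝ × ℝ) :
    ∑ l, rebalance m w k i j p l * m l = ∑ l, w l * m l := by
  simp only [rebalance, Pi.add_apply, Pi.smul_apply, smul_eq_mul, add_mul, mul_assoc,
    Finset.sum_add_distrib, ← Finset.mul_sum, sum_balancedDirection_mul hk, mul_zero, add_zero]

theorem rebalance_apply_left (hij : i ≠ j) (hik : i ≠ k) (p : ℝ × ℝ) :
    rebalance m w k i j p i = p.1 := by
  simp [rebalance, balancedDirection, hij, hik]

theorem rebalance_apply_right (hij : i ≠ j) (hjk : j ≠ k) (p : ℝ × ℝ) :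
    rebalance m w k i j p j = p.2 := by
  simp [rebalance, balancedDirection, hij.symm, hjk]

theorem rebalance_apply_of_ne (hi : l ≠ i) (hj : l ≠ j) (hk : l ≠ k) (p : ℝ × ℝ) :
    rebalance m w k i j p l = w l := by
  simp [rebalance, balancedDirection, hi, hj, hk]

theorem tendsto_rebalance : Tendsto (rebalance m w k i j) (𝓝 (w i, w j)) (𝓝 w) := by
  have h_cont : Continuous (rebalance m w k i j) := by unfold rebalance; fun_prop
  simpa [rebalance] using h_cont.tendsto (w i, w j)

theorem eventually_rebalance_mem [Fintype ι] {z : ι} (hk : m k ≠ 0) (hiz : i ≠ z) (hjz : j ≠ z)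
    (hkz : k ≠ z) (hw : w ∈ strictlyAdmissibleWeights z m) :
    ∀ᶠ p in 𝓝 (w i, w j), rebalance m w k i j p ∈ strictlyAdmissibleWeights z m := by
  have h_lt : ∀ᶠ p in 𝓝 (w i, w j), ∀ l ≠ z, -1 < rebalance m w k i j p l :=
    eventually_all.2 fun l => eventually_imp_distrib_left.2 fun hl =>
      (tendsto_pi_nhds.1 tendsto_rebalance l).eventually (lt_mem_nhds (hw.2.1 l hl))
  filter_upwards [h_lt] with p hp
  exact ⟨(rebalance_apply_of_ne hiz.symm hjz.symm hkz.symm p).trans hw.1, hp,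
    (sum_rebalance_mul hk p).trans hw.2.2⟩

end Rebalance

section Separation

theorem one_add_mul_pos {x b : ℝ} (hx : -1 < x) (hb : b ∈ Ioc (0 : ℝ) 1) : 0 < 1 + x * b := by
  nlinarith [hb.1, hb.2]

variable {ι : Type*} {z : ι} {m w : ι → ℝ} {J J₁ J₂ : Multiset ι}

theorem sum_count_mul_log_eq_zero [DecidableEq ι] {S : Finset ι} (hS : ∀ l ∈ J, l ∈ S) {b : ℝ}
    (h : associatedPoly w J b = 1) : ∑ l ∈ S, J.count l * Real.log (1 + w l * b) = 0 := by
  rw [← log_prod_map_eq_sum_count hS (ne_of_eq_of_ne h one_ne_zero)]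
  exact (congrArg Real.log h).trans Real.log_one

theorem mem_separatingWeights_of_minors_eq [DecidableEq ι] {j : ι} (hwz : w z = -1)
    (h_minor : J₁.count z * J₂.count j ≠ J₁.count j * J₂.count z)
    (h_minors : ∀ l ≠ z, J₁.count l * J₂.count j = J₁.count j * J₂.count l) :
    w ∈ separatingWeights J₁ J₂ := by
  rintro b hb ⟨h₁, h₂⟩
  let S : Finset ι := insert z (J₁ + J₂).toFinset
  have hS₁ (l : ι) (hl : l ∈ J₁) : l ∈ S := by simp [S, hl]
  have hS₂ (l : ι) (hl : l ∈ J₂) : l ∈ S := by simp [S, hl]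
  let D (l : ι) : ℝ := J₁.count l * J₂.count j - J₁.count j * J₂.count l
  have hD_z : D z ≠ 0 := sub_ne_zero.2 (mod_cast h_minor)
  have hD_ne (l : ι) (hl : l ≠ z) : D l = 0 := sub_eq_zero.2 (mod_cast h_minors l hl)
  have h_elim : ∑ l ∈ S, D l * Real.log (1 + w l * b) = 0 := calc
    _ = J₂.count j * ∑ l ∈ S, J₁.count l * Real.log (1 + w l * b) -
        J₁.count j * ∑ l ∈ S, J₂.count l * Real.log (1 + w l * b) := by
      rw [Finset.mul_sum, Finset.mul_sum, ← Finset.sum_sub_distrib]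
      exact Finset.sum_congr rfl fun l _ => by ring
    _ = 0 := by
      rw [sum_count_mul_log_eq_zero hS₁ h₁, sum_count_mul_log_eq_zero hS₂ h₂, mul_zero, mul_zero,
        sub_zero]
  rw [Finset.sum_eq_single_of_mem z (Finset.mem_insert_self _ _)
    fun l _ hl => by rw [hD_ne l hl, zero_mul], hwz] at h_elim
  have h_log : Real.log (1 + -1 * b) = 0 := (mul_eq_zero.1 h_elim).resolve_left hD_z
  rcases hb.2.lt_or_eq with hb_lt | rfl
  · exact (Real.log_neg (by linarith) (by linarith [hb.1])).ne h_log
  · -- The logarithm gives nothing here, since `Real.log 0 = 0`; but a factor at `z` would vanish.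
    have h_notMem {J : Multiset ι} (h : associatedPoly w J 1 = 1) : z ∉ J := fun hz =>
      one_ne_zero <| h.symm.trans <|
        Multiset.prod_eq_zero (Multiset.mem_map.2 ⟨z, hz, by simp [hwz]⟩)
    simp [h_notMem h₁, h_notMem h₂] at h_minor

/-- The part of `log (p_J(b))` that does not come from the factors at `i` and `j`. -/
noncomputable def logTail [Fintype ι] [DecidableEq ι] (w : ι → ℝ) (J : Multiset ι) (i j : ι)
    (b : ℝ) : ℝ :=
  ∑ l ∈ {i, j}ᶜ, J.count l * Real.log (1 + w l * b)

theorem contDiffOn_logTail [Fintype ι] [DecidableEq ι] (hw : ∀ l, -1 ≤ w l) (i j : ι) :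
    ContDiffOn ℝ 1 (logTail w J i j) (Ioo 0 1) := by
  refine ContDiffOn.sum fun l _ => contDiffOn_const.mul (ContDiffOn.log (by fun_prop) ?_)
  rintro b ⟨hb_pos, hb_lt⟩
  nlinarith [hw l]

theorem log_add_log_add_logTail_eq_zero [Fintype ι] [DecidableEq ι] {w' : ι → ℝ} {i j : ι}
    (hij : i ≠ j) (h_eq : ∀ l ∈ J, l ≠ i → l ≠ j → w' l = w l) {b : ℝ}
    (h : associatedPoly w' J b = 1) :
    J.count i * Real.log (1 + w' i * b) + J.count j * Real.log (1 + w' j * b) +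
      logTail w J i j b = 0 := by
  have h_tail : logTail w J i j b = logTail w' J i j b := by
    refine Finset.sum_congr rfl fun l hl => ?_
    simp only [Finset.mem_compl, Finset.mem_insert, Finset.mem_singleton, not_or] at hl
    by_cases hlJ : l ∈ J
    · rw [h_eq l hlJ hl.1 hl.2]
    · simp [Multiset.count_eq_zero.2 hlJ]
  rw [h_tail, logTail,
    ← Finset.sum_pair (f := fun l => J.count l * Real.log (1 + w' l * b)) hij,
    Finset.sum_add_sum_compl]
  exact sum_count_mul_log_eq_zero (fun l _ => Finset.mem_univ l) h

theorem mem_closure_separatingWeights_of_minor_ne [Fintype ι] [DecidableEq ι] {i j k : ι}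
    (hk_mass : m k ≠ 0) (hiz : i ≠ z) (hjz : j ≠ z) (hkz : k ≠ z) (hk₁ : k ∉ J₁) (hk₂ : k ∉ J₂)
    (h_minor : J₁.count i * J₂.count j ≠ J₁.count j * J₂.count i)
    (hw : w ∈ strictlyAdmissibleWeights z m) :
    w ∈ closure (admissibleWeights z m ∩ separatingWeights J₁ J₂) := by
  have hij : i ≠ j := by rintro rfl; exact h_minor rfl
  have hik : i ≠ k := by rintro rfl; simp [hk₁, hk₂] at h_minor
  have hjk : j ≠ k := by rintro rfl; simp [hk₁, hk₂] at h_minor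
  have h_smooth (J : Multiset ι) : ContDiffOn ℝ 1 (logTail w J i j) (Ioo 0 1) :=
    contDiffOn_logTail (strictlyAdmissibleWeights_subset hw).2.1 i j
  have h_det : (J₁.count i : ℝ) * J₂.count j ≠ J₁.count j * J₂.count i := mod_cast h_minor
  have h_dense := dense_setOf_not_log_system h_det (h_smooth J₁) (h_smooth J₂)
  have h_freq := (mem_closure_iff_frequently.1 (h_dense (w i, w j))).and_eventually
    (eventually_rebalance_mem hk_mass hiz hjz hkz hw)
  have h_tendsto : Tendsto (rebalance m w k i j) (𝓝 (w i, w j)) (𝓝 w) := tendsto_rebalance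
  refine mem_closure_iff_frequently.2 (h_tendsto.frequently (h_freq.mono ?_))
  rintro p ⟨h_avoid, hp⟩
  refine ⟨strictlyAdmissibleWeights_subset hp, fun b hb ⟨h₁, h₂⟩ => ?_⟩
  have h_agree {J : Multiset ι} (hkJ : k ∉ J) (l : ι) (hl : l ∈ J) (hli : l ≠ i) (hlj : l ≠ j) :
      rebalance m w k i j p l = w l :=
    rebalance_apply_of_ne hli hlj (ne_of_mem_of_not_mem hl hkJ) p
  have h_eq₁ := log_add_log_add_logTail_eq_zero hij (h_agree hk₁) h₁
  have h_eq₂ := log_add_log_add_logTail_eq_zero hij (h_agree hk₂) h₂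
  have h_pos_i := one_add_mul_pos (hp.2.1 i hiz) hb
  have h_pos_j := one_add_mul_pos (hp.2.1 j hjz) hb
  rw [rebalance_apply_left hij hik] at h_eq₁ h_eq₂ h_pos_i
  rw [rebalance_apply_right hij hjk] at h_eq₁ h_eq₂ h_pos_j
  exact h_avoid b hb h_pos_i h_pos_j ⟨h_eq₁, h_eq₂⟩

theorem strictlyAdmissibleWeights_subset_closure_separatingWeights [Fintype ι] (hm : ∀ i, m i ≠ 0)
    (h_card : J₁.card = J₂.card) (h_ne : J₁ ≠ J₂) (hk : ∃ k ≠ z, k ∉ J₁ ∧ k ∉ J₂) :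
    strictlyAdmissibleWeights z m ⊆ closure (admissibleWeights z m ∩ separatingWeights J₁ J₂) := by
  classical
  intro w hw
  obtain ⟨k, hkz, hk₁, hk₂⟩ := hk
  by_cases h : ∃ i ≠ z, ∃ j ≠ z, J₁.count i * J₂.count j ≠ J₁.count j * J₂.count i
  · obtain ⟨i, hiz, j, hjz, h_minor⟩ := h
    exact mem_closure_separatingWeights_of_minor_ne (hm k) hiz hjz hkz hk₁ hk₂ h_minor hw
  · push Not at h
    obtain ⟨j, hjz, h_minor⟩ :
        ∃ j ≠ z, J₁.count z * J₂.count j ≠ J₁.count j * J₂.count z := by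
      obtain ⟨i, j, hij⟩ := exists_count_mul_count_ne h_card h_ne
      rcases eq_or_ne i z with rfl | hi
      · exact ⟨j, by rintro rfl; exact hij rfl, hij⟩
      · rcases eq_or_ne j z with rfl | hj
        · exact ⟨i, hi, hij.symm⟩
        · exact absurd (h i hi j hj) hij
    exact subset_closure ⟨strictlyAdmissibleWeights_subset hw,
      mem_separatingWeights_of_minors_eq hw.1 h_minor fun l hl => h l hl j hjz⟩

end Separation

theorem admissibleWeights_subset_closure_forall_separatingWeights {ι : Type*} [Fintype ι] {z : ι}
    {m : ι → ℝ} (hm : ∀ i, 0 < m i) :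
    admissibleWeights z m ⊆ closure (admissibleWeights z m ∩
      {w | ∀ J₁ J₂ : Multiset ι, J₁.card = J₂.card → J₁ ≠ J₂ → (∃ k ≠ z, k ∉ J₁ ∧ k ∉ J₂) →
        w ∈ separatingWeights J₁ J₂}) := by
  have h_complete : CompleteSpace (admissibleWeights z m) :=
    isClosed_admissibleWeights.completeSpace_coe
  have h_residual : ∀ᶠ w : admissibleWeights z m in residual _,
      ∀ J₁ J₂ : Multiset ι, J₁.card = J₂.card → J₁ ≠ J₂ → (∃ k ≠ z, k ∉ J₁ ∧ k ∉ J₂) →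
        (w : ι → ℝ) ∈ separatingWeights J₁ J₂ := by
    simp only [eventually_countable_forall]
    intro J₁ J₂ h_card h_ne hk
    refine residual_of_dense_Gδ ((isGδ_separatingWeights J₁ J₂).preimage continuous_subtype_val)
      (Subtype.dense_iff.2 ?_)
    refine LE.le.trans ?_ (closure_mono (Subtype.image_preimage_coe _ _).ge)
    exact (admissibleWeights_subset_closure hm).trans <| closure_minimal
      (strictlyAdmissibleWeights_subset_closure_separatingWeights (fun i => (hm i).ne')
        h_card h_ne hk) isClosed_closure
  have h_dense := Subtype.dense_iff.1 (dense_of_mem_residual h_residual)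
  refine h_dense.trans (closure_mono ?_)
  rintro _ ⟨w, hw, rfl⟩
  exact ⟨w.2, hw⟩

theorem stmt11_general {ι : Type*} [Fintype ι] (z : ι) (m : ι → ℝ) (hm : ∀ i, 0 < m i)
    (wh : ι → ℝ) (hwhz : wh z = -1) (hwh : ∀ i, -1 ≤ wh i) (hwhm : ∑ i, wh i * m i = 0)
    (ε : ℝ) (hε : 0 < ε) :
    ∃ w : ι → ℝ, w z = -1 ∧ (∀ i, -1 ≤ w i) ∧ (∑ i, w i * m i = 0) ∧ (∀ i, |w i - wh i| < ε) ∧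
      ∀ J₁ J₂ : Multiset ι, J₁.card = J₂.card → J₁ ≠ J₂ → (∃ k ≠ z, k ∉ J₁ ∧ k ∉ J₂) →
        ∀ b ∈ Ioc (0 : ℝ) 1,
          ¬ ((J₁.map fun j => 1 + w j * b).prod = 1 ∧ (J₂.map fun j => 1 + w j * b).prod = 1) := by
  obtain ⟨w, ⟨⟨hz, h_ge, h_sum⟩, h_sep⟩, h_dist⟩ := Metric.mem_closure_iff.1
    (admissibleWeights_subset_closure_forall_separatingWeights hm ⟨hwhz, hwh, hwhm⟩) ε hε
  rw [dist_comm, dist_pi_lt_iff hε] at h_dist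
  exact ⟨w, hz, h_ge, h_sum, h_dist, h_sep⟩

/-- Perturbation lemma for weights: given masses `m` and weights `ŵ` with
`ŵ_1 = -1`, `ŵ_i ≥ -1`, `∑ ŵ_i m_i = 0`, there is an arbitrarily close weight
vector `w` (with the same constraints) such that distinct `(1/n)`-plausible
polynomials for `w` have distinct associated solutions in `[1/n, 1]`. -/
theorem stmt11 (q N : ℕ) (hq : 1 < q) (hN : 3 * q < N) (n : ℝ) (hn : 1 < n)
    (m : Fin N → ℝ) (hm : ∀ i, 0 < m i) (hm1 : ∑ i, m i = 1)
    (wh : Fin N → ℝ) (hwh0 : wh ⟨0, by omega⟩ = -1) (hwh : ∀ i, -1 ≤ wh i)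
    (hwhm : ∑ i, wh i * m i = 0) (ε : ℝ) (hε : 0 < ε) :
    ∃ w : Fin N → ℝ, w ⟨0, by omega⟩ = -1 ∧ (∀ i, -1 ≤ w i) ∧
      (∑ i, w i * m i = 0) ∧ (∀ i, |w i - wh i| < ε) ∧
      ∀ J₁ J₂ : Multiset (Fin N),
        Multiset.card J₁ = q → Multiset.card J₂ = q →
        (fun y : ℝ => (J₁.map (fun j => 1 + w j * y)).prod) ≠
          (fun y : ℝ => (J₂.map (fun j => 1 + w j * y)).prod) →
        ∀ b₁ ∈ Set.Icc (1 / n) 1, ∀ b₂ ∈ Set.Icc (1 / n) 1,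
          (J₁.map (fun j => 1 + w j * b₁)).prod = 1 →
          (J₂.map (fun j => 1 + w j * b₂)).prod = 1 →
          b₁ ≠ b₂ := by
  obtain ⟨w, hz, h_ge, h_sum, h_close, h_sep⟩ := stmt11_general _ m hm wh hwh0 hwh hwhm ε hε
  refine ⟨w, hz, h_ge, h_sum, h_close, fun J₁ J₂ h₁ h₂ h_ne b hb b₂ _ e₁ e₂ h_eq => ?_⟩
  exact h_sep J₁ J₂ (h₁.trans h₂.symm) (fun hJ => h_ne (hJ ▸ rfl))
    (exists_ne_notMem_notMem_of_card _ (by rw [h₁, h₂, Fintype.card_fin]; omega)) b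
    ⟨(by positivity : 0 < 1 / n).trans_le hb.1, hb.2⟩ ⟨e₁, h_eq ▸ e₂⟩
end
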